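/- Let U be an N × N random unitary matrix distributed according to Haar measure on U(N). For all sufficiently large N, if I ⊆ [0, 2π) is any arc (interval) of length N^{-1/2}, then P[ μ_N(I) − ν(I) > Var(𝒩_I)/(256 N) ] ≥ exp(−(5/2¹⁹) · log(e³ N)). -/

import Mathlib

open MeasureTheory Real Filter

noncomputable section

/-- The Borel σ-algebra on the unitary group `U(N)`. -/
instance (N : ℕ) : MeasurableSpace (Matrix.unitaryGroup (Fin N) ℂ) := borel _

instance (N : ℕ) : BorelSpace (Matrix.unitaryGroup (Fin N) ℂ) := ⟨rfl⟩

/-- The eigenvalue angles (in `[0, 2π)`, with multiplicity) of a unitary matrix `U`: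
the arguments of the roots of the characteristic polynomial, shifted to lie in `[0, 2π)`. -/
def eigenAngles (N : ℕ) (U : Matrix.unitaryGroup (Fin N) ℂ) : Multiset ℝ :=
  ((U : Matrix (Fin N) (Fin N) ℂ).charpoly.roots).map
    (fun z => if 0 ≤ Complex.arg z then Complex.arg z else Complex.arg z + 2 * π)

open Classical in
/-- `𝒩_A`: the number of eigenvalue angles of `U` lying in the set `A`. -/
def countAngles (N : ℕ) (U : Matrix.unitaryGroup (Fin N) ℂ) (A : Set ℝ) : ℕ :=
  Multiset.card ((eigenAngles N U).filter (· ∈ A))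

/-- `𝒩_θ`: the number of eigenvalue angles of `U` in `[0, θ]`. -/
def countFun (N : ℕ) (U : Matrix.unitaryGroup (Fin N) ℂ) (θ : ℝ) : ℕ :=
  countAngles N U (Set.Icc 0 θ)

/-- The Kolmogorov distance between the empirical spectral measure of `U` and the
uniform measure on the circle: `sup_{0 ≤ θ < 2π} |𝒩_θ/N - θ/(2π)|`. -/
def dK (N : ℕ) (U : Matrix.unitaryGroup (Fin N) ℂ) : ℝ :=
  ⨆ θ : Set.Ico (0:ℝ) (2 * π), |(countFun N U θ : ℝ) / N - (θ : ℝ) / (2 * π)|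

/-- `max_{1 ≤ k ≤ N} |𝒩_{2πk/N} - k|`. -/
def maxDev (N : ℕ) (U : Matrix.unitaryGroup (Fin N) ℂ) : ℝ :=
  ⨆ k : (Finset.Icc 1 N : Finset ℕ), |(countFun N U (2 * π * (k : ℕ) / N) : ℝ) - ((k : ℕ) : ℝ)|

end


namespace HaarArc

instance compactUG (N : ℕ) : CompactSpace (Matrix.unitaryGroup (Fin N) ℂ) := by
  have hcl : IsClosed (Matrix.unitaryGroup (Fin N) ℂ : Set (Matrix (Fin N) (Fin N) ℂ)) :=
    isClosed_unitary
  have hK : IsCompact (Set.pi Set.univ (fun _ : Fin N => Set.pi Set.univ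
      (fun _ : Fin N => Metric.closedBall (0:ℂ) 1))) :=
    isCompact_univ_pi fun _ => isCompact_univ_pi fun _ => isCompact_closedBall _ _
  have : IsCompact (Matrix.unitaryGroup (Fin N) ℂ : Set (Matrix (Fin N) (Fin N) ℂ)) := by
    refine IsCompact.of_isClosed_subset (X := Fin N → Fin N → ℂ) hK hcl ?_
    intro U hU
    simp only [Set.mem_pi, Set.mem_univ, true_imp_iff]
    intro i j
    simpa using entry_norm_bound_of_unitary hU i j
  exact isCompact_iff_compactSpace.mp this

section
open scoped Matrix.Norms.Operator

variable {𝕜 : Type*} [NontriviallyNormedField 𝕜] [NormedAlgebra 𝕜 ℂ]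

lemma det_diff {N : ℕ} (M : Matrix (Fin N) (Fin N) ℂ) :
    DifferentiableAt 𝕜 (fun A : Matrix (Fin N) (Fin N) ℂ => A.det) M := by
  have hent : ∀ i j, DifferentiableAt 𝕜 (fun A : Matrix (Fin N) (Fin N) ℂ => A i j) M := by
    intro i j
    let L : Matrix (Fin N) (Fin N) ℂ →ₗ[𝕜] ℂ :=
      { toFun := fun A => A i j, map_add' := fun _ _ => rfl, map_smul' := fun _ _ => rfl }
    have hL : Continuous L := by
      change Continuous (fun A : Matrix (Fin N) (Fin N) ℂ => A i j)
      fun_prop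
    exact (⟨L, hL⟩ : Matrix (Fin N) (Fin N) ℂ →L[𝕜] ℂ).differentiableAt
  simp only [Matrix.det_apply]
  apply DifferentiableAt.fun_sum
  intro σ _
  have : DifferentiableAt 𝕜 (fun A : Matrix (Fin N) (Fin N) ℂ => ∏ i, A (σ i) i) M :=
    (HasFDerivAt.finsetProd (u := Finset.univ)
      (g := fun (i : Fin N) (A : Matrix (Fin N) (Fin N) ℂ) => A (σ i) i) (𝕜 := 𝕜) (x := M)
      (fun i _ => (hent (σ i) i).hasFDerivAt)).differentiableAt
  rcases Int.units_eq_one_or (Equiv.Perm.sign σ) with h | h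
  · rw [h]; simp only [one_smul]; exact this
  · rw [h]; simp only [Units.neg_smul, one_smul]; exact this.neg

lemma hasDerivAt_det_one {N : ℕ} {M : 𝕜 → Matrix (Fin N) (Fin N) ℂ}
    {M' : Matrix (Fin N) (Fin N) ℂ} {t : 𝕜} (h : HasDerivAt M M' t) (h1 : M t = 1) :
    HasDerivAt (fun s => (M s).det) M'.trace t := by
  have hd : HasFDerivAt (fun A : Matrix (Fin N) (Fin N) ℂ => A.det)
      (fderiv 𝕜 (fun A : Matrix (Fin N) (Fin N) ℂ => A.det) (M t)) (M t) :=
    (det_diff (M t)).hasFDerivAt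
  have h2 := hd.comp_hasDerivAt t h
  have hl : HasDerivAt (fun s : 𝕜 => (1:Matrix (Fin N) (Fin N) ℂ) + s • M') M' 0 := by
    have h0 := ((hasDerivAt_id (0:𝕜)).smul_const M').const_add (1:Matrix (Fin N) (Fin N) ℂ)
    rw [one_smul] at h0
    exact h0
  have hd' := hd
  rw [h1] at hd'
  have h3 := HasFDerivAt.comp_hasDerivAt_of_eq (0:𝕜) hd' hl (by simp)
  have h4 : HasDerivAt ((fun A : Matrix (Fin N) (Fin N) ℂ => A.det) ∘
      (fun s : 𝕜 => (1:Matrix (Fin N) (Fin N) ℂ) + s • M')) M'.trace 0 := by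
    set p := (Matrix.det (1 + (Polynomial.X : Polynomial ℂ) • M'.map Polynomial.C)).divX.divX
    have h5 : ((fun A : Matrix (Fin N) (Fin N) ℂ => A.det) ∘
      (fun s : 𝕜 => (1:Matrix (Fin N) (Fin N) ℂ) + s • M')) =
      fun s => 1 + M'.trace * (algebraMap 𝕜 ℂ s) + p.eval (algebraMap 𝕜 ℂ s) * (algebraMap 𝕜 ℂ s)^2 := by
      funext s
      simp only [Function.comp]
      rw [algebra_compatible_smul ℂ s M', Matrix.det_one_add_smul]
    rw [h5]
    have hal : HasDerivAt (fun s : 𝕜 => algebraMap 𝕜 ℂ s) 1 0 := by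
      have := (Algebra.linearMap 𝕜 ℂ).mkContinuous 1 (fun x => by simp [norm_algebraMap'])
      simpa [Algebra.algebraMap_eq_smul_one] using (hasDerivAt_id (0:𝕜)).smul_const (1:ℂ)
    have hp : HasDerivAt (fun s : 𝕜 => p.eval (algebraMap 𝕜 ℂ s)) (p.derivative.eval (algebraMap 𝕜 ℂ 0) * 1) 0 := by
      have := (p.hasDerivAt (algebraMap 𝕜 ℂ 0))
      have h6 := HasDerivAt.scomp (𝕜' := ℂ) (0:𝕜) this hal
      exact h6.congr_deriv (by simp)
    have h7 := ((hal.const_mul M'.trace).const_add 1).add (hp.mul (hal.pow 2))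
    exact h7.congr_deriv (by simp)
  have h6 := h3.unique h4
  rw [h1] at h2
  rw [← h6]
  exact h2

lemma hasDerivAt_det {N : ℕ} {M : 𝕜 → Matrix (Fin N) (Fin N) ℂ}
    {M' : Matrix (Fin N) (Fin N) ℂ} {t : 𝕜} (h : HasDerivAt M M' t) (h1 : (M t).det ≠ 0) :
    HasDerivAt (fun s => (M s).det) ((M t).det * ((M t)⁻¹ * M').trace) t := by
  have hu : IsUnit (M t).det := isUnit_iff_ne_zero.mpr h1
  have h2 : HasDerivAt (fun s => (M t)⁻¹ * M s) ((M t)⁻¹ * M') t := h.const_mul _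
  have h3 := (hasDerivAt_det_one h2 (Matrix.nonsing_inv_mul _ hu)).const_mul (M t).det
  refine h3.congr_of_eventuallyEq (Eventually.of_forall fun s => ?_)
  simp only [Matrix.det_mul, ← mul_assoc]
  rw [← Matrix.det_mul, Matrix.mul_nonsing_inv _ hu]; simp

lemma hasDerivAt_inv' {N : ℕ} {M : 𝕜 → Matrix (Fin N) (Fin N) ℂ}
    {M' : Matrix (Fin N) (Fin N) ℂ} {t : 𝕜} (h : HasDerivAt M M' t) (h1 : (M t).det ≠ 0) :
    HasDerivAt (fun s => (M s)⁻¹) (-((M t)⁻¹ * M' * (M t)⁻¹)) t := by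
  have hu : IsUnit (M t) := (Matrix.isUnit_iff_isUnit_det _).mpr (isUnit_iff_ne_zero.mpr h1)
  obtain ⟨u, hu⟩ := hu
  have := hasFDerivAt_ringInverse (𝕜 := 𝕜) u
  have h3 := HasFDerivAt.comp_hasDerivAt_of_eq t this h hu
  have e : ∀ A : Matrix (Fin N) (Fin N) ℂ, A⁻¹ = Ring.inverse A := Matrix.nonsing_inv_eq_ringInverse
  simp only [e]
  refine h3.congr_deriv ?_
  rw [← hu]
  simp [mul_assoc]

lemma hasDerivAt_trace_mul {N : ℕ} {M : 𝕜 → Matrix (Fin N) (Fin N) ℂ}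
    {M' : Matrix (Fin N) (Fin N) ℂ} {t : 𝕜} (h : HasDerivAt M M' t)
    (Y : Matrix (Fin N) (Fin N) ℂ) :
    HasDerivAt (fun s => (M s * Y).trace) (M' * Y).trace t := by
  let L : Matrix (Fin N) (Fin N) ℂ →ₗ[𝕜] ℂ :=
    { toFun := fun A => (A * Y).trace
      map_add' := fun _ _ => by simp [add_mul]
      map_smul' := fun _ _ => by simp }
  have hL : Continuous L := by
    change Continuous (fun A : Matrix (Fin N) (Fin N) ℂ => (A * Y).trace)
    fun_prop
  exact (⟨L, hL⟩ : Matrix (Fin N) (Fin N) ℂ →L[𝕜] ℂ).hasFDerivAt.comp_hasDerivAt t h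

end

end HaarArc


namespace HaarArc

lemma integrable_cont {N : ℕ} (ℙ : Measure (Matrix.unitaryGroup (Fin N) ℂ))
    [IsProbabilityMeasure ℙ] {Φ : Matrix.unitaryGroup (Fin N) ℂ → ℂ} (h : Continuous Φ) :
    Integrable Φ ℙ := by
  obtain ⟨C, hC⟩ := isCompact_univ.exists_bound_of_continuousOn (f := Φ) h.continuousOn
  exact Integrable.of_bound h.aestronglyMeasurable C (Eventually.of_forall fun x => hC x trivial)

lemma ibp {N : ℕ} (ℙ : Measure (Matrix.unitaryGroup (Fin N) ℂ))
    [IsProbabilityMeasure ℙ] [ℙ.IsHaarMeasure] {Φ Ψ : Matrix.unitaryGroup (Fin N) ℂ → ℂ}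
    (hΦ : Continuous Φ) (hΨ : Continuous Ψ) (E : ℝ → Matrix.unitaryGroup (Fin N) ℂ)
    (hE : ∀ s t, E (s + t) = E s * E t)
    (hd : ∀ U, HasDerivAt (fun t : ℝ => Φ (E t * U)) (Ψ U) 0) : ∫ U, Ψ U ∂ℙ = 0 := by
  obtain ⟨C, hC⟩ := isCompact_univ.exists_bound_of_continuousOn (f := Ψ) hΨ.continuousOn
  have hE0 : E 0 = 1 := by
    have := hE 0 0
    simp only [add_zero] at this
    exact (mul_eq_left.mp this.symm)
  have key := hasDerivAt_integral_of_dominated_loc_of_deriv_le (μ := ℙ) (𝕜 := ℝ)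
    (F := fun t U => Φ (E t * U)) (F' := fun t U => Ψ (E t * U)) (x₀ := 0) (bound := fun _ => C)
    (s := Set.univ) Filter.univ_mem
    (Eventually.of_forall fun t => (hΦ.comp (continuous_const_mul (E t))).aestronglyMeasurable)
    (integrable_cont ℙ (hΦ.comp (continuous_const_mul (E 0))))
    (hΨ.comp (continuous_const_mul (E 0))).aestronglyMeasurable
    (Eventually.of_forall fun U t _ => hC _ trivial)
    (integrable_const _)
    (Eventually.of_forall fun U t _ => by
      have h1 := hd (E t * U)
      have h2 : HasDerivAt (fun s : ℝ => s - t) 1 t := (hasDerivAt_id t).sub_const t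
      have h3 := HasDerivAt.scomp_of_eq t h1 h2 (by simp)
      refine (h3.congr_deriv (by simp)).congr_of_eventuallyEq (Eventually.of_forall fun s => ?_)
      simp only [Function.comp]
      rw [← mul_assoc, ← hE]; simp)
  have h2 := key.2
  have h3 : (fun t => ∫ U, Φ (E t * U) ∂ℙ) = fun _ => ∫ U, Φ U ∂ℙ := by
    funext t
    exact integral_mul_left_eq_self _ _
  rw [h3] at h2
  have := h2.unique (hasDerivAt_const (0:ℝ) _)
  simpa [hE0] using this

/-- resolvent -/
noncomputable def Rs {N : ℕ} (x : ℂ) (U : Matrix (Fin N) (Fin N) ℂ) : Matrix (Fin N) (Fin N) ℂ :=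
  (Matrix.scalar (Fin N) x - U)⁻¹

noncomputable def Bs {N : ℕ} (x : ℂ) (U : Matrix (Fin N) (Fin N) ℂ) : Matrix (Fin N) (Fin N) ℂ :=
  1 - x • Rs x U

noncomputable def As {N n : ℕ} (b : ℕ) (x : Fin n → ℂ) (U : Matrix (Fin N) (Fin N) ℂ) :
    Matrix (Fin N) (Fin N) ℂ :=
  ∑ i, Bs (x i) U - (b : ℂ) • 1

noncomputable def Gs {N n : ℕ} (b : ℕ) (x : Fin n → ℂ) (U : Matrix (Fin N) (Fin N) ℂ) : ℂ :=
  (U.det)⁻¹ ^ b * ∏ i, (Matrix.scalar (Fin N) (x i) - U).det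

open scoped ComplexOrder in
lemma det_ne {N : ℕ} {x : ℂ} (hx : ‖x‖ ≠ 1) (U : Matrix.unitaryGroup (Fin N) ℂ) :
    (Matrix.scalar (Fin N) x - (U : Matrix (Fin N) (Fin N) ℂ)).det ≠ 0 := by
  intro h
  obtain ⟨v, hv, h0⟩ := Matrix.exists_mulVec_eq_zero_iff.mpr h
  have h1 : (U : Matrix (Fin N) (Fin N) ℂ).mulVec v = x • v := by
    rw [Matrix.sub_mulVec, sub_eq_zero] at h0
    rw [← h0]; simp [Matrix.scalar_apply, ← Matrix.smul_one_eq_diagonal, Matrix.smul_mulVec]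
  have h2 : star (U.1.mulVec v) ⬝ᵥ (U.1.mulVec v) = star v ⬝ᵥ v := by
    rw [Matrix.star_mulVec, Matrix.dotProduct_mulVec, Matrix.vecMul_vecMul]
    have := Matrix.mem_unitaryGroup_iff'.mp U.2
    rw [Matrix.star_eq_conjTranspose] at this
    rw [this]; simp
  rw [h1] at h2
  simp only [star_smul, smul_dotProduct, dotProduct_smul, smul_eq_mul] at h2
  have h3 : star v ⬝ᵥ v ≠ 0 := by
    intro h; exact hv (dotProduct_star_self_eq_zero.mp h)
  have h4 : star x * x = 1 := by
    apply mul_right_cancel₀ h3; linear_combination h2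
  apply hx
  have h5 : Complex.normSq x = 1 := by
    have : ((Complex.normSq x : ℝ) : ℂ) = 1 := by
      rw [Complex.normSq_eq_conj_mul_self]; exact h4
    exact_mod_cast this
  rw [Complex.norm_def, h5, Real.sqrt_one]

lemma det_U_ne {N : ℕ} (U : Matrix.unitaryGroup (Fin N) ℂ) :
    (U : Matrix (Fin N) (Fin N) ℂ).det ≠ 0 := by
  have h := Matrix.mem_unitaryGroup_iff.mp U.2
  intro h0
  have := congrArg Matrix.det h
  rw [Matrix.det_mul, h0] at this
  simp at this

lemma Rs_mul {N : ℕ} {x : ℂ} (hx : ‖x‖ ≠ 1) (U : Matrix.unitaryGroup (Fin N) ℂ) :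
    (U : Matrix (Fin N) (Fin N) ℂ) * Rs x U.1 = - Bs x U.1 := by
  have h := Matrix.mul_nonsing_inv _ (isUnit_iff_ne_zero.mpr (det_ne hx U))
  rw [sub_mul] at h
  simp only [Bs, Rs, neg_sub]
  rw [← h]
  simp [Matrix.scalar_apply, ← Matrix.smul_one_eq_diagonal]

lemma cont_Rs {N : ℕ} {x : ℂ} (hx : ‖x‖ ≠ 1) :
    Continuous (fun U : Matrix.unitaryGroup (Fin N) ℂ => Rs x U.1) := by
  unfold Rs
  simp only [Matrix.inv_def, Ring.inverse_eq_inv]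
  apply Continuous.fun_smul
  · apply Continuous.inv₀ (by fun_prop) (det_ne hx)
  · apply Continuous.matrix_adjugate; fun_prop

lemma cont_Bs {N : ℕ} {x : ℂ} (hx : ‖x‖ ≠ 1) :
    Continuous (fun U : Matrix.unitaryGroup (Fin N) ℂ => Bs x U.1) := by
  unfold Bs
  exact continuous_const.sub ((cont_Rs hx).const_smul x)

lemma cont_As {N n : ℕ} (b : ℕ) {x : Fin n → ℂ} (hx : ∀ i, ‖x i‖ ≠ 1) :
    Continuous (fun U : Matrix.unitaryGroup (Fin N) ℂ => As b x U.1) := by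
  unfold As
  exact (continuous_finsetSum _ fun i _ => cont_Bs (hx i)).sub continuous_const

lemma cont_Gs {N n : ℕ} (b : ℕ) (x : Fin n → ℂ) :
    Continuous (fun U : Matrix.unitaryGroup (Fin N) ℂ => Gs b x U.1) := by
  unfold Gs
  refine Continuous.mul (Continuous.pow (Continuous.inv₀ (by fun_prop) det_U_ne) _) ?_
  fun_prop

end HaarArc


namespace HaarArc

lemma hasDerivAt_prod_log {n : ℕ} {f : Fin n → ℝ → ℂ} {g : Fin n → ℂ} {t : ℝ}
    (h : ∀ i, HasDerivAt (f i) (f i t * g i) t) :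
    HasDerivAt (fun s => ∏ i, f i s) ((∏ i, f i t) * ∑ i, g i) t := by
  have := HasDerivAt.fun_finsetProd (u := Finset.univ) (fun i _ => h i)
  refine this.congr_deriv ?_
  rw [Finset.mul_sum]
  refine Finset.sum_congr rfl fun i _ => ?_
  rw [← Finset.mul_prod_erase Finset.univ (fun j => f j t) (Finset.mem_univ i)]
  simp only [smul_eq_mul]; ring

/-- derivative integrand -/
noncomputable def Psi {N n : ℕ} (b : ℕ) (x : Fin n → ℂ) (X Y U : Matrix (Fin N) (Fin N) ℂ) : ℂ :=
  Gs b x U * ((As b x U * X).trace * (As b x U * Y).trace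
    - ∑ i, (x i) * (Rs (x i) U * X * U * Rs (x i) U * Y).trace)

lemma cont_Psi {N n : ℕ} (b : ℕ) {x : Fin n → ℂ} (hx : ∀ i, ‖x i‖ ≠ 1)
    (X Y : Matrix (Fin N) (Fin N) ℂ) :
    Continuous (fun U : Matrix.unitaryGroup (Fin N) ℂ => Psi b x X Y U.1) := by
  unfold Psi
  refine (cont_Gs b x).mul (Continuous.sub (Continuous.mul ?_ ?_) ?_)
  · exact ((cont_As b hx).matrix_mul continuous_const).matrix_trace
  · exact ((cont_As b hx).matrix_mul continuous_const).matrix_trace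
  · refine continuous_finsetSum _ fun i _ => continuous_const.mul ?_
    refine Continuous.matrix_trace ?_
    exact ((((cont_Rs (hx i)).matrix_mul continuous_const).matrix_mul
      continuous_subtype_val).matrix_mul (cont_Rs (hx i))).matrix_mul continuous_const

section
open scoped Matrix.Norms.Operator

lemma psi_skew {N n : ℕ} (ℙ : Measure (Matrix.unitaryGroup (Fin N) ℂ))
    [IsProbabilityMeasure ℙ] [ℙ.IsHaarMeasure] (b : ℕ) {x : Fin n → ℂ} (hx : ∀ i, ‖x i‖ ≠ 1)
    {X : Matrix (Fin N) (Fin N) ℂ} (hX : X ∈ skewAdjoint (Matrix (Fin N) (Fin N) ℂ))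
    (Y : Matrix (Fin N) (Fin N) ℂ) :
    ∫ U : Matrix.unitaryGroup (Fin N) ℂ, Psi b x X Y U.1 ∂ℙ = 0 := by
  have hexp : ∀ t : ℝ, NormedSpace.exp (t • X) ∈ Matrix.unitaryGroup (Fin N) ℂ := by
    intro t
    rw [Matrix.mem_unitaryGroup_iff, Matrix.star_eq_conjTranspose, ← Matrix.exp_conjTranspose]
    have h1 : (t • X).conjTranspose = -(t • X) := by
      rw [← Matrix.star_eq_conjTranspose]
      exact skewAdjoint.mem_iff.mp (skewAdjoint.smul_mem t hX)
    rw [h1, ← Matrix.exp_add_of_commute _ _ ((Commute.refl (t • X)).neg_right), add_neg_cancel,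
      NormedSpace.exp_zero]
  refine ibp ℙ (Φ := fun U => Gs b x U.1 * (As b x U.1 * Y).trace) ?_ (cont_Psi b hx X Y)
    (fun t => ⟨NormedSpace.exp (t • X), hexp t⟩) ?_ ?_
  · exact (cont_Gs b x).mul ((cont_As b hx).matrix_mul continuous_const).matrix_trace
  · intro s t
    apply Subtype.ext
    change NormedSpace.exp ((s + t) • X) = NormedSpace.exp (s • X) * NormedSpace.exp (t • X)
    rw [add_smul, Matrix.exp_add_of_commute]
    exact ((Commute.refl X).smul_left s).smul_right t
  · intro U
    change HasDerivAt (fun t : ℝ => Gs b x (NormedSpace.exp (t • X) * U.1) *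
      (As b x (NormedSpace.exp (t • X) * U.1) * Y).trace) _ 0
    set M : ℝ → Matrix (Fin N) (Fin N) ℂ := fun t => NormedSpace.exp (t • X) * U.1 with hM
    have hM0 : M 0 = U.1 := by simp [hM]
    have hMd : HasDerivAt M (X * U.1) 0 := by
      have := (hasDerivAt_exp_smul_const X (0:ℝ)).mul_const U.1
      exact this.congr_deriv (by simp)
    have hS : ∀ i, HasDerivAt (fun t => Matrix.scalar (Fin N) (x i) - M t) (-(X * U.1)) 0 :=
      fun i => hMd.const_sub _
    have hne : ∀ i, (Matrix.scalar (Fin N) (x i) - M 0).det ≠ 0 := fun i => by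
      rw [hM0]; exact det_ne (hx i) U
    have hneU : (M 0).det ≠ 0 := by rw [hM0]; exact det_U_ne U
    have hR : ∀ i, HasDerivAt (fun t => Rs (x i) (M t)) (Rs (x i) U.1 * X * U.1 * Rs (x i) U.1) 0 := by
      intro i
      refine (hasDerivAt_inv' (hS i) (hne i)).congr_deriv ?_
      simp [Rs, hM0, mul_assoc]
    have hA : HasDerivAt (fun t => As b x (M t))
        (∑ i, - (x i • (Rs (x i) U.1 * X * U.1 * Rs (x i) U.1))) 0 := by
      unfold As Bs
      refine HasDerivAt.sub_const _ ?_
      refine HasDerivAt.fun_sum fun i _ => ?_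
      exact ((hR i).const_smul (x i)).const_sub _
    have hG : HasDerivAt (fun t => Gs b x (M t)) (Gs b x U.1 * (As b x U.1 * X).trace) 0 := by
      unfold Gs
      have h1 := hasDerivAt_prod_log (t := 0) (f := fun i t => (Matrix.scalar (Fin N) (x i) - M t).det)
        (g := fun i => (Bs (x i) U.1 * X).trace) (fun i => by
          refine (hasDerivAt_det (hS i) (hne i)).congr_deriv ?_
          congr 1
          have := Rs_mul (hx i) U
          rw [← neg_eq_iff_eq_neg] at this
          rw [← this, hM0, mul_neg, ← mul_assoc, Matrix.trace_neg, Matrix.neg_mul, Matrix.trace_neg]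
          congr 1
          rw [Matrix.trace_mul_comm, ← mul_assoc]; rfl)
      have h2 : HasDerivAt (fun t => ((M t).det)⁻¹ ^ b) (((M 0).det)⁻¹ ^ b * (-(b:ℂ) * X.trace)) 0 := by
        have h3 := (hasDerivAt_det hMd hneU)
        have h4 := (h3.fun_inv hneU).fun_pow b
        refine h4.congr_deriv ?_
        have e : ((M 0)⁻¹ * (X * U.1)).trace = X.trace := by
          rw [Matrix.trace_mul_comm, hM0, mul_assoc,
            Matrix.mul_nonsing_inv _ (isUnit_iff_ne_zero.mpr (det_U_ne U)), mul_one]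
        rw [e]
        rcases b with _ | b
        · simp
        · simp only [Nat.add_sub_cancel, pow_succ]
          field_simp
      refine (h2.fun_mul h1).congr_deriv ?_
      have : (As b x U.1 * X).trace = ∑ i, (Bs (x i) U.1 * X).trace - b * X.trace := by
        unfold As
        rw [sub_mul, Matrix.trace_sub, Finset.sum_mul, Matrix.trace_sum]
        simp
      rw [this, hM0]
      ring
    refine (hG.fun_mul (hasDerivAt_trace_mul hA Y)).congr_deriv ?_
    unfold Psi
    rw [hM0]
    have : ((∑ i, - (x i • (Rs (x i) U.1 * X * U.1 * Rs (x i) U.1))) * Y).trace =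
        - ∑ i, (x i) * (Rs (x i) U.1 * X * U.1 * Rs (x i) U.1 * Y).trace := by
      rw [Finset.sum_mul, Matrix.trace_sum, ← Finset.sum_neg_distrib]
      refine Finset.sum_congr rfl fun i _ => ?_
      simp
    rw [this]; ring
end

lemma psi_all {N n : ℕ} (ℙ : Measure (Matrix.unitaryGroup (Fin N) ℂ))
    [IsProbabilityMeasure ℙ] [ℙ.IsHaarMeasure] (b : ℕ) {x : Fin n → ℂ} (hx : ∀ i, ‖x i‖ ≠ 1)
    (X Y : Matrix (Fin N) (Fin N) ℂ) :
    ∫ U : Matrix.unitaryGroup (Fin N) ℂ, Psi b x X Y U.1 ∂ℙ = 0 := by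
  set X1 := X - star X
  set X2 := Complex.I • (X + star X)
  have h1 : X1 ∈ skewAdjoint (Matrix (Fin N) (Fin N) ℂ) := by
    rw [skewAdjoint.mem_iff]; simp [X1]
  have h2 : X2 ∈ skewAdjoint (Matrix (Fin N) (Fin N) ℂ) := by
    rw [skewAdjoint.mem_iff]; simp [X2, add_comm]
  have hX : X = (1/2 : ℂ) • X1 + (-Complex.I/2 : ℂ) • X2 := by
    have : (-Complex.I/2 : ℂ) • X2 = (1/2:ℂ) • (X + star X) := by
      simp only [X2, smul_smul]; congr 1
      linear_combination (-1/2 : ℂ) * Complex.I_mul_I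
    rw [this, ← smul_add]
    have : X1 + (X + star X) = (2:ℂ) • X := by simp only [X1, two_smul]; abel
    rw [this, smul_smul]; norm_num
  have e : ∀ U : Matrix.unitaryGroup (Fin N) ℂ, Psi b x X Y U.1 =
      (1/2 : ℂ) * Psi b x X1 Y U.1 + (-Complex.I/2 : ℂ) * Psi b x X2 Y U.1 := by
    intro U
    conv_lhs => rw [hX]
    unfold Psi
    simp only [mul_add, add_mul, Matrix.trace_add, Matrix.mul_smul, Matrix.smul_mul, Matrix.trace_smul,
      smul_eq_mul, Finset.sum_add_distrib, mul_left_comm _ (1/2:ℂ), mul_left_comm _ (-Complex.I/2:ℂ), ← Finset.mul_sum]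
    ring
  simp only [e]
  rw [integral_add ((integrable_cont ℙ (cont_Psi b hx X1 Y)).const_mul _)
    ((integrable_cont ℙ (cont_Psi b hx X2 Y)).const_mul _), integral_const_mul, integral_const_mul,
    psi_skew ℙ b hx h1, psi_skew ℙ b hx h2]
  simp

lemma sum_psi {N n : ℕ} (b : ℕ) {x : Fin n → ℂ} (hx : ∀ i, ‖x i‖ ≠ 1)
    (U : Matrix.unitaryGroup (Fin N) ℂ) :
    ∑ k, ∑ l, Psi b x (Matrix.single k l 1) (Matrix.single l k 1) U.1 =
      Gs b x U.1 * ((As b x U.1 * As b x U.1).trace +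
        ∑ i, (Bs (x i) U.1).trace * (N - (Bs (x i) U.1).trace)) := by
  have h1 : ∀ (A : Matrix (Fin N) (Fin N) ℂ) k l, (A * Matrix.single k l 1).trace = A l k := by
    intro A k l
    simp [Matrix.trace_mul_single]
  have h2 : ∀ (A C : Matrix (Fin N) (Fin N) ℂ) k l,
      (A * Matrix.single k l 1 * C * Matrix.single l k 1).trace = A k k * C l l := by
    intro A C k l
    rw [h1]
    simp [Matrix.mul_apply, Matrix.single, Matrix.of_apply, Finset.sum_ite, ite_and]
  unfold Psi
  simp only [← Finset.mul_sum, Finset.sum_sub_distrib]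
  congr 1
  rw [sub_eq_add_neg]
  congr 1
  · simp only [h1]
    rw [Finset.sum_comm]
    simp [Matrix.trace, Matrix.mul_apply]
  · have h3 : ∀ i k l, (Rs (x i) U.1 * Matrix.single k l 1 * U.1 * Rs (x i) U.1 * Matrix.single l k 1).trace
        = (Rs (x i) U.1) k k * (- Bs (x i) U.1) l l := by
      intro i k l
      rw [mul_assoc _ U.1, Rs_mul (hx i) U, h2]
    simp only [h3]
    rw [← Finset.sum_neg_distrib]
    rw [Finset.sum_congr rfl (fun k _ => by rw [Finset.sum_comm]), ]
    simp only [Finset.sum_neg_distrib]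
    rw [Finset.sum_comm, ← Finset.sum_neg_distrib]
    refine Finset.sum_congr rfl fun i _ => ?_
    have h4 : (N:ℂ) - (Bs (x i) U.1).trace = x i * (Rs (x i) U.1).trace := by
      unfold Bs; simp
    rw [h4]
    simp only [Matrix.neg_apply, mul_neg, Finset.sum_neg_distrib, neg_neg, ← Finset.mul_sum,
      ← Finset.sum_mul]
    simp only [Matrix.trace, Matrix.diag]
    simp only [← mul_assoc, ← Finset.sum_mul, ← Finset.mul_sum]
    ring

theorem SD {N n : ℕ} (ℙ : Measure (Matrix.unitaryGroup (Fin N) ℂ))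
    [IsProbabilityMeasure ℙ] [ℙ.IsHaarMeasure] (b : ℕ) {x : Fin n → ℂ} (hx : ∀ i, ‖x i‖ ≠ 1) :
    ∫ U : Matrix.unitaryGroup (Fin N) ℂ, Gs b x U.1 * ((As b x U.1 * As b x U.1).trace +
        ∑ i, (Bs (x i) U.1).trace * (N - (Bs (x i) U.1).trace)) ∂ℙ = 0 := by
  simp only [← sum_psi b hx]
  rw [integral_finsetSum]
  · refine Finset.sum_eq_zero fun k _ => ?_
    rw [integral_finsetSum]
    · exact Finset.sum_eq_zero fun l _ => psi_all ℙ b hx _ _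
    · exact fun l _ => integrable_cont ℙ (cont_Psi b hx _ _)
  · exact fun k _ => integrable_finsetSum _ fun l _ => integrable_cont ℙ (cont_Psi b hx _ _)

end HaarArc

namespace HaarArc
open Polynomial

lemma sum_det_updateRow {n : ℕ} (M : Matrix (Fin n) (Fin n) ℂ) (d : Fin n → ℂ) :
    ∑ i, (M.updateRow i (fun k => d k * M i k)).det = (∑ k, d k) * M.det := by
  simp only [← Matrix.cramer_transpose_apply, Matrix.cramer_eq_adjugate_mulVec, Matrix.mulVec,
    dotProduct, ← Matrix.adjugate_transpose, Matrix.transpose_apply]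
  rw [Finset.sum_comm, Finset.sum_mul]
  refine Finset.sum_congr rfl fun k _ => ?_
  have h := congrFun (congrFun (Matrix.adjugate_mul M) k) k
  rw [Matrix.mul_apply] at h
  simp only [Matrix.smul_apply, Matrix.one_apply_eq, smul_eq_mul, mul_one] at h
  rw [← h, Finset.mul_sum]
  exact Finset.sum_congr rfl fun i _ => by ring

lemma det_rows {n D : ℕ} (P : Fin n → ℂ[X]) (w : Fin n → Fin D → ℂ) :
    (Matrix.of fun i k => ∑ l, w i l * (P k).coeff l).det =
      ∑ m : Fin n → Fin D, (∏ i, w i (m i)) *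
        (Matrix.of fun i k => (P k).coeff (m i)).det := by
  have h := (Matrix.detRowAlternating (n := Fin n) (R := ℂ)).toMultilinearMap.map_sum
    (fun i (l : Fin D) => w i l • fun k => (P k).coeff l)
  have e : (Matrix.of fun i k => ∑ l, w i l * (P k).coeff l) =
      fun i => ∑ l, w i l • fun k => (P k).coeff l := by
    ext i k; simp
  rw [e]
  refine h.trans (Finset.sum_congr rfl fun m _ => ?_)
  exact (Matrix.detRowAlternating (n := Fin n) (R := ℂ)).toMultilinearMap.map_smul_univ
    (fun i => w i (m i)) (fun i k => (P k).coeff (m i))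

lemma vand_row {n : ℕ} (x : Fin n → ℂ) (hx : Function.Injective x) (i : Fin n) :
    ((Matrix.vandermonde x).updateRow i (fun k => (k : ℂ) * x i ^ (k : ℕ))).det =
      (Matrix.vandermonde x).det * ∑ j ∈ Finset.univ.erase i, x i / (x i - x j) := by
  have hV : (Matrix.vandermonde x).det ≠ 0 := Matrix.det_vandermonde_ne_zero_iff.mpr hx
  have e1 : ∀ t, (Matrix.vandermonde (Function.update x i t)) =
      (Matrix.vandermonde x).updateRow i (fun k => t ^ (k : ℕ)) := by
    intro t
    ext r k
    by_cases h : r = i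
    · subst h; simp [Matrix.vandermonde_apply]
    · simp [Matrix.vandermonde_apply, h]
  -- derivative by linearity
  have d1 : HasDerivAt (fun t => (Matrix.vandermonde (Function.update x i t)).det)
      (((Matrix.vandermonde x).updateRow i (fun k => (k : ℂ) * x i ^ ((k : ℕ) - 1))).det) (x i) := by
    simp only [e1, ← Matrix.cramer_transpose_apply, Matrix.cramer_eq_adjugate_mulVec, Matrix.mulVec,
      dotProduct]
    refine HasDerivAt.fun_sum fun k _ => ?_
    exact (hasDerivAt_pow (k : ℕ) (x i)).const_mul _
  have hne : ∀ p r, p < r → x r - x p ≠ 0 := fun p r h =>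
    sub_ne_zero.mpr fun h' => h.ne (hx h').symm
  have d2 : logDeriv (fun t => (Matrix.vandermonde (Function.update x i t)).det) (x i) =
      ∑ p, ∑ r ∈ Finset.Ioi p,
        ((if r = i then (1:ℂ) else 0) - (if p = i then 1 else 0)) / (x r - x p) := by
    have hu : ∀ r, HasDerivAt (fun t => Function.update x i t r) (if r = i then (1:ℂ) else 0) (x i) := by
      intro r
      by_cases h : r = i
      · subst h; simp only [Function.update_self, if_true]; exact hasDerivAt_id _
      · simp only [Function.update_of_ne h, if_neg h]; exact hasDerivAt_const _ _
    have hdiff : ∀ p r, HasDerivAt (fun t => Function.update x i t r - Function.update x i t p)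
        ((if r = i then (1:ℂ) else 0) - (if p = i then 1 else 0)) (x i) :=
      fun p r => (hu r).sub (hu p)
    have hself : Function.update x i (x i) = x := Function.update_eq_self i x
    simp only [Matrix.det_vandermonde]
    rw [logDeriv_prod]
    · refine Finset.sum_congr rfl fun p _ => ?_
      rw [logDeriv_prod]
      · refine Finset.sum_congr rfl fun r _ => ?_
        rw [logDeriv_apply, (hdiff p r).deriv, hself]
      · intro r hr; rw [hself]; exact hne _ _ (Finset.mem_Ioi.mp hr)
      · exact fun r hr => (hdiff p r).differentiableAt
    · intro p _; rw [hself]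
      exact Finset.prod_ne_zero_iff.mpr fun r hr => hne _ _ (Finset.mem_Ioi.mp hr)
    · exact fun p _ => DifferentiableAt.fun_finsetProd fun r hr => (hdiff p r).differentiableAt
  rw [logDeriv_apply, d1.deriv, Function.update_eq_self, div_eq_iff hV] at d2
  have e3 : (fun k : Fin n => (k : ℂ) * x i ^ (k : ℕ)) =
      x i • (fun k : Fin n => (k : ℂ) * x i ^ ((k : ℕ) - 1)) := by
    ext k
    rcases Nat.eq_zero_or_pos (k : ℕ) with h | h
    · simp [h]
    · obtain ⟨j, hj⟩ := Nat.exists_eq_succ_of_ne_zero h.ne'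
      simp [hj, pow_succ]; ring
  rw [e3, Matrix.det_updateRow_smul, d2]
  have e4 : ∑ p, ∑ r ∈ Finset.Ioi p,
        ((if r = i then (1:ℂ) else 0) - (if p = i then 1 else 0)) / (x r - x p) =
      ∑ j ∈ Finset.univ.erase i, 1 / (x i - x j) := by
    have hs : Finset.univ.erase i = Finset.Iio i ∪ Finset.Ioi i := by
      ext j; simp [lt_or_lt_iff_ne]
    have hdj : Disjoint (Finset.Iio i) (Finset.Ioi i) := by
      rw [Finset.disjoint_left]; intro j h1 h2
      exact absurd (Finset.mem_Iio.mp h1) (Finset.mem_Ioi.mp h2).not_gt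
    rw [hs, Finset.sum_union hdj]
    simp only [sub_div, Finset.sum_sub_distrib]
    rw [sub_eq_add_neg]
    congr 1
    · rw [← Finset.sum_filter_add_sum_filter_not Finset.univ (fun p => p < i)]
      rw [add_eq_left.mpr]
      · have : Finset.univ.filter (fun p => p < i) = Finset.Iio i := by ext; simp
        rw [this]
        refine Finset.sum_congr rfl fun p hp => ?_
        rw [Finset.sum_eq_single i]
        · simp
        · intro r _ hr; simp [hr]
        · intro h; exact absurd (Finset.mem_Ioi.mpr (Finset.mem_Iio.mp hp)) h
      · refine Finset.sum_eq_zero fun p hp => Finset.sum_eq_zero fun r hr => ?_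
        have h1 := (Finset.mem_filter.mp hp).2
        have h2 := Finset.mem_Ioi.mp hr
        have : r ≠ i := fun h => h1 (h ▸ h2)
        simp [this]
    · rw [Finset.sum_eq_single i, ← Finset.sum_neg_distrib]
      · refine Finset.sum_congr rfl fun r _ => ?_
        rw [if_pos rfl, ← div_neg, neg_sub]
      · intro p _ hp; simp [hp]
      · simp
  rw [e4, Finset.sum_mul, Finset.mul_sum, Finset.mul_sum]
  exact Finset.sum_congr rfl fun j _ => by ring
end HaarArc

namespace HaarArc
open Polynomial

lemma resolvent {N : ℕ} {x y : ℂ} (hx : ‖x‖ ≠ 1) (hy : ‖y‖ ≠ 1)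
    (U : Matrix.unitaryGroup (Fin N) ℂ) :
    (x - y) * (Rs x U.1 * Rs y U.1).trace = (Rs y U.1).trace - (Rs x U.1).trace := by
  have h1 : Rs x U.1 * (Matrix.scalar (Fin N) x - U.1) = 1 :=
    Matrix.nonsing_inv_mul _ (isUnit_iff_ne_zero.mpr (det_ne hx U))
  have h2 : (Matrix.scalar (Fin N) y - U.1) * Rs y U.1 = 1 :=
    Matrix.mul_nonsing_inv _ (isUnit_iff_ne_zero.mpr (det_ne hy U))
  have h3 : Rs y U.1 - Rs x U.1 = (x - y) • (Rs x U.1 * Rs y U.1) := by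
    calc Rs y U.1 - Rs x U.1 = Rs x U.1 * (Matrix.scalar (Fin N) x - U.1) * Rs y U.1
          - Rs x U.1 * ((Matrix.scalar (Fin N) y - U.1) * Rs y U.1) := by
          rw [h1, h2, one_mul, mul_one]
      _ = Rs x U.1 * (Matrix.scalar (Fin N) x - Matrix.scalar (Fin N) y) * Rs y U.1 := by
          noncomm_ring
      _ = _ := by
          rw [← map_sub, Matrix.scalar_apply, ← Matrix.smul_one_eq_diagonal]
          simp
  rw [← Matrix.trace_sub, h3, Matrix.trace_smul, smul_eq_mul]

section
open scoped Matrix.Norms.Operator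
lemma hasDerivAt_scalar {N : ℕ} (U : Matrix (Fin N) (Fin N) ℂ) (t : ℂ) :
    HasDerivAt (fun s : ℂ => Matrix.scalar (Fin N) s - U) 1 t := by
  have h := ((hasDerivAt_id t).smul_const (1 : Matrix (Fin N) (Fin N) ℂ)).sub_const U
  have h' := h.congr_deriv (one_smul ℂ _)
  refine h'.congr_of_eventuallyEq (Eventually.of_forall fun s => ?_)
  simp [Matrix.scalar_apply, ← Matrix.smul_one_eq_diagonal]
end

lemma charpoly_deriv {N : ℕ} {x : ℂ} (hx : ‖x‖ ≠ 1) (U : Matrix.unitaryGroup (Fin N) ℂ) :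
    (derivative U.1.charpoly).eval x = U.1.charpoly.eval x * (Rs x U.1).trace := by
  have h1 := (U.1.charpoly.hasDerivAt x)
  have h2 := hasDerivAt_det (𝕜 := ℂ) (hasDerivAt_scalar U.1 x) (det_ne hx U)
  have e : (fun t => U.1.charpoly.eval t) = fun t => (Matrix.scalar (Fin N) t - U.1).det := by
    ext t; exact Matrix.eval_charpoly _ _
  have h3 := h1.unique (e ▸ h2)
  rw [h3, Matrix.eval_charpoly, mul_one]; rfl

lemma charpoly_deriv2 {N : ℕ} {x : ℂ} (hx : ‖x‖ ≠ 1) (U : Matrix.unitaryGroup (Fin N) ℂ) :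
    (derivative (derivative U.1.charpoly)).eval x = U.1.charpoly.eval x *
      ((Rs x U.1).trace ^ 2 - (Rs x U.1 * Rs x U.1).trace) := by
  have h1 := ((derivative U.1.charpoly).hasDerivAt x)
  have hR := hasDerivAt_trace_mul (𝕜 := ℂ)
    (hasDerivAt_inv' (hasDerivAt_scalar U.1 x) (det_ne hx U)) 1
  have h2 := (U.1.charpoly.hasDerivAt x).mul hR
  have hev : ∀ᶠ t in nhds x, (derivative U.1.charpoly).eval t =
      ((fun x => eval x U.1.charpoly) * fun s => ((Matrix.scalar (Fin N) s - U.1)⁻¹ * 1).trace) t := by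
    have : ∀ᶠ t : ℂ in nhds x, ‖t‖ ≠ 1 := continuous_norm.continuousAt.eventually_ne hx
    filter_upwards [this] with t ht
    simp only [Pi.mul_apply, mul_one]
    exact charpoly_deriv ht U
  have h3 := h1.unique (h2.congr_of_eventuallyEq hev)
  rw [h3, charpoly_deriv hx U]
  simp only [mul_one, Matrix.trace_neg]
  unfold Rs
  ring

lemma trace_side {N n : ℕ} (b : ℕ) {x : Fin n → ℂ} (hx : ∀ i, ‖x i‖ ≠ 1)
    (hinj : Function.Injective x) (U : Matrix.unitaryGroup (Fin N) ℂ) :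
    (As b x U.1 * As b x U.1).trace + ∑ i, (Bs (x i) U.1).trace * (N - (Bs (x i) U.1).trace) =
      ((n:ℂ) - b) ^ 2 * N + (N - 2 * ((n:ℂ) - b) + 2 * (n - 1)) * ∑ i, x i * (Rs (x i) U.1).trace
      - ∑ i, x i ^ 2 * ((Rs (x i) U.1).trace ^ 2 - (Rs (x i) U.1 * Rs (x i) U.1).trace)
      - 2 * ∑ i, x i * (Rs (x i) U.1).trace * ∑ j ∈ Finset.univ.erase i, x i / (x i - x j) := by
  have hA : As b x U.1 = ((n:ℂ) - b) • 1 - ∑ i, x i • Rs (x i) U.1 := by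
    simp only [As, Bs, Finset.sum_sub_distrib, Finset.sum_const, Finset.card_univ, Fintype.card_fin]
    rw [sub_smul, ← Nat.cast_smul_eq_nsmul ℂ]; abel
  have hB : ∀ i, (Bs (x i) U.1).trace = N - x i * (Rs (x i) U.1).trace := by
    intro i; simp [Bs, Matrix.trace_sub]
  have hT : (As b x U.1 * As b x U.1).trace = ((n:ℂ) - b) ^ 2 * N
      - 2 * ((n:ℂ) - b) * (∑ i, x i * (Rs (x i) U.1).trace)
      + ∑ i, ∑ j, x i * x j * (Rs (x i) U.1 * Rs (x j) U.1).trace := by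
    rw [hA]
    simp only [sub_mul, mul_sub, Matrix.trace_sub, Finset.sum_mul_sum, Matrix.trace_sum,
      smul_mul_assoc, mul_smul_comm, one_mul, mul_one, Matrix.trace_smul, Matrix.trace_one,
      Fintype.card_fin, smul_eq_mul]
    have e1 : ∑ i, ∑ j, x j * (x i * (Rs (x i) U.1 * Rs (x j) U.1).trace) =
        ∑ i, ∑ j, x i * x j * (Rs (x i) U.1 * Rs (x j) U.1).trace :=
      Finset.sum_congr rfl fun i _ => Finset.sum_congr rfl fun j _ => by ring
    rw [e1]
    ring
  rw [hT]
  simp only [hB]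
  set τ := fun i => (Rs (x i) U.1).trace with hτ
  set ω := fun i => (Rs (x i) U.1 * Rs (x i) U.1).trace with hω
  have hoff : ∑ i, ∑ j, x i * x j * (Rs (x i) U.1 * Rs (x j) U.1).trace =
      ∑ i, x i ^ 2 * ω i + ∑ i, ∑ j ∈ Finset.univ.erase i,
        x i * x j * ((τ j - τ i) / (x i - x j)) := by
    rw [← Finset.sum_add_distrib]
    refine Finset.sum_congr rfl fun i _ => ?_
    rw [← Finset.add_sum_erase _ _ (Finset.mem_univ i)]
    congr 1
    · simp only [hω]; ring
    · refine Finset.sum_congr rfl fun j hj => ?_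
      have hne : x i - x j ≠ 0 := sub_ne_zero.mpr fun h => (Finset.ne_of_mem_erase hj) (hinj h).symm
      rw [← resolvent (hx i) (hx j) U, mul_div_cancel_left₀ _ hne]
  have hcross : ∑ i, ∑ j ∈ Finset.univ.erase i, x i * x j * ((τ j - τ i) / (x i - x j)) =
      2 * (n - 1) * ∑ i, x i * τ i
        - 2 * ∑ i, x i * τ i * ∑ j ∈ Finset.univ.erase i, x i / (x i - x j) := by
    have hsw : ∀ f : Fin n → Fin n → ℂ, ∑ i, ∑ j ∈ Finset.univ.erase i, f i j =
        ∑ i, ∑ j ∈ Finset.univ.erase i, f j i := by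
      intro f
      refine Finset.sum_comm' ?_
      intro a c; simp [eq_comm]
    have e1 : ∑ i, ∑ j ∈ Finset.univ.erase i, x i * x j * ((τ j - τ i) / (x i - x j)) =
        ∑ i, ∑ j ∈ Finset.univ.erase i, (x i * x j * (τ j / (x i - x j))) +
        ∑ i, ∑ j ∈ Finset.univ.erase i, (- (x i * x j * (τ i / (x i - x j)))) := by
      rw [← Finset.sum_add_distrib]
      refine Finset.sum_congr rfl fun i _ => ?_
      rw [← Finset.sum_add_distrib]
      exact Finset.sum_congr rfl fun j _ => by ring
    rw [e1, hsw, ← Finset.sum_add_distrib, Finset.mul_sum, Finset.mul_sum, ← Finset.sum_sub_distrib]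
    refine Finset.sum_congr rfl fun i _ => ?_
    rw [← Finset.sum_add_distrib]
    have hc : ((n:ℂ) - 1) = ∑ j ∈ Finset.univ.erase i, (1:ℂ) := by
      rw [Finset.sum_const, Finset.card_erase_of_mem (Finset.mem_univ i), Finset.card_univ,
        Fintype.card_fin]
      have : 1 ≤ n := i.pos
      simp [Nat.cast_sub this]
    rw [hc, Finset.mul_sum, Finset.mul_sum, Finset.mul_sum, Finset.sum_mul,
      ← Finset.sum_sub_distrib]
    refine Finset.sum_congr rfl fun j hj => ?_
    have hne : x i - x j ≠ 0 := sub_ne_zero.mpr fun h => (Finset.ne_of_mem_erase hj) (hinj h).symm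
    have hne' : x j - x i ≠ 0 := by rw [← neg_sub]; exact neg_ne_zero.mpr hne
    have : x j - x i = -(x i - x j) := by ring
    rw [this]
    field_simp
    ring
  rw [hoff, hcross]
  have e2 : ∑ i, (N - x i * τ i) * (N - (N - x i * τ i)) =
      N * ∑ i, x i * τ i - ∑ i, x i ^ 2 * τ i ^ 2 := by
    rw [Finset.mul_sum, ← Finset.sum_sub_distrib]
    exact Finset.sum_congr rfl fun j _ => by ring
  have e3 : ∑ i, x i ^ 2 * (τ i ^ 2 - ω i) = ∑ i, x i ^ 2 * τ i ^ 2 - ∑ i, x i ^ 2 * ω i := by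
    rw [← Finset.sum_sub_distrib]
    exact Finset.sum_congr rfl fun j _ => by ring
  rw [e2, e3]
  ring
end HaarArc

namespace HaarArc
open Polynomial

noncomputable def cm {N n : ℕ} (U : Matrix (Fin N) (Fin N) ℂ) (m : Fin n → Fin (N + n)) : ℂ :=
  (Matrix.of fun i k : Fin n => (X ^ (k : ℕ) * U.charpoly : ℂ[X]).coeff (m i)).det

noncomputable def qm (N b : ℕ) {n : ℕ} (m : Fin n → ℕ) : ℂ :=
  ∑ i, ((N - 1 + 2 * b : ℂ) * m i - (m i : ℂ) ^ 2) + ((n:ℂ) - b) ^ 2 * N +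
    ∑ k : Fin n, ((k : ℂ) ^ 2 - (N - 1 + 2 * b : ℂ) * k)

lemma eval_fin {D : ℕ} {p : ℂ[X]} (hp : p.natDegree < D) (x : ℂ) :
    p.eval x = ∑ l : Fin D, x ^ (l : ℕ) * p.coeff l := by
  rw [eval_eq_sum_range' hp, ← Fin.sum_univ_eq_sum_range (fun l => p.coeff l * x ^ l) D]
  exact Finset.sum_congr rfl fun _ _ => mul_comm _ _

lemma coeff_theta (p : ℂ[X]) (l : ℕ) : (X * derivative p).coeff l = l * p.coeff l := by
  cases l with
  | zero => simp
  | succ l => rw [coeff_X_mul, coeff_derivative]; push_cast; ring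

lemma theta_Xq (q : ℂ[X]) (k : ℕ) : X * derivative (X ^ k * q) =
    C (k:ℂ) * (X ^ k * q) + X ^ k * (X * derivative q) := by
  rw [derivative_mul, derivative_X_pow]
  cases k with
  | zero => simp
  | succ k => simp only [Nat.add_sub_cancel, pow_succ]; ring

lemma natDegree_theta {D : ℕ} {p : ℂ[X]} (hp : p.natDegree < D) :
    (X * derivative p).natDegree < D := by
  refine lt_of_le_of_lt ?_ hp
  rw [natDegree_le_iff_coeff_eq_zero]
  intro l hl
  rw [coeff_theta, coeff_eq_zero_of_natDegree_lt hl, mul_zero]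

lemma row_sum {N n : ℕ} (U : Matrix.unitaryGroup (Fin N) ℂ) (x : Fin n → ℂ)
    (κ : ℂ) (hx : ∀ i, ‖x i‖ ≠ 1) (i : Fin n) (k : Fin n) :
    ∑ l : Fin (N + n), ((κ * (l:ℕ) - ((l:ℕ):ℂ) ^ 2) * x i ^ (l:ℕ)) *
      (X ^ (k : ℕ) * U.1.charpoly : ℂ[X]).coeff l =
    U.1.charpoly.eval (x i) * ((κ - 2 * (x i * (Rs (x i) U.1).trace)) * (k * x i ^ (k:ℕ))
      - k ^ 2 * x i ^ (k:ℕ)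
      + (κ * (x i * (Rs (x i) U.1).trace) - (x i * (Rs (x i) U.1).trace) -
        x i ^ 2 * ((Rs (x i) U.1).trace ^ 2 - (Rs (x i) U.1 * Rs (x i) U.1).trace)) *
        x i ^ (k:ℕ)) := by
  set q := U.1.charpoly with hq
  set p : ℂ[X] := X ^ (k : ℕ) * q with hp
  have hdeg : p.natDegree < N + n := by
    refine lt_of_le_of_lt natDegree_mul_le ?_
    rw [natDegree_X_pow, hq, Matrix.charpoly_natDegree_eq_dim, Fintype.card_fin]
    have := k.2; omega
  have e1 : ∑ l : Fin (N + n), ((κ * (l:ℕ) - ((l:ℕ):ℂ) ^ 2) * x i ^ (l:ℕ)) * p.coeff l =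
      κ * (X * derivative p).eval (x i) - (X * derivative (X * derivative p)).eval (x i) := by
    rw [eval_fin (natDegree_theta hdeg), eval_fin (natDegree_theta (natDegree_theta hdeg)),
      Finset.mul_sum, ← Finset.sum_sub_distrib]
    refine Finset.sum_congr rfl fun l _ => ?_
    rw [coeff_theta, coeff_theta, coeff_theta]; ring
  rw [e1, hp, theta_Xq, derivative_add, mul_add, derivative_C_mul]
  have e2 : X * derivative (X ^ (k:ℕ) * (X * derivative q)) =
    C ((k:ℕ):ℂ) * (X ^ (k:ℕ) * (X * derivative q)) + X ^ (k:ℕ) * (X * derivative (X * derivative q)) := theta_Xq _ _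
  have e3 : X * (C ((k:ℕ):ℂ) * derivative (X ^ (k:ℕ) * q)) =
    C ((k:ℕ):ℂ) * (C ((k:ℕ):ℂ) * (X ^ (k:ℕ) * q) + X ^ (k:ℕ) * (X * derivative q)) := by
    rw [← theta_Xq]; ring
  rw [e2, e3, derivative_mul, derivative_X]
  simp only [eval_add, eval_mul, eval_C, eval_pow, eval_X, eval_one]
  rw [hq, charpoly_deriv (hx i) U, charpoly_deriv2 (hx i) U]
  ring

lemma det_scale {n : ℕ} (x c : Fin n → ℂ) :
    (Matrix.of fun i k : Fin n => c i * x i ^ (k:ℕ)).det =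
      (∏ i, c i) * (Matrix.vandermonde x).det := by
  have := Matrix.det_mul_column c (Matrix.vandermonde x)
  rw [← this]; rfl

lemma det_updateRow_lin {n : ℕ} (M : Matrix (Fin n) (Fin n) ℂ) (i : Fin n) (u v w : Fin n → ℂ)
    (a b c : ℂ) : (M.updateRow i (fun k => a * u k + b * v k + c * w k)).det =
      a * (M.updateRow i u).det + b * (M.updateRow i v).det + c * (M.updateRow i w).det := by
  rw [← Matrix.det_updateRow_smul, ← Matrix.det_updateRow_smul, ← Matrix.det_updateRow_smul,
    ← Matrix.det_updateRow_add, ← Matrix.det_updateRow_add]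
  rfl

lemma poly_base {N n : ℕ} (x : Fin n → ℂ) (U : Matrix.unitaryGroup (Fin N) ℂ) :
    ∑ m : Fin n → Fin (N + n), cm U.1 m * ∏ i, x i ^ (m i : ℕ) =
      (Matrix.vandermonde x).det * ∏ i, U.1.charpoly.eval (x i) := by
  have h := det_rows (D := N + n) (fun k : Fin n => (X ^ (k : ℕ) * U.1.charpoly : ℂ[X]))
    (fun i l => x i ^ (l:ℕ))
  have e : (Matrix.of fun i k : Fin n => ∑ l : Fin (N + n), x i ^ (l:ℕ) *
      (X ^ (k : ℕ) * U.1.charpoly : ℂ[X]).coeff l) =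
      Matrix.of fun i k : Fin n => U.1.charpoly.eval (x i) * x i ^ (k:ℕ) := by
    ext i k
    simp only [Matrix.of_apply]
    rw [← eval_fin]
    · simp [mul_comm]
    · refine lt_of_le_of_lt natDegree_mul_le ?_
      rw [natDegree_X_pow, Matrix.charpoly_natDegree_eq_dim, Fintype.card_fin]
      have := k.2; omega
  rw [e, det_scale] at h
  rw [mul_comm (Matrix.vandermonde x).det, h]
  exact Finset.sum_congr rfl fun m _ => mul_comm _ _

lemma poly_row {N n : ℕ} (x : Fin n → ℂ) (U : Matrix.unitaryGroup (Fin N) ℂ) (κ : ℂ)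
    (hx : ∀ i, ‖x i‖ ≠ 1) (hinj : Function.Injective x) (i : Fin n) :
    ∑ m : Fin n → Fin (N + n), (κ * (m i : ℕ) - ((m i : ℕ):ℂ) ^ 2) *
        (cm U.1 m * ∏ i, x i ^ (m i : ℕ)) =
      (∏ i, U.1.charpoly.eval (x i)) * (
        (κ - 2 * (x i * (Rs (x i) U.1).trace)) *
          ((Matrix.vandermonde x).det * ∑ j ∈ Finset.univ.erase i, x i / (x i - x j))
        - ((Matrix.vandermonde x).updateRow i (fun k => (k : ℂ) ^ 2 * x i ^ (k:ℕ))).det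
        + (κ * (x i * (Rs (x i) U.1).trace) - (x i * (Rs (x i) U.1).trace) -
        x i ^ 2 * ((Rs (x i) U.1).trace ^ 2 - (Rs (x i) U.1 * Rs (x i) U.1).trace)) *
        (Matrix.vandermonde x).det) := by
  have h := det_rows (D := N + n) (fun k : Fin n => (X ^ (k : ℕ) * U.1.charpoly : ℂ[X]))
    (fun j l => if j = i then (κ * (l:ℕ) - ((l:ℕ):ℂ) ^ 2) * x j ^ (l:ℕ) else x j ^ (l:ℕ))
  set u := fun k : Fin n => (k:ℂ) * x i ^ (k:ℕ) with hu
  set v := fun k : Fin n => (k:ℂ) ^ 2 * x i ^ (k:ℕ) with hv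
  set w := fun k : Fin n => x i ^ (k:ℕ) with hw
  set c3 := (κ * (x i * (Rs (x i) U.1).trace) - (x i * (Rs (x i) U.1).trace) -
        x i ^ 2 * ((Rs (x i) U.1).trace ^ 2 - (Rs (x i) U.1 * Rs (x i) U.1).trace)) with hc3
  have e : (Matrix.of fun j k : Fin n => ∑ l : Fin (N + n),
      (if j = i then (κ * (l:ℕ) - ((l:ℕ):ℂ) ^ 2) * x j ^ (l:ℕ) else x j ^ (l:ℕ)) *
      (X ^ (k : ℕ) * U.1.charpoly : ℂ[X]).coeff l) =
      Matrix.of fun j k : Fin n => U.1.charpoly.eval (x j) * ((Matrix.vandermonde x).updateRow i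
        (fun k => (κ - 2 * (x i * (Rs (x i) U.1).trace)) * u k + (-1) * v k + c3 * w k)) j k := by
    ext j k
    simp only [Matrix.of_apply]
    by_cases hj : j = i
    · subst hj
      simp only [if_true, Matrix.updateRow_self]
      rw [row_sum U x κ hx]
      simp only [hu, hv, hw, hc3]; ring
    · simp only [if_neg hj, Matrix.updateRow_ne hj, Matrix.vandermonde_apply]
      rw [← eval_fin]
      · simp [mul_comm]
      · refine lt_of_le_of_lt natDegree_mul_le ?_
        rw [natDegree_X_pow, Matrix.charpoly_natDegree_eq_dim, Fintype.card_fin]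
        have := k.2; omega
  rw [e, Matrix.det_mul_column, det_updateRow_lin] at h
  have hw' : (Matrix.vandermonde x).updateRow i w = Matrix.vandermonde x :=
    Matrix.updateRow_eq_self _ _
  rw [hw', hu, vand_row x hinj] at h
  have e5 : ∀ m : Fin n → Fin (N + n), (∏ j, if j = i then (κ * ((m j):ℕ) - ((m j : ℕ):ℂ) ^ 2) *
      x j ^ (m j:ℕ) else x j ^ (m j:ℕ)) =
      (κ * ((m i):ℕ) - ((m i : ℕ):ℂ) ^ 2) * ∏ j, x j ^ (m j : ℕ) := by
    intro m
    rw [← Finset.mul_prod_erase _ _ (Finset.mem_univ i),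
      ← Finset.mul_prod_erase _ (fun j => x j ^ (m j : ℕ)) (Finset.mem_univ i), if_pos rfl, mul_assoc]
    congr 2
    exact Finset.prod_congr rfl fun j hj => if_neg (Finset.ne_of_mem_erase hj)
  simp only [e5] at h
  rw [show (∏ i, eval (x i) U.1.charpoly) * ((κ - 2 * (x i * (Rs (x i) U.1).trace)) *
          ((Matrix.vandermonde x).det * ∑ j ∈ Finset.univ.erase i, x i / (x i - x j))
        - ((Matrix.vandermonde x).updateRow i v).det + c3 * (Matrix.vandermonde x).det) =
        (∏ i, eval (x i) U.1.charpoly) * ((κ - 2 * (x i * (Rs (x i) U.1).trace)) *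
          ((Matrix.vandermonde x).det * ∑ j ∈ Finset.univ.erase i, x i / (x i - x j))
        + (-1) * ((Matrix.vandermonde x).updateRow i v).det + c3 * (Matrix.vandermonde x).det) by ring, h]
  refine Finset.sum_congr rfl fun m _ => ?_
  unfold cm
  ring

theorem pointwise {N n : ℕ} (b : ℕ) (x : Fin n → ℂ) (U : Matrix.unitaryGroup (Fin N) ℂ)
    (hx : ∀ i, ‖x i‖ ≠ 1) (hinj : Function.Injective x) :
    ∑ m : Fin n → Fin (N + n), qm N b (fun i => (m i : ℕ)) *
        ((U.1.det)⁻¹ ^ b * cm U.1 m) * ∏ i, x i ^ (m i : ℕ) =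
      (Matrix.vandermonde x).det * (Gs b x U.1 * ((As b x U.1 * As b x U.1).trace +
        ∑ i, (Bs (x i) U.1).trace * (N - (Bs (x i) U.1).trace))) := by
  rw [trace_side b hx hinj U]
  have hG : Gs b x U.1 = (U.1.det)⁻¹ ^ b * ∏ i, U.1.charpoly.eval (x i) := by
    simp only [Gs, Matrix.eval_charpoly]
  set κ : ℂ := N - 1 + 2 * b with hκ
  set c0 : ℂ := ((n:ℂ) - b) ^ 2 * N + ∑ k : Fin n, ((k : ℂ) ^ 2 - κ * k) with hc0
  have e1 : ∑ m : Fin n → Fin (N + n), qm N b (fun i => (m i : ℕ)) *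
        ((U.1.det)⁻¹ ^ b * cm U.1 m) * ∏ i, x i ^ (m i : ℕ) =
      (U.1.det)⁻¹ ^ b * (∑ i, ∑ m : Fin n → Fin (N + n), (κ * (m i : ℕ) - ((m i : ℕ):ℂ) ^ 2) *
        (cm U.1 m * ∏ i, x i ^ (m i : ℕ)) +
        c0 * ∑ m : Fin n → Fin (N + n), cm U.1 m * ∏ i, x i ^ (m i : ℕ)) := by
    rw [Finset.sum_comm, Finset.mul_sum, ← Finset.sum_add_distrib, Finset.mul_sum]
    refine Finset.sum_congr rfl fun m _ => ?_
    rw [← Finset.sum_mul]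
    simp only [qm, hc0, hκ]
    ring
  rw [e1, poly_base, Finset.sum_congr rfl fun i _ => poly_row x U κ hx hinj i, hG]
  have hT1 := sum_det_updateRow (Matrix.vandermonde x) (fun k => (k:ℂ))
  have hT2 := sum_det_updateRow (Matrix.vandermonde x) (fun k => (k:ℂ) ^ 2)
  simp only [Matrix.vandermonde_apply] at hT1 hT2
  simp only [vand_row x hinj] at hT1
  rw [← Finset.mul_sum]
  simp only [Finset.sum_add_distrib, Finset.sum_sub_distrib, sub_mul, hT2]
  rw [← Finset.mul_sum, hT1]
  simp only [← Finset.sum_mul, ← Finset.mul_sum]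
  have e6 : ∑ i, 2 * (x i * (Rs (x i) U.1).trace) * ((Matrix.vandermonde x).det *
      ∑ j ∈ Finset.univ.erase i, x i / (x i - x j)) = (Matrix.vandermonde x).det * (2 * ∑ i,
        x i * (Rs (x i) U.1).trace * ∑ j ∈ Finset.univ.erase i, x i / (x i - x j)) := by
    rw [Finset.mul_sum, Finset.mul_sum]
    exact Finset.sum_congr rfl fun j _ => by ring
  rw [e6, hc0, Finset.sum_sub_distrib, ← Finset.mul_sum, hκ]
  ring
end HaarArc

namespace HaarArc
open Polynomial

lemma cont_charpoly_coeff {N : ℕ} (l : ℕ) :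
    Continuous (fun U : Matrix.unitaryGroup (Fin N) ℂ => U.1.charpoly.coeff l) := by
  have h : ∀ U : Matrix.unitaryGroup (Fin N) ℂ, U.1.charpoly.coeff l =
      MvPolynomial.eval (fun p : Fin N × Fin N => U.1 p.1 p.2)
        ((Matrix.charpoly.univ ℂ (Fin N)).coeff l) := by
    intro U
    have := Matrix.charpoly.univ_coeff_eval₂Hom (Fin N) (RingHom.id ℂ)
      (fun p : Fin N × Fin N => U.1 p.1 p.2) l
    exact this.symm
  simp only [h]
  refine (MvPolynomial.continuous_eval _).comp ?_
  exact continuous_pi fun p => continuous_subtype_val.matrix_elem p.1 p.2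

lemma cont_cm {N n : ℕ} (m : Fin n → Fin (N + n)) :
    Continuous (fun U : Matrix.unitaryGroup (Fin N) ℂ => cm U.1 m) := by
  unfold cm
  refine Continuous.matrix_det (continuous_matrix fun i k => ?_)
  simp only [Matrix.of_apply, coeff_X_pow_mul']
  split_ifs
  · exact cont_charpoly_coeff _
  · exact continuous_const

noncomputable def Cm {N n : ℕ} (ℙ : Measure (Matrix.unitaryGroup (Fin N) ℂ)) (b : ℕ)
    (m : Fin n → Fin (N + n)) : ℂ := ∫ U, (U.1.det)⁻¹ ^ b * cm U.1 m ∂ℙ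

lemma cont_dcm {N n : ℕ} (b : ℕ) (m : Fin n → Fin (N + n)) :
    Continuous (fun U : Matrix.unitaryGroup (Fin N) ℂ => (U.1.det)⁻¹ ^ b * cm U.1 m) :=
  Continuous.mul (Continuous.pow (Continuous.inv₀ (by fun_prop) det_U_ne) _) (cont_cm m)

lemma int_poly {N n : ℕ} (ℙ : Measure (Matrix.unitaryGroup (Fin N) ℂ))
    [IsProbabilityMeasure ℙ] (b : ℕ) (g : (Fin n → Fin (N + n)) → ℂ) (x : Fin n → ℂ) :
    ∫ U, ∑ m : Fin n → Fin (N + n), g m * ((U.1.det)⁻¹ ^ b * cm U.1 m) * ∏ i, x i ^ (m i : ℕ) ∂ℙ =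
      ∑ m : Fin n → Fin (N + n), g m * Cm ℙ b m * ∏ i, x i ^ (m i : ℕ) := by
  rw [integral_finsetSum]
  · refine Finset.sum_congr rfl fun m _ => ?_
    rw [integral_mul_const, integral_const_mul]; rfl
  · intro m _
    exact integrable_cont ℙ ((continuous_const.mul (cont_dcm b m)).mul continuous_const)

lemma int_zero {N n : ℕ} (ℙ : Measure (Matrix.unitaryGroup (Fin N) ℂ))
    [IsProbabilityMeasure ℙ] [ℙ.IsHaarMeasure] (b : ℕ) (x : Fin n → ℂ)
    (hx : ∀ i, ‖x i‖ ≠ 1) (hinj : Function.Injective x) :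
    ∑ m : Fin n → Fin (N + n), qm N b (fun i => (m i : ℕ)) * Cm ℙ b m * ∏ i, x i ^ (m i : ℕ) = 0 := by
  rw [← int_poly]
  simp only [pointwise b x _ hx hinj]
  rw [integral_const_mul, SD ℙ b hx, mul_zero]

lemma int_F {N n : ℕ} (ℙ : Measure (Matrix.unitaryGroup (Fin N) ℂ))
    [IsProbabilityMeasure ℙ] (b : ℕ) (x : Fin n → ℂ) :
    ∑ m : Fin n → Fin (N + n), Cm ℙ b m * ∏ i, x i ^ (m i : ℕ) =
      (Matrix.vandermonde x).det * ∫ U, Gs b x U.1 ∂ℙ := by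
  have h := int_poly ℙ b (fun _ => 1) x
  simp only [one_mul] at h
  rw [← h, ← integral_const_mul]
  congr 1
  ext U
  have h2 := congrArg (fun z => (U.1.det)⁻¹ ^ b * z) (poly_base x U)
  simp only [Finset.mul_sum] at h2
  simp only [Gs, ← Matrix.eval_charpoly]
  rw [Finset.sum_congr rfl (fun m _ => by rw [mul_assoc]), h2]
  ring

lemma qC_zero {N n : ℕ} (ℙ : Measure (Matrix.unitaryGroup (Fin N) ℂ))
    [IsProbabilityMeasure ℙ] [ℙ.IsHaarMeasure] (b : ℕ) (m : Fin n → Fin (N + n)) :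
    qm N b (fun i => (m i : ℕ)) * Cm ℙ b m = 0 := by
  classical
  let fs : (Fin n → Fin (N + n)) → (Fin n →₀ ℕ) := fun m =>
    Finsupp.equivFunOnFinite.symm (fun i => (m i : ℕ))
  have hfs : Function.Injective fs := by
    intro m m' h
    have := Finsupp.equivFunOnFinite.symm.injective h
    ext i; exact congrFun this i
  let p : MvPolynomial (Fin n) ℂ := ∑ m : Fin n → Fin (N + n),
    MvPolynomial.monomial (fs m) (qm N b (fun i => (m i : ℕ)) * Cm ℙ b m)
  have hp : p = 0 := by
    refine MvPolynomial.funext_set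
      (fun i : Fin n => (fun t : ℝ => (t : ℂ)) '' Set.Ioo (((i:ℕ) : ℝ) + 2) ((i:ℕ) + 3)) ?_ ?_
    · intro i
      refine Set.Infinite.image ?_ (Set.Ioo_infinite (by linarith))
      exact Complex.ofReal_injective.injOn
    · intro x hx
      rw [map_zero]
      have hx' : ∀ i : Fin n, ∃ t : ℝ, ((i:ℕ) : ℝ) + 2 < t ∧ t < (i:ℕ) + 3 ∧ x i = t := by
        intro i
        obtain ⟨t, ht, e⟩ := hx i trivial
        exact ⟨t, ht.1, ht.2, e.symm⟩
      choose t ht1 ht2 hxt using hx'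
      have h0 := int_zero ℙ b x ?_ ?_
      · rw [← h0]
        simp only [p, map_sum, MvPolynomial.eval_monomial]
        refine Finset.sum_congr rfl fun m _ => ?_
        rw [Finsupp.prod_fintype _ _ (fun i => pow_zero _)]
        rfl
      · intro i
        rw [hxt, Complex.norm_real, Real.norm_eq_abs, abs_of_pos]
        · have : (0:ℝ) ≤ (i:ℕ) := by positivity
          linarith [ht1 i]
        · have : (0:ℝ) ≤ (i:ℕ) := by positivity
          linarith [ht1 i]
      · intro i j hij
        rw [hxt, hxt] at hij
        have hij : t i = t j := Complex.ofReal_injective hij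
        have h1 : ((i:ℕ):ℝ) < (j:ℕ) + 1 := by linarith [ht1 i, ht2 j]
        have h2 : ((j:ℕ):ℝ) < (i:ℕ) + 1 := by linarith [ht1 j, ht2 i]
        norm_cast at h1 h2
        ext; omega
  have := congrArg (MvPolynomial.coeff (fs m)) hp
  simp only [p, MvPolynomial.coeff_sum, MvPolynomial.coeff_monomial, MvPolynomial.coeff_zero,
    hfs.eq_iff] at this
  simpa using this

lemma Cm_perm {N n : ℕ} (ℙ : Measure (Matrix.unitaryGroup (Fin N) ℂ)) (b : ℕ)
    (m : Fin n → Fin (N + n)) (σ : Equiv.Perm (Fin n)) :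
    Cm ℙ b (m ∘ σ) = (Equiv.Perm.sign σ : ℤ) * Cm ℙ b m := by
  unfold Cm
  rw [← integral_const_mul]
  congr 1; ext U
  have : cm U.1 (m ∘ σ) = (Equiv.Perm.sign σ : ℤ) * cm U.1 m := by
    unfold cm
    rw [← Matrix.det_permute]; rfl
  rw [this]; ring

lemma Cm_inj {N n : ℕ} (ℙ : Measure (Matrix.unitaryGroup (Fin N) ℂ)) (b : ℕ)
    (m : Fin n → Fin (N + n)) (hm : ¬ Function.Injective m) : Cm ℙ b m = 0 := by
  have : ∀ U : Matrix.unitaryGroup (Fin N) ℂ, cm U.1 m = 0 := by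
    intro U
    simp only [Function.Injective, not_forall] at hm
    obtain ⟨i, j, hij, hne⟩ := hm
    refine Matrix.det_zero_of_row_eq hne ?_
    ext k; simp [hij]
  simp [Cm, this]

def sS (N b : ℕ) (k : ℕ) : ℕ := if k < b then k else k + N

lemma sS_inj (N b : ℕ) : Function.Injective (sS N b) := by
  intro i j h
  simp only [sS] at h
  split_ifs at h <;> omega

def sF (N b n : ℕ) (k : Fin n) : Fin (N + n) := ⟨sS N b k, by
  have := k.2; unfold sS; split_ifs <;> omega⟩

lemma sum_wt (N b n : ℕ) (hb : b ≤ n) : ∑ k ∈ Finset.range n,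
    (((sS N b k : ℤ) - b) * ((sS N b k : ℤ) - b - N + 1) - ((k:ℤ) - b) * ((k:ℤ) - b - N + 1)) =
      ((n:ℤ) - b) ^ 2 * N := by
  induction n, hb using Nat.le_induction with
  | base =>
    rw [Finset.sum_eq_zero]
    · simp
    · intro k hk
      simp [sS, Finset.mem_range.mp hk]
  | succ n hn ih =>
    rw [Finset.sum_range_succ, ih]
    have : ¬ n < b := by omega
    simp only [sS, this, if_false]
    push_cast
    ring

lemma qm_eq (N b n : ℕ) (hb : b ≤ n) (m : Fin n → ℕ) : qm N b m =
    ((∑ k : Fin n, ((sS N b k : ℤ) - b) * ((sS N b k : ℤ) - b - N + 1) -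
      ∑ i, ((m i : ℤ) - b) * ((m i : ℤ) - b - N + 1) : ℤ) : ℂ) := by
  have h := sum_wt N b n hb
  rw [← Fin.sum_univ_eq_sum_range (fun k => (((sS N b k : ℤ) - b) * ((sS N b k : ℤ) - b - N + 1)
    - ((k:ℤ) - b) * ((k:ℤ) - b - N + 1)))] at h
  rw [Finset.sum_sub_distrib, sub_eq_iff_eq_add] at h
  rw [h]
  unfold qm
  push_cast
  have e1 : ∑ i, ((m i : ℂ) - b) * ((m i : ℂ) - b - N + 1) =
      ∑ _i : Fin n, (b * (b + N - 1) : ℂ) - ∑ i, ((N - 1 + 2 * b : ℂ) * m i - (m i : ℂ) ^ 2) := by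
    rw [← Finset.sum_sub_distrib]
    exact Finset.sum_congr rfl fun i _ => by ring
  have e2 : ∑ k : Fin n, (((k:ℕ) : ℂ) - b) * (((k:ℕ) : ℂ) - b - N + 1) =
      ∑ k : Fin n, ((k : ℂ) ^ 2 - (N - 1 + 2 * b : ℂ) * k) + ∑ k : Fin n, (b * (b + N - 1) : ℂ) := by
    rw [← Finset.sum_add_distrib]
    exact Finset.sum_congr rfl fun i _ => by ring
  rw [e1, e2]
  ring

lemma range_eq {N b n : ℕ} (hN : 1 ≤ N) (hb : b ≤ n) (m : Fin n → Fin (N + n))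
    (hm : Function.Injective m) (hq : qm N b (fun i => (m i : ℕ)) = 0) :
    ∃ σ : Equiv.Perm (Fin n), m = sF N b n ∘ σ := by
  classical
  rw [qm_eq N b n hb] at hq
  have hq := Int.cast_eq_zero.mp hq
  let w : Fin (N + n) → ℤ := fun k => (((k:ℕ):ℤ) - b) * (((k:ℕ):ℤ) - b - N + 1)
  have hsinj : Function.Injective (sF N b n) := by
    intro i j h
    exact Fin.ext (sS_inj N b (congrArg Fin.val h))
  let S := Finset.univ.image (sF N b n)
  let T := Finset.univ.image m
  have hS : ∑ k ∈ S, w k = ∑ k : Fin n, ((sS N b k : ℤ) - b) * ((sS N b k : ℤ) - b - N + 1) :=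
    Finset.sum_image (fun _ _ _ _ h => hsinj h)
  have hT : ∑ k ∈ T, w k = ∑ i, (((m i:ℕ) : ℤ) - b) * (((m i:ℕ) : ℤ) - b - N + 1) :=
    Finset.sum_image (fun _ _ _ _ h => hm h)
  have hST : ∑ k ∈ S, w k = ∑ k ∈ T, w k := by rw [hS, hT]; linarith
  have hcS : S.card = n := by rw [Finset.card_image_of_injective _ hsinj]; simp
  have hcT : T.card = n := by rw [Finset.card_image_of_injective _ hm]; simp
  have hpos : ∀ k ∈ S, 0 < w k := by
    intro k hk
    obtain ⟨i, _, rfl⟩ := Finset.mem_image.mp hk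
    simp only [w, sF, sS]
    split_ifs with h
    · apply mul_pos_of_neg_of_neg <;> omega
    · apply mul_pos <;> push_cast <;> omega
  have hneg : ∀ k ∉ S, w k ≤ 0 := by
    intro k hk
    have h1 : ¬ (k : ℕ) < b := fun h => hk (Finset.mem_image.mpr ⟨⟨k, by omega⟩, Finset.mem_univ _, by
      ext; simp [sF, sS, h]⟩)
    have h2 : ¬ (N + b ≤ (k : ℕ)) := fun h => hk (Finset.mem_image.mpr
      ⟨⟨k - N, by have := k.2; omega⟩, Finset.mem_univ _, by
        ext; simp only [sF, sS]; rw [if_neg (by omega)]; omega⟩)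
    apply mul_nonpos_of_nonneg_of_nonpos <;> omega
  have hsub : S ⊆ T := by
    by_contra hns
    have hne : (S \ T).Nonempty := by
      rw [Finset.sdiff_nonempty]; exact hns
    have h1 := Finset.sum_sdiff_sub_sum_sdiff (s₁ := S) (s₂ := T) (f := w)
    rw [hST, sub_self] at h1
    have h2 : 0 < ∑ k ∈ S \ T, w k :=
      Finset.sum_pos (fun k hk => hpos k (Finset.mem_sdiff.mp hk).1) hne
    have h3 : ∑ k ∈ T \ S, w k ≤ 0 :=
      Finset.sum_nonpos (fun k hk => hneg k (Finset.mem_sdiff.mp hk).2)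
    linarith
  have hEq : S = T := Finset.eq_of_subset_of_card_le hsub (by rw [hcS, hcT])
  have hex : ∀ i, ∃ k, sF N b n k = m i := by
    intro i
    have : m i ∈ S := by rw [hEq]; exact Finset.mem_image_of_mem _ (Finset.mem_univ _)
    obtain ⟨k, _, hk⟩ := Finset.mem_image.mp this
    exact ⟨k, hk⟩
  choose f hf using hex
  have hfi : Function.Injective f := by
    intro i j h
    apply hm
    rw [← hf, ← hf, h]
  refine ⟨Equiv.ofBijective f (Finite.injective_iff_bijective.mp hfi), ?_⟩
  ext i; simp [hf]

theorem V_F {N n b : ℕ} (hN : 1 ≤ N) (hb : b ≤ n) (ℙ : Measure (Matrix.unitaryGroup (Fin N) ℂ))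
    [IsProbabilityMeasure ℙ] [ℙ.IsHaarMeasure] (x : Fin n → ℂ) :
    (Matrix.vandermonde x).det * ∫ U, Gs b x U.1 ∂ℙ =
      Cm ℙ b (sF N b n) * (Matrix.of fun i k : Fin n => x i ^ sS N b k).det := by
  classical
  rw [← int_F]
  have hsinj : Function.Injective (sF N b n) := by
    intro i j h
    exact Fin.ext (sS_inj N b (congrArg Fin.val h))
  rw [← Matrix.det_transpose, Matrix.det_apply, Finset.mul_sum]
  symm
  refine Finset.sum_of_injOn (fun σ : Equiv.Perm (Fin n) => sF N b n ∘ σ) ?_ ?_ ?_ ?_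
  · intro σ _ σ' _ h
    ext i
    exact congrArg Fin.val (hsinj (congrFun h i))
  · intro _ _; simp
  · intro m _ hm
    have : Cm ℙ b m = 0 := by
      by_contra h
      have hq := (mul_eq_zero.mp (qC_zero ℙ b m)).resolve_right h
      have hinj : Function.Injective m := by
        by_contra h'; exact h (Cm_inj ℙ b m h')
      obtain ⟨σ, hσ⟩ := range_eq hN hb m hinj hq
      exact hm ⟨σ, by simp, hσ.symm⟩
    rw [this, zero_mul]
  · intro σ _
    rw [Cm_perm]
    simp only [Matrix.transpose_apply, Matrix.of_apply, Units.smul_def, zsmul_eq_mul]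
    simp only [Function.comp, sF]
    ring
end HaarArc

namespace HaarArc
open Polynomial

noncomputable def TT (N b : ℕ) (p : ℂ[X]) : Matrix (Fin N) (Fin N) ℂ :=
  Matrix.of fun r j => (X ^ (j : ℕ) * p).coeff (b + r)

def io (n N : ℕ) : Fin n ⊕ Fin N → ℕ := Sum.elim (fun k => (k : ℕ)) (fun r => n + r)
def io' (n N b : ℕ) : Fin n ⊕ Fin N → ℕ := Sum.elim (fun k => sS N b k) (fun r => b + r)

lemma sum_io (n N : ℕ) (f : ℕ → ℂ) : ∑ t, f (io n N t) = ∑ k ∈ Finset.range (n + N), f k := by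
  rw [Finset.sum_range_add, Fintype.sum_sum_type]
  simp only [io, Sum.elim_inl, Sum.elim_inr]
  rw [Fin.sum_univ_eq_sum_range, Fin.sum_univ_eq_sum_range (fun r => f (n + r))]

lemma exists_perm {n N b : ℕ} (hb : b ≤ n) :
    ∃ ρ : Equiv.Perm (Fin n ⊕ Fin N), ∀ t, io n N (ρ t) = io' n N b t := by
  have hex : ∀ t, ∃ u, io n N u = io' n N b t := by
    intro t
    have : ∀ k, k < n + N → ∃ u, io n N u = k := by
      intro k hk
      by_cases h : k < n
      · exact ⟨Sum.inl ⟨k, h⟩, rfl⟩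
      · exact ⟨Sum.inr ⟨k - n, by omega⟩, by simp [io]; omega⟩
    apply this
    rcases t with k | r
    · have := k.2; simp only [io', Sum.elim_inl, sS]; split_ifs <;> omega
    · have := r.2; simp only [io', Sum.elim_inr]; omega
  choose f hf using hex
  have hinj : Function.Injective (io' n N b) := by
    rintro (k | r) (k' | r') h
    · simp only [io', Sum.elim_inl] at h
      rw [Fin.ext (sS_inj N b h)]
    · exfalso; have := r'.2; simp only [io', Sum.elim_inl, Sum.elim_inr, sS] at h
      split_ifs at h <;> omega
    · exfalso; have := r.2; simp only [io', Sum.elim_inl, Sum.elim_inr, sS] at h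
      split_ifs at h <;> omega
    · simp only [io', Sum.elim_inr] at h
      congr 1; ext; omega
  have hfi : Function.Injective f := by
    intro s t h; apply hinj; rw [← hf, ← hf, h]
  exact ⟨Equiv.ofBijective f (Finite.injective_iff_bijective.mp hfi), fun t => by simp [hf]⟩

lemma coeff_shift_high {n : ℕ} {p : ℂ[X]} (hp : p.natDegree = n) (hm : p.Monic) (r j : ℕ) :
    (X ^ j * p).coeff (n + r) = if r = j then 1 else if j < r then 0 else (X ^ j * p).coeff (n + r) := by
  split_ifs with h1 h2
  · subst h1; rw [add_comm, coeff_X_pow_mul', if_pos (by omega)]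
    have : r + n - r = n := by omega
    rw [this, ← hp]; exact hm
  · apply coeff_eq_zero_of_natDegree_lt
    refine lt_of_le_of_lt natDegree_mul_le ?_
    rw [natDegree_X_pow, hp]; omega
  · rfl

theorem V_T {n N b : ℕ} (hb : b ≤ n) : ∃ ε : ℤ, ∀ x : Fin n → ℂ,
    (Matrix.vandermonde x).det * (ε * (TT N b (∏ i, (X - C (x i)))).det) =
      (Matrix.of fun i k : Fin n => x i ^ sS N b k).det := by
  obtain ⟨ρ, hρ⟩ := exists_perm (N := N) hb
  refine ⟨(Equiv.Perm.sign ρ : ℤ), fun x => ?_⟩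
  set p : ℂ[X] := ∏ i, (X - C (x i)) with hp
  have hmon : p.Monic := monic_prod_of_monic _ _ fun i _ => monic_X_sub_C _
  have hdeg : p.natDegree = n := by
    rw [hp, natDegree_prod_of_monic _ _ fun i _ => monic_X_sub_C _]; simp
  let Y : Matrix (Fin n ⊕ Fin N) (Fin n ⊕ Fin N) ℂ := Matrix.of fun a t =>
    Sum.elim (fun i => x i ^ io n N t) (fun r : Fin N => if io n N t = n + r then 1 else 0) a
  let Q : Matrix (Fin n ⊕ Fin N) (Fin n ⊕ Fin N) ℂ := Matrix.of fun t c =>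
    Sum.elim (fun k : Fin n => if io n N t = sS N b k then 1 else 0)
      (fun j : Fin N => (X ^ (j:ℕ) * p).coeff (io n N t)) c
  have hY : Y.det = (Matrix.vandermonde x).det := by
    have : Y = Matrix.fromBlocks (Matrix.vandermonde x)
        (Matrix.of fun i (r : Fin N) => x i ^ (n + r : ℕ)) 0 1 := by
      ext (i | r) (k | s)
      · rfl
      · rfl
      · have := k.2
        change (if (k:ℕ) = n + (r:ℕ) then (1:ℂ) else 0) = 0
        rw [if_neg (by omega)]
      · simp only [Y, io, Matrix.of_apply, Sum.elim_inr, Matrix.fromBlocks_apply₂₂,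
          Matrix.one_apply, add_right_inj]
        simp [Fin.ext_iff, eq_comm]
    rw [this, Matrix.det_fromBlocks_zero₂₁, Matrix.det_one, mul_one]
  have hQ : (Equiv.Perm.sign ρ : ℤ) * Q.det = (TT N b p).det := by
    rw [← Matrix.det_permute]
    have : Q.submatrix ρ id = Matrix.fromBlocks 1
        (Matrix.of fun (k : Fin n) (j : Fin N) => (X ^ (j:ℕ) * p).coeff (sS N b k)) 0 (TT N b p) := by
      ext (i | r) (k | s)
      · simp only [Q, Matrix.submatrix_apply, hρ, io', id, Matrix.of_apply, Sum.elim_inl,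
          Matrix.fromBlocks_apply₁₁, Matrix.one_apply, (sS_inj N b).eq_iff, Fin.ext_iff]
      · simp only [Q, Matrix.submatrix_apply, hρ, io', id, Matrix.of_apply, Sum.elim_inl,
          Matrix.fromBlocks_apply₁₂, Sum.elim_inr]
      · simp only [Q, Matrix.submatrix_apply, hρ, io', id, Matrix.of_apply, Sum.elim_inl,
          Matrix.fromBlocks_apply₂₁, Sum.elim_inr, Matrix.zero_apply]
        have := r.2
        rw [if_neg]
        unfold sS; split_ifs <;> omega
      · simp only [Q, Matrix.submatrix_apply, hρ, io', id, Matrix.of_apply,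
          Matrix.fromBlocks_apply₂₂, Sum.elim_inr, TT]
    rw [this, Matrix.det_fromBlocks_zero₂₁, Matrix.det_one, one_mul]
  have hYQ : (Y * Q).det = (Matrix.of fun i k : Fin n => x i ^ sS N b k).det := by
    let L : Matrix (Fin N) (Fin N) ℂ := Matrix.of fun r j => (X ^ (j:ℕ) * p).coeff (n + r)
    have : Y * Q = Matrix.fromBlocks (Matrix.of fun i k : Fin n => x i ^ sS N b k) 0
        (Matrix.of fun (r : Fin N) (k : Fin n) => if n + (r:ℕ) = sS N b k then (1:ℂ) else 0) L := by
      ext (i | r) (k | j)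
      · rw [Matrix.mul_apply]
        simp only [Y, Q, Matrix.of_apply, Sum.elim_inl, Matrix.fromBlocks_apply₁₁]
        rw [sum_io n N (fun t => x i ^ t * if t = sS N b k then (1:ℂ) else 0)]
        rw [Finset.sum_eq_single (sS N b k)]
        · simp
        · intro t _ ht; simp [ht]
        · intro h; exfalso; apply h
          have := k.2
          rw [Finset.mem_range]; unfold sS; split_ifs <;> omega
      · rw [Matrix.mul_apply]
        simp only [Y, Q, Matrix.of_apply, Sum.elim_inl, Sum.elim_inr, Matrix.fromBlocks_apply₁₂,
          Matrix.zero_apply]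
        rw [sum_io n N (fun t => x i ^ t * (X ^ (j:ℕ) * p : ℂ[X]).coeff t)]
        have he := eval_eq_sum_range' (p := X ^ (j:ℕ) * p) (n := n + N) (by
          refine lt_of_le_of_lt natDegree_mul_le ?_
          rw [natDegree_X_pow, hdeg]; have := j.2; omega) (x i)
        rw [Finset.sum_congr rfl fun t _ => mul_comm _ _, ← he, eval_mul]
        have : p.eval (x i) = 0 := by
          rw [hp, eval_prod]
          exact Finset.prod_eq_zero (Finset.mem_univ i) (by simp)
        rw [this, mul_zero]
      · rw [Matrix.mul_apply]
        simp only [Y, Q, Matrix.of_apply, Sum.elim_inl, Sum.elim_inr, Matrix.fromBlocks_apply₂₁]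
        rw [sum_io n N (fun t => (if t = n + r then (1:ℂ) else 0) * if t = sS N b k then (1:ℂ) else 0)]
        rw [Finset.sum_eq_single (n + r)]
        · simp
        · intro t _ ht; simp [ht]
        · intro h; exfalso; apply h
          have := r.2
          rw [Finset.mem_range]; omega
      · rw [Matrix.mul_apply]
        simp only [Y, Q, L, Matrix.of_apply, Sum.elim_inr, Matrix.fromBlocks_apply₂₂]
        rw [sum_io n N (fun t => (if t = n + r then (1:ℂ) else 0) * (X ^ (j:ℕ) * p : ℂ[X]).coeff t)]
        rw [Finset.sum_eq_single (n + r)]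
        · simp
        · intro t _ ht; simp [ht]
        · intro h; exfalso; apply h
          have := r.2
          rw [Finset.mem_range]; omega
    have hL : L.det = 1 := by
      rw [Matrix.det_of_isUpperTriangular]
      · refine Finset.prod_eq_one fun r _ => ?_
        simp only [L, Matrix.of_apply]
        rw [coeff_shift_high hdeg hmon, if_pos rfl]
      · intro r j hrj
        have hrj : j < r := hrj
        simp only [L, Matrix.of_apply]
        rw [coeff_shift_high hdeg hmon, if_neg (by simpa [Fin.ext_iff] using hrj.ne'), if_pos (Fin.lt_def.mp hrj)]
    rw [this, Matrix.det_fromBlocks_zero₁₂, hL, mul_one]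
  rw [Matrix.det_mul, hY] at hYQ
  rw [← hYQ, ← hQ]
  have : (((Equiv.Perm.sign ρ : ℤ) : ℂ)) * ((Equiv.Perm.sign ρ : ℤ) : ℂ) = 1 := by
    rcases Int.units_eq_one_or (Equiv.Perm.sign ρ) with h | h <;> simp [h]
  linear_combination (Matrix.vandermonde x).det * Q.det * this

lemma cont_F {N n b : ℕ} (ℙ : Measure (Matrix.unitaryGroup (Fin N) ℂ))
    [IsProbabilityMeasure ℙ] : Continuous (fun x : Fin n → ℂ => ∫ U, Gs b x U.1 ∂ℙ) := by
  have h := continuous_parametric_integral_of_continuous (μ := ℙ)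
    (f := fun (x : Fin n → ℂ) (U : Matrix.unitaryGroup (Fin N) ℂ) => Gs b x U.1) ?_ isCompact_univ
  · simpa using h
  · have hU : Continuous (fun p : (Fin n → ℂ) × Matrix.unitaryGroup (Fin N) ℂ =>
        (p.2 : Matrix (Fin N) (Fin N) ℂ)) := continuous_subtype_val.comp continuous_snd
    have h1 : Continuous (fun p : (Fin n → ℂ) × Matrix.unitaryGroup (Fin N) ℂ =>
        ((p.2 : Matrix (Fin N) (Fin N) ℂ).det)⁻¹ ^ b) :=
      (hU.matrix_det.inv₀ fun p => det_U_ne p.2).pow b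
    have h2 : Continuous (fun p : (Fin n → ℂ) × Matrix.unitaryGroup (Fin N) ℂ =>
        ∏ i, (Matrix.scalar (Fin N) (p.1 i) - (p.2 : Matrix (Fin N) (Fin N) ℂ)).det) := by
      refine continuous_finsetProd _ fun i _ => Continuous.matrix_det (Continuous.sub ?_ hU)
      simp only [Matrix.scalar_apply]
      exact Continuous.matrix_diagonal (by fun_prop)
    exact h1.mul h2

lemma cont_coeff_prod {n : ℕ} (s : Finset (Fin n)) (l : ℕ) :
    Continuous (fun x : Fin n → ℂ => (∏ i ∈ s, (X - C (x i)) : ℂ[X]).coeff l) := by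
  induction s using Finset.induction_on generalizing l with
  | empty => simp only [Finset.prod_empty]; exact continuous_const
  | insert i s hi ih =>
    simp only [Finset.prod_insert hi, sub_mul, coeff_sub, coeff_C_mul]
    refine Continuous.sub ?_ ((continuous_apply i).mul (ih l))
    cases l with
    | zero => simp only [mul_coeff_zero, coeff_X_zero, zero_mul]; exact continuous_const
    | succ l => simp only [coeff_X_mul]; exact ih l

lemma cont_TT (N n b : ℕ) :
    Continuous (fun x : Fin n → ℂ => (TT N b (∏ i, (X - C (x i)))).det) := by
  unfold TT
  refine Continuous.matrix_det (continuous_matrix fun r j => ?_)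
  simp only [Matrix.of_apply, coeff_X_pow_mul']
  split_ifs
  · exact cont_coeff_prod _ _
  · exact continuous_const

theorem F_eq_cT {N n b : ℕ} (hN : 1 ≤ N) (hb : b ≤ n) (ℙ : Measure (Matrix.unitaryGroup (Fin N) ℂ))
    [IsProbabilityMeasure ℙ] [ℙ.IsHaarMeasure] :
    ∃ c : ℂ, ∀ x : Fin n → ℂ, ∫ U, Gs b x U.1 ∂ℙ = c * (TT N b (∏ i, (X - C (x i)))).det := by
  obtain ⟨ε, hε⟩ := V_T (N := N) hb
  refine ⟨Cm ℙ b (sF N b n) * ε, fun x => ?_⟩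
  have hd : ∀ y : Fin n → ℂ, Function.Injective y → ∫ U, Gs b y U.1 ∂ℙ =
      Cm ℙ b (sF N b n) * ε * (TT N b (∏ i, (X - C (y i)))).det := by
    intro y hy
    have hV : (Matrix.vandermonde y).det ≠ 0 := Matrix.det_vandermonde_ne_zero_iff.mpr hy
    apply mul_left_cancel₀ hV
    rw [V_F hN hb, ← hε]; ring
  -- approximate by injective tuples
  let y : ℂ → Fin n → ℂ := fun t i => x i + t * (i : ℕ)
  have hyc : Continuous y := continuous_pi fun i => by fun_prop
  have hy0 : y 0 = x := by ext i; simp [y]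
  have hfin : {t : ℂ | ¬ Function.Injective (y t)}.Finite := by
    have : {t : ℂ | ¬ Function.Injective (y t)} ⊆
        ⋃ p : Fin n × Fin n, {(x p.1 - x p.2) / ((p.2 : ℕ) - (p.1 : ℕ) : ℂ)} := by
      intro t ht
      simp only [Set.mem_ofPred_eq, Function.Injective, not_forall] at ht
      obtain ⟨i, j, h, hne⟩ := ht
      refine Set.mem_iUnion.mpr ⟨(i, j), ?_⟩
      simp only [Set.mem_singleton_iff]
      have hne' : ((j:ℕ):ℂ) - (i:ℕ) ≠ 0 := by
        rw [sub_ne_zero]; exact fun h => hne (Fin.ext (Nat.cast_injective h).symm)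
      rw [eq_div_iff hne']
      simp only [y] at h
      linear_combination -h
    exact (Set.finite_iUnion fun _ => Set.finite_singleton _).subset this
  have hev : ∀ᶠ t in nhdsWithin (0:ℂ) {0}ᶜ, Function.Injective (y t) := by
    have h1 : ({t : ℂ | ¬ Function.Injective (y t)} \ {0})ᶜ ∈ nhds (0:ℂ) :=
      (hfin.subset Set.sdiff_subset).isClosed.isOpen_compl.mem_nhds (by simp)
    filter_upwards [mem_nhdsWithin_of_mem_nhds h1, self_mem_nhdsWithin] with t ht ht0
    by_contra h
    exact ht ⟨h, ht0⟩
  have h1 : Tendsto (fun t => ∫ U, Gs b (y t) U.1 ∂ℙ) (nhdsWithin (0:ℂ) {0}ᶜ)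
      (nhds (∫ U, Gs b x U.1 ∂ℙ)) := by
    have := ((cont_F (b := b) ℙ).comp hyc).tendsto 0
    simp only [Function.comp, hy0] at this
    exact this.mono_left nhdsWithin_le_nhds
  have h2 : Tendsto (fun t => Cm ℙ b (sF N b n) * ε * (TT N b (∏ i, (X - C (y t i)))).det)
      (nhdsWithin (0:ℂ) {0}ᶜ)
      (nhds (Cm ℙ b (sF N b n) * ε * (TT N b (∏ i, (X - C (x i)))).det)) := by
    have := (((cont_TT N n b).comp hyc).tendsto 0).const_mul (Cm ℙ b (sF N b n) * ε)
    simp only [Function.comp, hy0] at this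
    exact this.mono_left nhdsWithin_le_nhds
  refine tendsto_nhds_unique h1 (h2.congr' ?_)
  filter_upwards [hev] with t ht
  exact (hd _ ht).symm
end HaarArc

namespace HaarArc
open Polynomial

lemma cont_h {N : ℕ} (a : ℕ) (ℙ : Measure (Matrix.unitaryGroup (Fin N) ℂ))
    [IsProbabilityMeasure ℙ] :
    Continuous (fun t : ℂ => ∫ U : Matrix.unitaryGroup (Fin N) ℂ, (1 - t • U.1).det ^ a ∂ℙ) := by
  have h := continuous_parametric_integral_of_continuous (μ := ℙ)
    (f := fun (t : ℂ) (U : Matrix.unitaryGroup (Fin N) ℂ) => (1 - t • U.1).det ^ a) ?_ isCompact_univ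
  · simpa using h
  · have hU : Continuous (fun p : ℂ × Matrix.unitaryGroup (Fin N) ℂ =>
        (p.2 : Matrix (Fin N) (Fin N) ℂ)) := continuous_subtype_val.comp continuous_snd
    have h1 : Continuous (fun p : ℂ × Matrix.unitaryGroup (Fin N) ℂ =>
        1 - p.1 • (p.2 : Matrix (Fin N) (Fin N) ℂ)) := continuous_const.sub (continuous_fst.smul hU)
    exact h1.matrix_det.pow a

lemma TT_smul (N b : ℕ) (c : ℂ) (p : ℂ[X]) : TT N b (C c * p) = c • TT N b p := by
  ext r j
  simp only [TT, Matrix.of_apply, Matrix.smul_apply, smul_eq_mul]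
  rw [← coeff_C_mul]; congr 1; ring

theorem F_eq_T {N n b : ℕ} (hN : 1 ≤ N) (hb : b ≤ n) (ℙ : Measure (Matrix.unitaryGroup (Fin N) ℂ))
    [IsProbabilityMeasure ℙ] [ℙ.IsHaarMeasure] (x : Fin n → ℂ) :
    ∫ U, Gs b x U.1 ∂ℙ = (-1) ^ (n * N) * (TT N b (∏ i, (X - C (x i)))).det := by
  obtain ⟨c, hc⟩ := F_eq_cT hN hb ℙ
  suffices h : c * (-1) ^ (n * N) = 1 by
    have h2 : ((-1:ℂ) ^ (n * N)) * (-1) ^ (n * N) = 1 := by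
      rw [← mul_pow]; simp
    rw [hc x]
    linear_combination (TT N b (∏ i, (X - C (x i)))).det * (-1) ^ (n * N) * h
      - (TT N b (∏ i, (X - C (x i)))).det * c * h2
  obtain ⟨a, rfl⟩ := Nat.exists_eq_add_of_le hb
  have hconst : ∀ t : ℂ, t ≠ 0 →
      ∫ U : Matrix.unitaryGroup (Fin N) ℂ, (1 - t • U.1).det ^ a ∂ℙ = c * (-1) ^ ((b + a) * N) := by
    intro t ht
    have h := hc (Fin.append (fun _ : Fin b => (0:ℂ)) (fun _ : Fin a => t⁻¹))
    have hG : ∀ U : Matrix.unitaryGroup (Fin N) ℂ,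
        Gs b (Fin.append (fun _ : Fin b => (0:ℂ)) (fun _ : Fin a => t⁻¹)) U.1 =
        (-1) ^ (N * b) * (t⁻¹ ^ (N * a) * (1 - t • U.1).det ^ a) := by
      intro U
      have h1 : (Matrix.scalar (Fin N) t⁻¹ - U.1).det = t⁻¹ ^ N * (1 - t • U.1).det := by
        have : Matrix.scalar (Fin N) t⁻¹ - U.1 = t⁻¹ • (1 - t • U.1) := by
          rw [smul_sub, smul_smul, inv_mul_cancel₀ ht, one_smul, Matrix.scalar_apply,
            Matrix.smul_one_eq_diagonal]
        rw [this, Matrix.det_smul, Fintype.card_fin]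
      have h2 : (Matrix.scalar (Fin N) (0:ℂ) - U.1).det = (-1) ^ N * U.1.det := by
        rw [map_zero, zero_sub, Matrix.det_neg, Fintype.card_fin]
      simp only [Gs, Fin.prod_univ_add, Fin.append_left, Fin.append_right, Finset.prod_const,
        Finset.card_univ, Fintype.card_fin, h1, h2]
      have h3 : (U.1.det)⁻¹ ^ b * U.1.det ^ b = 1 := by
        rw [← mul_pow, inv_mul_cancel₀ (det_U_ne U), one_pow]
      rw [mul_pow, mul_pow, ← pow_mul, ← pow_mul]
      linear_combination ((-1) ^ (N * b) * (t⁻¹ ^ (N * a) * (1 - t • U.1).det ^ a)) * h3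
    simp only [hG] at h
    rw [integral_const_mul, integral_const_mul] at h
    have hT : (TT N b (∏ i, (X - C ((Fin.append (fun _ : Fin b => (0:ℂ))
        (fun _ : Fin a => t⁻¹)) i)))).det = (-1) ^ (a * N) * t⁻¹ ^ (N * a) := by
      have e : (∏ i, (X - C ((Fin.append (fun _ : Fin b => (0:ℂ)) (fun _ : Fin a => t⁻¹)) i))) =
          X ^ b * (X - C t⁻¹) ^ a := by
        simp [Fin.prod_univ_add]
      rw [e, Matrix.det_of_isLowerTriangular]
      · have : ∀ r : Fin N, TT N b (X ^ b * (X - C t⁻¹) ^ a) r r = (- t⁻¹) ^ a := by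
          intro r
          simp only [TT, Matrix.of_apply]
          rw [← mul_assoc, ← pow_add, coeff_X_pow_mul', if_pos (by omega)]
          have : b + (r:ℕ) - (r + b) = 0 := by omega
          rw [this, coeff_zero_eq_eval_zero]; simp
        simp only [this, Finset.prod_const, Finset.card_univ, Fintype.card_fin]
        rw [neg_pow, mul_pow, ← pow_mul, ← pow_mul, mul_comm N a]
      · intro r j hrj
        have hrj : (r : ℕ) < j := hrj
        simp only [TT, Matrix.of_apply]
        rw [← mul_assoc, ← pow_add, coeff_X_pow_mul', if_neg (by omega)]
    rw [hT] at h
    have ht' : t⁻¹ ^ (N * a) ≠ 0 := pow_ne_zero _ (inv_ne_zero ht)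
    have h2 : ((-1:ℂ) ^ (N * b)) * (-1) ^ (N * b) = 1 := by
      rw [← mul_pow]; simp
    apply mul_left_cancel₀ ht'
    rw [add_mul, pow_add, mul_comm b N]
    linear_combination (-1) ^ (N * b) * h - h2 * (t⁻¹ ^ (N * a) *
      ∫ U : Matrix.unitaryGroup (Fin N) ℂ, (1 - t • U.1).det ^ a ∂ℙ)
  have h1 := (cont_h a ℙ).tendsto 0
  simp only [zero_smul, sub_zero, Matrix.det_one, one_pow, integral_const, probReal_univ,
    one_smul] at h1
  have h2 : Tendsto (fun t : ℂ => ∫ U : Matrix.unitaryGroup (Fin N) ℂ, (1 - t • U.1).det ^ a ∂ℙ)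
      (nhdsWithin 0 {0}ᶜ) (nhds (c * (-1) ^ ((b + a) * N))) := by
    refine tendsto_const_nhds.congr' ?_
    filter_upwards [self_mem_nhdsWithin] with t ht
    exact (hconst t ht).symm
  exact tendsto_nhds_unique h2 (h1.mono_left nhdsWithin_le_nhds)

/-- The determinant of `p(U)`, scaled. -/
noncomputable def Hs {N : ℕ} (b : ℕ) (p : ℂ[X]) (U : Matrix (Fin N) (Fin N) ℂ) : ℂ :=
  (U.det)⁻¹ ^ b * (aeval U p).det

lemma det_aeval_prod {N : ℕ} {ι : Type*} (s : Finset ι) (f : ι → ℂ[X])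
    (U : Matrix (Fin N) (Fin N) ℂ) :
    (aeval U (∏ i ∈ s, f i)).det = ∏ i ∈ s, (aeval U (f i)).det := by
  classical
  induction s using Finset.induction_on with
  | empty => simp
  | insert a s ha ih => rw [Finset.prod_insert ha, Finset.prod_insert ha, map_mul, Matrix.det_mul, ih]

lemma roots_exist {n : ℕ} {p : ℂ[X]} (hp : p.natDegree = n) :
    ∃ x : Fin n → ℂ, p = C p.leadingCoeff * ∏ i, (X - C (x i)) := by
  have hs : p.Splits := IsAlgClosed.splits p
  have h := hs.eq_prod_roots
  have hcard : p.roots.card = n := by rw [← hp]; exact hs.natDegree_eq_card_roots.symm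
  obtain ⟨l, hl⟩ : ∃ l : List ℂ, (l : Multiset ℂ) = p.roots := ⟨p.roots.toList, Multiset.coe_toList _⟩
  have hll : l.length = n := by rw [← hcard, ← hl]; rfl
  subst hll
  refine ⟨fun i => l.get i, ?_⟩
  conv_lhs => rw [h]
  congr 1
  rw [← hl, Multiset.map_coe, Multiset.prod_coe]
  rw [← List.prod_ofFn]
  congr 1
  exact (List.ofFn_getElem_eq_map l (fun a => X - C a)).symm

lemma thmB_monic {N n b : ℕ} (hN : 1 ≤ N) (hb : b ≤ n) (ℙ : Measure (Matrix.unitaryGroup (Fin N) ℂ))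
    [IsProbabilityMeasure ℙ] [ℙ.IsHaarMeasure] (p : ℂ[X]) (hp : p.natDegree = n) :
    ∫ U, Hs b p U.1 ∂ℙ = (TT N b p).det := by
  obtain ⟨x, hx⟩ := roots_exist hp
  set c := p.leadingCoeff
  have hH : ∀ U : Matrix.unitaryGroup (Fin N) ℂ, Hs b p U.1 =
      c ^ N * (-1) ^ (n * N) * Gs b x U.1 := by
    intro U
    unfold Hs Gs
    rw [hx, map_mul, aeval_C, Matrix.det_mul, det_aeval_prod]
    have h1 : (algebraMap ℂ (Matrix (Fin N) (Fin N) ℂ) c).det = c ^ N := by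
      rw [Algebra.algebraMap_eq_smul_one, Matrix.det_smul]; simp
    have h2 : (∏ i, (aeval U.1 (X - C (x i))).det) =
        ∏ i, ((-1) ^ N * (Matrix.scalar (Fin N) (x i) - U.1).det) := by
      refine Finset.prod_congr rfl fun i _ => ?_
      have : aeval U.1 (X - C (x i)) = - (Matrix.scalar (Fin N) (x i) - U.1) := by
        rw [map_sub, aeval_X, aeval_C, neg_sub]; rfl
      rw [this, Matrix.det_neg]; simp
    rw [h1, h2, Finset.prod_mul_distrib, Finset.prod_const, Finset.card_univ, Fintype.card_fin,
      ← pow_mul, mul_comm N n]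
    ring
  simp only [hH]
  rw [integral_const_mul, F_eq_T hN hb ℙ x]
  conv_rhs => rw [hx, TT_smul, Matrix.det_smul, Fintype.card_fin]
  have h2 : ((-1:ℂ) ^ (n * N)) * (-1) ^ (n * N) = 1 := by
    rw [← mul_pow]; simp
  linear_combination c ^ N * (TT N b (∏ i, (X - C (x i)))).det * h2

theorem thmB {N b : ℕ} (hN : 1 ≤ N) (ℙ : Measure (Matrix.unitaryGroup (Fin N) ℂ))
    [IsProbabilityMeasure ℙ] [ℙ.IsHaarMeasure] (p : ℂ[X]) :
    ∫ U, Hs b p U.1 ∂ℙ = (TT N b p).det := by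
  set n := max b (p.natDegree + 1) with hn
  have hd : ∀ t : ℂ, t ≠ 0 → ∫ U, Hs b (p + C t * X ^ n) U.1 ∂ℙ =
      (TT N b (p + C t * X ^ n)).det := by
    intro t ht
    refine thmB_monic hN (le_max_left b (p.natDegree + 1)) ℙ _ ?_
    rw [natDegree_add_eq_right_of_natDegree_lt, natDegree_C_mul_X_pow _ _ ht]
    rw [natDegree_C_mul_X_pow _ _ ht]; omega
  have h1 : Continuous (fun t : ℂ => ∫ U, Hs b (p + C t * X ^ n) U.1 ∂ℙ) := by
    have h := continuous_parametric_integral_of_continuous (μ := ℙ)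
      (f := fun (t : ℂ) (U : Matrix.unitaryGroup (Fin N) ℂ) => Hs b (p + C t * X ^ n) U.1)
      ?_ isCompact_univ
    · simpa using h
    · have hU : Continuous (fun p : ℂ × Matrix.unitaryGroup (Fin N) ℂ =>
        (p.2 : Matrix (Fin N) (Fin N) ℂ)) := continuous_subtype_val.comp continuous_snd
      have h1 : Continuous (fun p : ℂ × Matrix.unitaryGroup (Fin N) ℂ =>
        ((p.2 : Matrix (Fin N) (Fin N) ℂ).det)⁻¹ ^ b) :=
        (hU.matrix_det.inv₀ fun p => det_U_ne p.2).pow b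
      have h3 : Continuous (fun w : ℂ × Matrix.unitaryGroup (Fin N) ℂ =>
          aeval (w.2 : Matrix (Fin N) (Fin N) ℂ) (p + C w.1 * X ^ n)) := by
        simp only [map_add, map_mul, aeval_C, map_pow, aeval_X, ← Algebra.smul_def]
        refine Continuous.add ?_ (continuous_fst.smul (hU.pow n))
        exact (p.continuous_aeval).comp hU
      exact h1.mul h3.matrix_det
  have h2 : Continuous (fun t : ℂ => (TT N b (p + C t * X ^ n)).det) := by
    unfold TT
    refine Continuous.matrix_det (continuous_matrix fun r j => ?_)
    simp only [Matrix.of_apply, coeff_X_pow_mul', coeff_add, coeff_C_mul]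
    split_ifs
    · fun_prop
    · exact continuous_const
  have h1' := (h1.tendsto 0).mono_left (nhdsWithin_le_nhds (s := {0}ᶜ))
  have h2' := (h2.tendsto 0).mono_left (nhdsWithin_le_nhds (s := {0}ᶜ))
  simp only [map_zero, zero_mul, add_zero] at h1' h2'
  refine tendsto_nhds_unique h1' (h2'.congr' ?_)
  filter_upwards [self_mem_nhdsWithin] with t ht
  exact (hd t ht).symm

lemma det_aeval_roots {N : ℕ} (b : ℕ) (p : ℂ[X]) (U : Matrix.unitaryGroup (Fin N) ℂ) :
    Hs b p U.1 = (U.1.charpoly.roots.map (fun z => z⁻¹ ^ b * p.eval z)).prod := by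
  have hs : U.1.charpoly.Splits := IsAlgClosed.splits _
  have hcard : U.1.charpoly.roots.card = N := by
    rw [← hs.natDegree_eq_card_roots, Matrix.charpoly_natDegree_eq_dim, Fintype.card_fin]
  have hdet : U.1.det = U.1.charpoly.roots.prod := Matrix.det_eq_prod_roots_charpoly _
  have hev : ∀ t : ℂ, (U.1 - Matrix.scalar (Fin N) t).det =
      (U.1.charpoly.roots.map (fun z => z - t)).prod := by
    intro t
    have h1 : (Matrix.scalar (Fin N) t - U.1).det = U.1.charpoly.eval t :=
      (Matrix.eval_charpoly _ _).symm
    have h2 : U.1.charpoly.eval t = (U.1.charpoly.roots.map (fun z => t - z)).prod := by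
      conv_lhs => rw [hs.eq_prod_roots_of_monic (Matrix.charpoly_monic _)]
      rw [eval_multiset_prod, Multiset.map_map]; simp
    rw [← neg_sub, Matrix.det_neg, h1, h2, Fintype.card_fin]
    have : (U.1.charpoly.roots.map (fun z => z - t)) =
        (U.1.charpoly.roots.map (fun z => (-1) * (t - z))) := by
      congr 1; ext z; ring
    rw [this, Multiset.prod_map_mul, Multiset.map_const', Multiset.prod_replicate, hcard]
  rw [Multiset.prod_map_mul]
  unfold Hs
  congr 1
  · rw [Multiset.prod_map_pow, Multiset.prod_map_inv', hdet]
  · obtain ⟨x, hx⟩ := roots_exist (p := p) rfl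
    set c := p.leadingCoeff
    have e : ∀ z, p.eval z = c * ∏ i, (z - x i) := by
      intro z
      conv_lhs => rw [hx]
      rw [eval_mul, eval_C, eval_prod]; simp
    simp only [e]
    rw [Multiset.prod_map_mul, Multiset.map_const', Multiset.prod_replicate, hcard,
      Multiset.prod_map_prod]
    conv_lhs => rw [hx]
    rw [map_mul, aeval_C, Matrix.det_mul, det_aeval_prod]
    congr 1
    · rw [Algebra.algebraMap_eq_smul_one, Matrix.det_smul]; simp
    · refine Finset.prod_congr rfl fun i _ => ?_
      rw [← hev]
      congr 1
      rw [map_sub, aeval_X, aeval_C]; rfl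
end HaarArc

namespace HaarArc
open Polynomial

/-- Positivity of the period. -/
instance twoPiFact : Fact ((0:ℝ) < 2 * π) := ⟨Real.two_pi_pos⟩

/-- Product of `f` over the eigenvalues. -/
noncomputable def Pf {N : ℕ} (f : AddCircle (2 * π) → ℂ) (U : Matrix.unitaryGroup (Fin N) ℂ) : ℂ :=
  (U.1.charpoly.roots.map (fun z => f ((Complex.arg z : ℝ) : AddCircle (2 * π)))).prod

/-- Toeplitz matrix of `f`. -/
noncomputable def TM (N : ℕ) (f : AddCircle (2 * π) → ℂ) : Matrix (Fin N) (Fin N) ℂ :=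
  Matrix.of fun r j => fourierCoeff f ((r : ℕ) - (j : ℕ) : ℤ)

/-- Functions for which the Toeplitz determinant formula holds. -/
def Good {N : ℕ} (ℙ : Measure (Matrix.unitaryGroup (Fin N) ℂ)) (f : AddCircle (2 * π) → ℂ) : Prop :=
  Measurable f ∧ Measurable (fun U : Matrix.unitaryGroup (Fin N) ℂ => Pf f U) ∧
    ∫ U, Pf f U ∂ℙ = (TM N f).det

lemma root_norm {N : ℕ} (U : Matrix.unitaryGroup (Fin N) ℂ) {z : ℂ} (hz : z ∈ U.1.charpoly.roots) :
    ‖z‖ = 1 := by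
  by_contra h
  refine det_ne h U ?_
  rw [← Matrix.eval_charpoly]
  exact (mem_roots'.mp hz).2

lemma toCircle_arg {z : ℂ} (hz : ‖z‖ = 1) :
    (AddCircle.toCircle ((Complex.arg z : ℝ) : AddCircle (2 * π)) : ℂ) = z := by
  rw [AddCircle.toCircle_apply_mk]
  have h2 : 2 * π / (2 * π) * Complex.arg z = Complex.arg z := by
    rw [div_self (by positivity), one_mul]
  rw [h2, Circle.coe_exp]
  have := Complex.norm_mul_exp_arg_mul_I z
  rwa [hz, Complex.ofReal_one, one_mul] at this

lemma card_roots' {N : ℕ} (U : Matrix.unitaryGroup (Fin N) ℂ) : U.1.charpoly.roots.card = N := by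
  have hs : U.1.charpoly.Splits := IsAlgClosed.splits _
  rw [← hs.natDegree_eq_card_roots, Matrix.charpoly_natDegree_eq_dim, Fintype.card_fin]

/-- Laurent polynomial on the circle. -/
noncomputable def gL (b : ℕ) (p : ℂ[X]) : AddCircle (2 * π) → ℂ :=
  fun x => fourier (-(b:ℤ)) x * p.toAddCircle x

lemma cont_gL (b : ℕ) (p : ℂ[X]) : Continuous (gL b p) := by
  unfold gL
  exact (map_continuous (fourier _)).mul (map_continuous _)

lemma Pf_gL {N : ℕ} (b : ℕ) (p : ℂ[X]) (U : Matrix.unitaryGroup (Fin N) ℂ) :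
    Pf (gL b p) U = Hs b p U.1 := by
  rw [det_aeval_roots, Pf]
  congr 1
  refine Multiset.map_congr rfl fun z hz => ?_
  have h1 := toCircle_arg (root_norm U hz)
  unfold gL
  congr 1
  · rw [fourier_apply, neg_smul, AddCircle.toCircle_neg, natCast_zsmul, AddCircle.toCircle_nsmul]
    push_cast
    rw [h1, inv_pow]
  · rw [toAddCircle, Polynomial.aeval_continuousMap_apply]
    simp [h1]

lemma fc_gL (b : ℕ) (p : ℂ[X]) (k : ℤ) :
    fourierCoeff (gL b p) k = if 0 ≤ k + b then p.coeff (k + b).natAbs else 0 := by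
  rw [← fourierCoeff_toAddCircle, fourierCoeff, fourierCoeff]
  congr 1
  ext x
  simp only [gL, smul_eq_mul]
  rw [neg_add, fourier_add, mul_assoc]

lemma good_gL {N : ℕ} (hN : 1 ≤ N) (ℙ : Measure (Matrix.unitaryGroup (Fin N) ℂ))
    [IsProbabilityMeasure ℙ] [ℙ.IsHaarMeasure] (b : ℕ) (p : ℂ[X]) : Good ℙ (gL b p) := by
  refine ⟨(cont_gL b p).measurable, ?_, ?_⟩
  · simp only [Pf_gL]
    refine Continuous.measurable ?_
    have hU : Continuous (fun U : Matrix.unitaryGroup (Fin N) ℂ =>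
      (U : Matrix (Fin N) (Fin N) ℂ)) := continuous_subtype_val
    unfold Hs
    exact ((hU.matrix_det.inv₀ fun p => det_U_ne p).pow b).mul
      (((p.continuous_aeval).comp hU).matrix_det)
  · simp only [Pf_gL]
    rw [thmB hN ℙ p]
    congr 1
    ext r j
    simp only [TT, TM, Matrix.of_apply, fc_gL, coeff_X_pow_mul']
    by_cases h : (j : ℕ) ≤ b + r
    · rw [if_pos h, if_pos (by omega)]
      congr 1
      omega
    · rw [if_neg h, if_neg (by omega)]

lemma Pf_bound {N : ℕ} {f : AddCircle (2 * π) → ℂ} {M : ℝ} (hM : ∀ x, ‖f x‖ ≤ M)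
    (U : Matrix.unitaryGroup (Fin N) ℂ) : ‖Pf f U‖ ≤ M ^ N := by
  have hM0 : 0 ≤ M := (norm_nonneg _).trans (hM 0)
  have key : ∀ s : Multiset ℂ, ‖(s.map (fun z => f ((Complex.arg z : ℝ) : AddCircle (2 * π)))).prod‖
      ≤ M ^ s.card := by
    intro s
    induction s using Multiset.induction_on with
    | empty => simp
    | cons a s ih =>
      rw [Multiset.map_cons, Multiset.prod_cons, norm_mul, Multiset.card_cons, pow_succ']
      exact mul_le_mul (hM _) ih (norm_nonneg _) hM0
  have := key U.1.charpoly.roots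
  rwa [card_roots'] at this

lemma good_limit {N : ℕ} (ℙ : Measure (Matrix.unitaryGroup (Fin N) ℂ))
    [IsProbabilityMeasure ℙ] {f : ℕ → AddCircle (2 * π) → ℂ} {g : AddCircle (2 * π) → ℂ} {M : ℝ}
    (hf : ∀ n, Good ℙ (f n)) (hM : ∀ n x, ‖f n x‖ ≤ M)
    (hl : ∀ x, Tendsto (fun n => f n x) atTop (nhds (g x))) : Good ℙ g := by
  have hg : Measurable g := measurable_of_tendsto_metrizable (fun n => (hf n).1)
    (tendsto_pi_nhds.mpr hl)
  have hP : ∀ U : Matrix.unitaryGroup (Fin N) ℂ, Tendsto (fun n => Pf (f n) U) atTop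
      (nhds (Pf g U)) := by
    intro U
    unfold Pf
    exact tendsto_multiset_prod _ (fun z _ => hl _)
  refine ⟨hg, measurable_of_tendsto_metrizable (fun n => (hf n).2.1) (tendsto_pi_nhds.mpr hP), ?_⟩
  have h1 : Tendsto (fun n => ∫ U, Pf (f n) U ∂ℙ) atTop (nhds (∫ U, Pf g U ∂ℙ)) := by
    refine tendsto_integral_of_dominated_convergence (fun _ => M ^ N)
      (fun n => (hf n).2.1.aestronglyMeasurable) (integrable_const _) ?_ ?_
    · exact fun n => ae_of_all _ fun U => Pf_bound (hM n) U
    · exact ae_of_all _ hP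
  have h2 : Tendsto (fun n => (TM N (f n)).det) atTop (nhds (TM N g).det) := by
    have h3 : Tendsto (fun n => TM N (f n)) atTop (nhds (TM N g)) := by
      refine tendsto_pi_nhds.mpr fun r => tendsto_pi_nhds.mpr fun j => ?_
      simp only [TM, Matrix.of_apply, fourierCoeff]
      refine tendsto_integral_of_dominated_convergence (fun _ => M)
        (fun n => ?_) (integrable_const _) ?_ ?_
      · exact ((map_continuous (fourier _)).measurable.smul (hf n).1).aestronglyMeasurable
      · refine fun n => ae_of_all _ fun x => ?_
        rw [norm_smul, fourier_apply, Circle.norm_coe, one_mul]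
        exact hM n x
      · exact ae_of_all _ fun x => (hl x).const_smul _
    exact ((continuous_id.matrix_det).tendsto (TM N g)).comp h3
  refine tendsto_nhds_unique h1 (h2.congr fun n => ((hf n).2.2).symm)

lemma span_laurent (g : C(AddCircle (2 * π), ℂ))
    (hg : g ∈ Submodule.span ℂ (Set.range (@fourier (2 * π)))) : ∃ b p, ∀ x, g x = gL b p x := by
  induction hg using Submodule.span_induction with
  | mem g h =>
    obtain ⟨n, rfl⟩ := h
    obtain ⟨m, rfl | rfl⟩ := n.eq_nat_or_neg
    · refine ⟨0, X ^ m, fun x => ?_⟩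
      rw [gL, toAddCircle_X_pow_eq_fourier]; simp
    · refine ⟨m, 1, fun x => ?_⟩
      rw [gL]; simp
  | zero => exact ⟨0, 0, fun x => by simp [gL]⟩
  | add f g _ _ hf hg =>
    obtain ⟨b, p, h1⟩ := hf
    obtain ⟨c, q, h2⟩ := hg
    refine ⟨b + c, X ^ c * p + X ^ b * q, fun x => ?_⟩
    rw [ContinuousMap.add_apply, h1, h2]
    simp only [gL, map_add, map_mul, toAddCircle_X_pow_eq_fourier, ContinuousMap.add_apply,
      ContinuousMap.mul_apply]
    push_cast
    rw [neg_add]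
    rw [fourier_add]
    have e1 : ∀ m : ℕ, fourier (-(m:ℤ)) x * fourier (m:ℤ) x = 1 := by
      intro m; rw [← fourier_add, neg_add_cancel, fourier_zero]
    linear_combination (-(fourier (-(b:ℤ)) x) * (toAddCircle p) x) * e1 c
      - (fourier (-(c:ℤ)) x) * (toAddCircle q) x * e1 b
  | smul c f _ hf =>
    obtain ⟨b, p, h1⟩ := hf
    refine ⟨b, C c * p, fun x => ?_⟩
    rw [ContinuousMap.smul_apply, h1]
    simp only [gL, map_mul, toAddCircle_C_eq_smul_fourier_zero, ContinuousMap.mul_apply,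
      ContinuousMap.smul_apply, fourier_zero, smul_eq_mul]
    ring

lemma good_cont {N : ℕ} (hN : 1 ≤ N) (ℙ : Measure (Matrix.unitaryGroup (Fin N) ℂ))
    [IsProbabilityMeasure ℙ] [ℙ.IsHaarMeasure] (g : C(AddCircle (2 * π), ℂ)) : Good ℙ g := by
  have hg : g ∈ (Submodule.span ℂ (Set.range (@fourier (2 * π)))).topologicalClosure := by
    rw [span_fourier_closure_eq_top]; trivial
  have hg' : g ∈ closure (Submodule.span ℂ (Set.range (@fourier (2 * π))) : Set _) := hg
  obtain ⟨u, hu, hl⟩ := mem_closure_iff_seq_limit.mp hg'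
  choose b p hbp using fun n => span_laurent (u n) (hu n)
  obtain ⟨M, hM⟩ := (Metric.isBounded_range_of_tendsto u hl).exists_norm_le
  refine good_limit ℙ (f := fun n => u n) (M := M) (fun n => ?_) (fun n x => ?_) (fun x => ?_)
  · have : (u n : AddCircle (2 * π) → ℂ) = gL (b n) (p n) := funext (hbp n)
    rw [this]
    exact good_gL hN ℙ _ _
  · exact ((u n).norm_coe_le_norm x).trans (hM _ ⟨n, rfl⟩)
  · exact ((ContinuousMap.evalCLM ℂ x).continuous.tendsto g).comp hl

/-- The arc on the circle. -/
def arc (a L : ℝ) : Set (AddCircle (2 * π)) := (fun x : ℝ => (x : AddCircle (2 * π))) '' Set.Ico a (a + L)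

lemma good_arc {N : ℕ} (hN : 1 ≤ N) (ℙ : Measure (Matrix.unitaryGroup (Fin N) ℂ))
    [IsProbabilityMeasure ℙ] [ℙ.IsHaarMeasure] (a L : ℝ) (hL : 0 < L) (hL2 : L < 2 * π) (s : ℂ) :
    Good ℙ (fun x => 1 + s * (arc a L).indicator (fun _ => (1:ℂ)) x) := by
  set A : Set (AddCircle (2 * π)) := (fun x : ℝ => (x : AddCircle (2 * π))) '' Set.Icc a (a + L)
  set B : Set (AddCircle (2 * π)) := {((a + L : ℝ) : AddCircle (2 * π))}
  have hcA : closure A = A := by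
    refine IsClosed.closure_eq (IsCompact.isClosed ?_)
    exact isCompact_Icc.image (AddCircle.continuous_mk' _)
  have hcB : closure B = B := by
    exact IsClosed.closure_eq isClosed_singleton
  have hδ : ∀ n : ℕ, (0:ℝ) < 1 / ((n:ℝ) + 1) := fun n => by positivity
  have hδl : Tendsto (fun n : ℕ => (1:ℝ) / ((n:ℝ) + 1)) atTop (nhds 0) :=
    tendsto_one_div_add_atTop_nhds_zero_nat
  let tA := fun n => thickenedIndicator (hδ n) A
  let tB := fun n => thickenedIndicator (hδ n) B
  have hA := tendsto_pi_nhds.mp (thickenedIndicator_tendsto_indicator_closure hδ hδl A)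
  have hB := tendsto_pi_nhds.mp (thickenedIndicator_tendsto_indicator_closure hδ hδl B)
  rw [hcA] at hA
  rw [hcB] at hB
  have hc : ∀ n, Continuous fun x => 1 + s * ((((tA n x : NNReal) : ℝ) : ℂ) - (((tB n x : NNReal) : ℝ) : ℂ)) := by
    intro n
    have h1 := (tA n).continuous
    have h2 := (tB n).continuous
    fun_prop
  refine good_limit ℙ (f := fun n x => 1 + s * ((((tA n x : NNReal) : ℝ) : ℂ) - (((tB n x : NNReal) : ℝ) : ℂ)))
    (M := 1 + ‖s‖ * (1 + 1)) (fun n => ?_) (fun n x => ?_) (fun x => ?_)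
  · exact good_cont hN ℙ ⟨_, hc n⟩
  · refine (norm_add_le _ _).trans ?_
    rw [norm_one, norm_mul]
    gcongr
    refine (norm_sub_le _ _).trans ?_
    have h1 : ((tA n x : NNReal) : ℝ) ≤ 1 := NNReal.coe_le_coe.mpr (thickenedIndicator_le_one (hδ n) A x)
    have h2 : ((tB n x : NNReal) : ℝ) ≤ 1 := NNReal.coe_le_coe.mpr (thickenedIndicator_le_one (hδ n) B x)
    gcongr
    · simpa using h1
    · simpa using h2
  · have e : (arc a L).indicator (fun _ => (1:ℂ)) x =
        (((A.indicator (fun _ => (1:NNReal)) x : NNReal) : ℝ) : ℂ) -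
          (((B.indicator (fun _ => (1:NNReal)) x : NNReal) : ℝ) : ℂ) := by
      have hsub : arc a L ⊆ A := Set.image_mono Set.Ico_subset_Icc_self
      by_cases hxB : x ∈ B
      · have hxA : x ∈ A := by
          rw [Set.mem_singleton_iff.mp hxB]
          exact ⟨a + L, ⟨by linarith, le_rfl⟩, rfl⟩
        have hx : x ∉ arc a L := by
          rintro ⟨y, hy, hyx⟩
          rw [Set.mem_singleton_iff.mp hxB] at hyx
          have := (AddCircle.coe_eq_coe_iff_of_mem_Ico (p := 2 * π) (a := a)
            ⟨hy.1, by linarith [hy.2]⟩ ⟨by linarith, by linarith⟩).mp hyx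
          linarith [hy.2]
        rw [Set.indicator_of_notMem hx, Set.indicator_of_mem hxB, Set.indicator_of_mem hxA]
        simp
      · rw [Set.indicator_of_notMem hxB]
        by_cases hx : x ∈ arc a L
        · rw [Set.indicator_of_mem hx, Set.indicator_of_mem (hsub hx)]; simp
        · have hxA : x ∉ A := by
            rintro ⟨y, hy, rfl⟩
            rcases hy.2.lt_or_eq with h | h
            · exact hx ⟨y, ⟨hy.1, h⟩, rfl⟩
            · exact hxB (by rw [h]; rfl)
          rw [Set.indicator_of_notMem hx, Set.indicator_of_notMem hxA]; simp
    rw [e]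
    refine Tendsto.const_add _ (Tendsto.const_mul _ (Tendsto.sub ?_ ?_))
    · have : Continuous (fun x : NNReal => ((x:ℝ):ℂ)) := by fun_prop
      exact (this.tendsto _).comp (hA x)
    · have : Continuous (fun x : NNReal => ((x:ℝ):ℂ)) := by fun_prop
      exact (this.tendsto _).comp (hB x)

end HaarArc

namespace HaarArc
open Polynomial
open scoped ComplexOrder

/-- Shifted argument. -/
noncomputable def ang (z : ℂ) : ℝ :=
  if 0 ≤ Complex.arg z then Complex.arg z else Complex.arg z + 2 * π

lemma ang_mem (z : ℂ) : ang z ∈ Set.Ico 0 (2 * π) := by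
  have h1 := Complex.neg_pi_lt_arg z
  have h2 := Complex.arg_le_pi z
  have h3 := Real.pi_pos
  unfold ang
  split_ifs with h
  · exact ⟨h, by linarith⟩
  · exact ⟨by linarith, by linarith⟩

lemma ang_coe (z : ℂ) : ((ang z : ℝ) : AddCircle (2 * π)) = ((Complex.arg z : ℝ) : AddCircle (2 * π)) := by
  unfold ang
  split_ifs with h
  · rfl
  · rw [AddCircle.coe_add_period]

lemma arg_mem_arc (a L : ℝ) (ha : 0 ≤ a) (haL : a + L ≤ 2 * π) (z : ℂ) :
    ((Complex.arg z : ℝ) : AddCircle (2 * π)) ∈ arc a L ↔ ang z ∈ Set.Ico a (a + L) := by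
  rw [← ang_coe]
  constructor
  · rintro ⟨y, hy, h⟩
    have h0 := ang_mem z
    have := (AddCircle.coe_eq_coe_iff_of_mem_Ico (p := 2 * π) (a := 0)
            ⟨ha.trans hy.1, by linarith [hy.2]⟩ ⟨h0.1, by linarith [h0.2]⟩).mp h
    rwa [← this]
  · intro h; exact ⟨_, h, rfl⟩

lemma Pf_arc {N : ℕ} (a L : ℝ) (ha : 0 ≤ a) (haL : a + L ≤ 2 * π) (s : ℂ)
    (U : Matrix.unitaryGroup (Fin N) ℂ) :
    Pf (fun x => 1 + s * (arc a L).indicator (fun _ => (1:ℂ)) x) U =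
      (1 + s) ^ (countAngles N U (Set.Ico a (a + L))) := by
  unfold Pf countAngles eigenAngles
  generalize U.1.charpoly.roots = R
  induction R using Multiset.induction_on with
  | empty => simp
  | cons z R ih =>
    rw [Multiset.map_cons, Multiset.prod_cons, ih, Multiset.map_cons]
    beta_reduce
    rw [show (if 0 ≤ z.arg then z.arg else z.arg + 2 * π) = ang z from rfl]
    by_cases h : ang z ∈ Set.Ico a (a + L)
    · rw [Set.indicator_of_mem ((arg_mem_arc a L ha haL z).mpr h)]
      refine Eq.trans ?_ (congrArg (fun m => (1 + s) ^ Multiset.card m)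
        (@Multiset.filter_cons_of_pos _ (fun x => x ∈ Set.Ico a (a + L))
          (fun _ => Classical.propDecidable _) _ _ h).symm)
      beta_reduce
      rw [Multiset.card_cons, pow_succ', mul_one]
    · rw [Set.indicator_of_notMem (fun h' => h ((arg_mem_arc a L ha haL z).mp h'))]
      refine Eq.trans ?_ (congrArg (fun m => (1 + s) ^ Multiset.card m)
        (@Multiset.filter_cons_of_neg _ (fun x => x ∈ Set.Ico a (a + L))
          (fun _ => Classical.propDecidable _) _ _ h).symm)
      beta_reduce
      rw [mul_zero, add_zero, one_mul]

/-- Fourier coefficient of the arc. -/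
noncomputable def ck (a L : ℝ) (k : ℤ) : ℂ :=
  fourierCoeff (T := 2 * π) ((arc a L).indicator (fun _ => (1:ℂ))) k

lemma count_le {N : ℕ} (U : Matrix.unitaryGroup (Fin N) ℂ) (A : Set ℝ) :
    countAngles N U A ≤ N := by
  classical
  unfold countAngles eigenAngles
  refine (Multiset.card_le_card (Multiset.filter_le _ _)).trans ?_
  rw [Multiset.card_map, card_roots']

lemma count_meas {N : ℕ} (hN : 1 ≤ N) (ℙ : Measure (Matrix.unitaryGroup (Fin N) ℂ))
    [IsProbabilityMeasure ℙ] [ℙ.IsHaarMeasure] (a L : ℝ) (ha : 0 ≤ a) (haL : a + L ≤ 2 * π)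
    (hL : 0 < L) (hL2 : L < 2 * π) :
    Measurable (fun U : Matrix.unitaryGroup (Fin N) ℂ => countAngles N U (Set.Ico a (a + L))) := by
  have h := (good_arc hN ℙ a L hL hL2 1).2.1
  simp only [Pf_arc a L ha haL] at h
  refine measurable_to_countable' fun n => ?_
  have : (fun U : Matrix.unitaryGroup (Fin N) ℂ => countAngles N U (Set.Ico a (a + L))) ⁻¹' {n} =
      (fun U : Matrix.unitaryGroup (Fin N) ℂ => (1 + 1 : ℂ) ^ countAngles N U (Set.Ico a (a + L))) ⁻¹'
        {(1 + 1) ^ n} := by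
    ext U
    simp only [Set.mem_preimage, Set.mem_singleton_iff]
    constructor
    · intro h; rw [h]
    · intro h
      have h2 : (2:ℕ) ^ countAngles N U (Set.Ico a (a + L)) = 2 ^ n := by
        rw [one_add_one_eq_two] at h; exact_mod_cast h
      exact Nat.pow_right_injective le_rfl h2
  rw [this]
  exact h (measurableSet_singleton _)

lemma arc_meas (a L : ℝ) (hL : 0 < L) (hL2 : L < 2 * π) : MeasurableSet (arc a L) := by
  have : arc a L = (fun x : ℝ => (x : AddCircle (2 * π))) '' Set.Icc a (a + L) \
      {((a + L : ℝ) : AddCircle (2 * π))} := by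
    ext x
    constructor
    · rintro ⟨y, hy, rfl⟩
      refine ⟨⟨y, ⟨hy.1, hy.2.le⟩, rfl⟩, fun h => ?_⟩
      have := (AddCircle.coe_eq_coe_iff_of_mem_Ico (p := 2 * π) (a := a)
            ⟨hy.1, by linarith [hy.2]⟩ ⟨by linarith, by linarith⟩).mp (Set.mem_singleton_iff.mp h)
      linarith [hy.2]
    · rintro ⟨⟨y, hy, rfl⟩, h⟩
      rcases hy.2.lt_or_eq with h2 | h2
      · exact ⟨y, ⟨hy.1, h2⟩, rfl⟩
      · exact absurd (by rw [h2]; rfl) h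
  rw [this]
  exact ((isCompact_Icc.image (AddCircle.continuous_mk' _)).isClosed.measurableSet).diff
    (measurableSet_singleton _)

lemma TM_affine (N : ℕ) (g : AddCircle (2 * π) → ℂ) (hg : Integrable g AddCircle.haarAddCircle)
    (s : ℂ) : TM N (fun x => 1 + s * g x) = 1 + s • TM N g := by
  have h1 : (fun x => 1 + s * g x) = (fourier 0 : AddCircle (2 * π) → ℂ) + fun x => s * g x := by
    ext x; simp
  ext r j
  simp only [TM, Matrix.of_apply, Matrix.add_apply, Matrix.smul_apply]
  rw [h1, fourierCoeff.add, Pi.add_apply, fourierCoeff_fourier, fourierCoeff.const_mul]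
  · congr 1
    rw [Matrix.one_apply, Pi.single_apply]
    congr 1
    rw [Fin.ext_iff, eq_iff_iff]; omega
  · simpa using (map_continuous (fourier (T := 2 * π) 0)).continuousOn.integrableOn_compact
      (μ := AddCircle.haarAddCircle (T := 2 * π)) isCompact_univ
  · exact hg.const_mul s

lemma ind_int (A : Set (AddCircle (2 * π))) (hA : MeasurableSet A) :
    Integrable (A.indicator (fun _ => (1:ℂ))) (AddCircle.haarAddCircle (T := 2 * π)) :=
  (integrable_const _).indicator hA

theorem genfun {N : ℕ} (hN : 1 ≤ N) (ℙ : Measure (Matrix.unitaryGroup (Fin N) ℂ))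
    [IsProbabilityMeasure ℙ] [ℙ.IsHaarMeasure] (a L : ℝ) (ha : 0 ≤ a) (haL : a + L ≤ 2 * π)
    (hL : 0 < L) (hL2 : L < 2 * π) (s : ℂ) :
    ∫ U, (1 + s) ^ (countAngles N U (Set.Ico a (a + L))) ∂ℙ =
      (1 + s • TM N ((arc a L).indicator (fun _ => (1:ℂ)))).det := by
  have h := (good_arc hN ℙ a L hL hL2 s).2.2
  simp only [Pf_arc a L ha haL] at h
  rw [h, TM_affine N _ (ind_int _ (arc_meas a L hL hL2))]

/-- Toeplitz matrices of indicators are positive semidefinite. -/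
lemma TM_psd (N : ℕ) (A : Set (AddCircle (2 * π))) (hA : MeasurableSet A) :
    (TM N (A.indicator (fun _ => (1:ℂ)))).PosSemidef := by
  have hherm : (TM N (A.indicator (fun _ => (1:ℂ)))).IsHermitian := by
    ext r j
    simp only [TM, Matrix.conjTranspose_apply, Matrix.of_apply, fourierCoeff, RCLike.star_def]
    rw [← integral_conj]
    congr 1
    ext x
    simp only [smul_eq_mul, map_mul]
    rw [← fourier_neg]
    have e1 : (starRingEnd ℂ) (A.indicator (fun _ => (1:ℂ)) x) = A.indicator (fun _ => (1:ℂ)) x := by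
      by_cases h : x ∈ A <;> simp [h]
    have e2 : -(-(((j:ℕ):ℤ) - ((r:ℕ):ℤ))) = -(((r:ℕ):ℤ) - ((j:ℕ):ℤ)) := by ring
    rw [e1, e2]
  refine Matrix.PosSemidef.of_dotProduct_mulVec_nonneg hherm fun v => ?_
  have key : star v ⬝ᵥ (TM N (A.indicator (fun _ => (1:ℂ)))).mulVec v =
      ((∫ x, A.indicator (fun _ => (1:ℝ)) x * ‖∑ j : Fin N, v j * fourier ((j:ℕ):ℤ) x‖ ^ 2
        ∂(AddCircle.haarAddCircle (T := 2 * π)) : ℝ) : ℂ) := by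
    simp only [dotProduct, Matrix.mulVec, TM, Matrix.of_apply, fourierCoeff, Pi.star_apply,
      RCLike.star_def]
    have hintg : ∀ r j : Fin N, Integrable (fun x => fourier (-(((r:ℕ):ℤ) - ((j:ℕ):ℤ))) x •
        A.indicator (fun _ => (1:ℂ)) x) (AddCircle.haarAddCircle (T := 2 * π)) := fun r j =>
      (ind_int A hA).fourier_smul _
    rw [← integral_complex_ofReal]
    simp only [← integral_mul_const, ← integral_const_mul, Finset.mul_sum]
    have : ∀ r : Fin N, ∑ j : Fin N, ∫ x, (starRingEnd ℂ) (v r) * ((fourier (-(((r:ℕ):ℤ) - ((j:ℕ):ℤ))) x •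
        A.indicator (fun _ => (1:ℂ)) x) * v j) ∂(AddCircle.haarAddCircle (T := 2 * π)) =
        ∫ x, ∑ j : Fin N, (starRingEnd ℂ) (v r) * ((fourier (-(((r:ℕ):ℤ) - ((j:ℕ):ℤ))) x •
        A.indicator (fun _ => (1:ℂ)) x) * v j) ∂(AddCircle.haarAddCircle (T := 2 * π)) := by
      intro r
      rw [integral_finsetSum]
      exact fun j _ => ((hintg r j).mul_const _).const_mul _
    simp only [this]
    rw [← integral_finsetSum]
    · congr 1
      ext x
      have e : (((A.indicator (fun _ => (1:ℝ)) x * ‖∑ j : Fin N, v j * fourier ((j:ℕ):ℤ) x‖ ^ 2 : ℝ)) : ℂ)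
          = A.indicator (fun _ => (1:ℂ)) x * ((starRingEnd ℂ) (∑ j : Fin N, v j * fourier ((j:ℕ):ℤ) x) *
            (∑ j : Fin N, v j * fourier ((j:ℕ):ℤ) x)) := by
        rw [Complex.conj_mul']
        by_cases h : x ∈ A <;> simp [h]
      refine Eq.trans ?_ e.symm
      rw [map_sum, Finset.sum_mul_sum, Finset.mul_sum]
      refine Finset.sum_congr rfl fun r _ => ?_
      rw [Finset.mul_sum]
      refine Finset.sum_congr rfl fun j _ => ?_
      rw [map_mul, ← fourier_neg, neg_sub, sub_eq_add_neg, fourier_add, smul_eq_mul]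
      ring
    · exact fun r _ => integrable_finsetSum _ fun j _ => ((hintg r j).mul_const _).const_mul _
  rw [key]
  refine Complex.zero_le_real.mpr (integral_nonneg fun x => ?_)
  refine mul_nonneg ?_ (by positivity)
  by_cases h : x ∈ A <;> simp [h]

lemma TM_compl (N : ℕ) (A : Set (AddCircle (2 * π))) (hA : MeasurableSet A) :
    (1 - TM N (A.indicator (fun _ => (1:ℂ)))).PosSemidef := by
  have h := TM_psd N Aᶜ hA.compl
  have e : (Aᶜ.indicator (fun _ => (1:ℂ))) = fun x => 1 + (-1) * A.indicator (fun _ => (1:ℂ)) x := by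
    ext x; by_cases h : x ∈ A <;> simp [h]
  rw [e, TM_affine N _ (ind_int A hA)] at h
  rwa [neg_one_smul, ← sub_eq_add_neg] at h

lemma eig_data {N : ℕ} (K : Matrix (Fin N) (Fin N) ℂ) (h0 : K.PosSemidef) (h1 : (1 - K).PosSemidef) :
    ∃ l : Fin N → ℝ, (∀ i, 0 ≤ l i) ∧ (∀ i, l i ≤ 1) ∧
      (∀ s : ℂ, (1 + s • K).det = ∏ i, (1 + s * l i)) ∧ K.trace = ∑ i, (l i : ℂ) ∧
      (K * K).trace = ∑ i, (l i : ℂ) ^ 2 := by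
  have hK := h0.isHermitian
  refine ⟨hK.eigenvalues, h0.eigenvalues_nonneg, fun i => ?_, fun s => ?_, ?_, ?_⟩
  · have h2 := h1.re_dotProduct_nonneg (hK.eigenvectorBasis i).ofLp
    rw [Matrix.sub_mulVec, Matrix.one_mulVec, dotProduct_sub, map_sub, ← hK.eigenvalues_eq i] at h2
    have h3 : RCLike.re (star (hK.eigenvectorBasis i).ofLp ⬝ᵥ (hK.eigenvectorBasis i).ofLp) = (1:ℝ) := by
      have := (hK.eigenvectorBasis).orthonormal.1 i
      have h4 := inner_self_eq_norm_sq (𝕜 := ℂ) (hK.eigenvectorBasis i)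
      rw [this] at h4
      rw [EuclideanSpace.inner_eq_star_dotProduct, dotProduct_comm] at h4
      simpa using h4
    rw [h3] at h2
    linarith
  · by_cases hs : s = 0
    · simp [hs]
    have h2 := Matrix.eval_charpoly K (-s⁻¹)
    rw [hK.charpoly_eq, eval_prod] at h2
    have h3 : 1 + s • K = (-s) • (Matrix.scalar (Fin N) (-s⁻¹) - K) := by
      rw [smul_sub, Matrix.scalar_apply, ← Matrix.smul_one_eq_diagonal, smul_smul, neg_mul_neg,
        mul_inv_cancel₀ hs, one_smul, neg_smul, sub_neg_eq_add]
    rw [h3, Matrix.det_smul, ← h2, Fintype.card_fin, ← Fin.prod_const, ← Finset.prod_mul_distrib]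
    refine Finset.prod_congr rfl fun i _ => ?_
    simp only [eval_sub, eval_X, eval_C]
    rw [mul_sub, neg_mul_neg, mul_inv_cancel₀ hs, neg_mul, sub_neg_eq_add]
    rfl
  · rw [hK.trace_eq_sum_eigenvalues]; rfl
  · conv_lhs => rw [hK.spectral_theorem, ← map_mul, Unitary.conjStarAlgAut_apply,
      Matrix.trace_mul_cycle]
    simp [Matrix.trace_diagonal, pow_two]

end HaarArc

namespace HaarArc
open Polynomial

lemma coe_mem_arc (a L : ℝ) (hL2 : L < 2 * π) {x : ℝ} (hx : x ∈ Set.Ico a (a + 2 * π)) :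
    (x : AddCircle (2 * π)) ∈ arc a L ↔ x ∈ Set.Ico a (a + L) := by
  constructor
  · rintro ⟨y, hy, h⟩
    have := (AddCircle.coe_eq_coe_iff_of_mem_Ico (p := 2 * π) (a := a)
            ⟨hy.1, by linarith [hy.2]⟩ hx).mp h
    rwa [← this]
  · intro h; exact ⟨_, h, rfl⟩

lemma ck_eq (a L : ℝ) (hL : 0 < L) (hL2 : L < 2 * π) (k : ℤ) :
    ck a L k = (1 / (2 * π) : ℝ) • ∫ x in a..a + L, Complex.exp (-(k * Complex.I) * x) := by
  rw [ck, fourierCoeff_eq_intervalIntegral _ _ a]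
  congr 1
  rw [intervalIntegral.integral_of_le (by linarith), intervalIntegral.integral_of_le (by linarith),
    ← integral_Ico_eq_integral_Ioc, ← integral_Ico_eq_integral_Ioc]
  have h1 : ∫ x in Set.Ico a (a + 2 * π), (fourier (-k) (x : AddCircle (2 * π))) •
      (arc a L).indicator (fun _ => (1:ℂ)) (x : AddCircle (2 * π)) =
      ∫ x in Set.Ico a (a + 2 * π), (Set.Ico a (a + L)).indicator
        (fun x : ℝ => Complex.exp (-(k * Complex.I) * x)) x := by
    refine setIntegral_congr_fun measurableSet_Ico fun x hx => ?_
    by_cases h : x ∈ Set.Ico a (a + L)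
    · rw [Set.indicator_of_mem ((coe_mem_arc a L hL2 hx).mpr h), Set.indicator_of_mem h,
        fourier_coe_apply, smul_eq_mul, mul_one]
      congr 1
      have : (π : ℂ) ≠ 0 := by exact_mod_cast Real.pi_ne_zero
      push_cast
      field_simp
    · rw [Set.indicator_of_notMem (fun h' => h ((coe_mem_arc a L hL2 hx).mp h')),
        Set.indicator_of_notMem h, smul_zero]
  rw [h1, setIntegral_indicator measurableSet_Ico,
    Set.inter_eq_right.mpr (Set.Ico_subset_Ico_right (by linarith))]

lemma ck_zero (a L : ℝ) (hL : 0 < L) (hL2 : L < 2 * π) : ck a L 0 = ((L / (2 * π) : ℝ) : ℂ) := by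
  rw [ck_eq a L hL hL2]
  simp
  ring

lemma ck_norm (a L : ℝ) (hL : 0 < L) (hL2 : L < 2 * π) (k : ℤ) (hk : k ≠ 0) :
    ‖ck a L k‖ ^ 2 = Real.sin (k * L / 2) ^ 2 / (π ^ 2 * k ^ 2) := by
  have hk' : (k:ℂ) ≠ 0 := by exact_mod_cast hk
  have hk2 : (k:ℝ) ≠ 0 := by exact_mod_cast hk
  have hc : -((k:ℂ) * Complex.I) ≠ 0 := neg_ne_zero.mpr (mul_ne_zero hk' Complex.I_ne_zero)
  rw [ck_eq a L hL hL2, integral_exp_mul_complex hc, norm_smul, norm_div (_ - _), norm_neg, norm_mul,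
    Complex.norm_I]
  have e : Complex.exp (-(k * Complex.I) * ((a + L : ℝ) : ℂ)) - Complex.exp (-(k * Complex.I) * (a:ℂ))
      = Complex.exp ((-(k * (a + L / 2)) : ℝ) * Complex.I) *
        (-(2 * Real.sin (k * L / 2) : ℝ) * Complex.I) := by
    have h1 : -((k:ℂ) * Complex.I) * ((a + L : ℝ) : ℂ) = (-(k * (a + L / 2)) : ℝ) * Complex.I +
        (-(k * L / 2 : ℝ) : ℂ) * Complex.I := by push_cast; ring
    have h2 : -((k:ℂ) * Complex.I) * (a : ℂ) = (-(k * (a + L / 2)) : ℝ) * Complex.I +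
        ((k * L / 2 : ℝ) : ℂ) * Complex.I := by push_cast; ring
    rw [h1, h2, Complex.exp_add, Complex.exp_add, Complex.exp_mul_I ((k * L / 2 : ℝ) : ℂ),
      Complex.exp_mul_I (-(k * L / 2 : ℝ) : ℂ), Complex.cos_neg, Complex.sin_neg]
    push_cast
    ring
  rw [e, norm_mul, Complex.norm_exp_ofReal_mul_I, norm_mul, norm_neg, Complex.norm_I,
    Complex.norm_real, Complex.norm_intCast, Real.norm_eq_abs, Real.norm_eq_abs]
  rw [mul_one, mul_one, one_mul, mul_pow, div_pow, sq_abs, sq_abs, sq_abs]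
  have := Real.pi_ne_zero
  field_simp
  try ring

lemma ck_conj (a L : ℝ) (k : ℤ) : ck a L (-k) = (starRingEnd ℂ) (ck a L k) := by
  rw [ck, ck, fourierCoeff, fourierCoeff, ← integral_conj]
  congr 1
  ext x
  rw [smul_eq_mul, smul_eq_mul, map_mul, ← fourier_neg]
  congr 1
  by_cases h : x ∈ arc a L <;> simp [h]

lemma parseval (a L : ℝ) (hL : 0 < L) (hL2 : L < 2 * π) :
    HasSum (fun k : ℤ => ‖ck a L k‖ ^ 2) (L / (2 * π)) := by
  have hm := arc_meas a L hL hL2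
  let F : Lp ℂ 2 (AddCircle.haarAddCircle (T := 2 * π)) :=
    indicatorConstLp 2 hm (measure_ne_top _ _) (1:ℂ)
  have hF : F =ᵐ[AddCircle.haarAddCircle] (arc a L).indicator (fun _ => (1:ℂ)) :=
    indicatorConstLp_coeFn
  have h := hasSum_sq_fourierCoeff F
  have e1 : ∀ k, fourierCoeff F k = ck a L k := fun k => by
    rw [ck, fourierCoeff_congr_ae hF]
  simp only [e1] at h
  have e2 : ∫ t, ‖F t‖ ^ 2 ∂(AddCircle.haarAddCircle (T := 2 * π)) = L / (2 * π) := by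
    have h2 : ∫ t, (arc a L).indicator (fun _ => (1:ℂ)) t ∂(AddCircle.haarAddCircle (T := 2 * π)) =
        ck a L 0 := by
      rw [ck, fourierCoeff]; simp
    have h3 : ((∫ t, ‖F t‖ ^ 2 ∂(AddCircle.haarAddCircle (T := 2 * π)) : ℝ) : ℂ) = ck a L 0 := by
      rw [← h2, ← integral_complex_ofReal]
      refine integral_congr_ae ?_
      filter_upwards [hF] with t ht
      rw [ht]
      by_cases h : t ∈ arc a L <;> simp [h]
    rw [ck_zero a L hL hL2] at h3
    exact_mod_cast h3
  rwa [e2] at h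

theorem eig_main {N : ℕ} (hN : 1 ≤ N) (ℙ : Measure (Matrix.unitaryGroup (Fin N) ℂ))
    [IsProbabilityMeasure ℙ] [ℙ.IsHaarMeasure] (a L : ℝ) (ha : 0 ≤ a) (haL : a + L ≤ 2 * π)
    (hL : 0 < L) (hL2 : L < 2 * π) :
    ∃ l : Fin N → ℝ, (∀ i, 0 ≤ l i) ∧ (∀ i, l i ≤ 1) ∧
      (∀ s : ℝ, ∫ U, (1 + s) ^ (countAngles N U (Set.Ico a (a + L))) ∂ℙ = ∏ i, (1 + s * l i)) ∧
      ∑ i, l i = N * (L / (2 * π)) ∧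
      ∑ i, l i ^ 2 = ∑ r : Fin N, ∑ j : Fin N, ‖ck a L ((r:ℕ) - (j:ℕ) : ℤ)‖ ^ 2 := by
  obtain ⟨l, h0, h1, hdet, htr, htr2⟩ := eig_data (TM N ((arc a L).indicator (fun _ => (1:ℂ))))
    (TM_psd N _ (arc_meas a L hL hL2)) (TM_compl N _ (arc_meas a L hL hL2))
  refine ⟨l, h0, h1, fun s => ?_, ?_, ?_⟩
  · have h := genfun hN ℙ a L ha haL hL hL2 s
    rw [hdet] at h
    have e : ∀ U : Matrix.unitaryGroup (Fin N) ℂ, (1 + (s:ℂ)) ^ (countAngles N U (Set.Ico a (a + L))) =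
        (((1 + s) ^ (countAngles N U (Set.Ico a (a + L))) : ℝ) : ℂ) := fun U => by push_cast; rfl
    simp only [e] at h
    rw [integral_complex_ofReal] at h
    exact_mod_cast h
  · have : (TM N ((arc a L).indicator (fun _ => (1:ℂ)))).trace = N * ((L / (2 * π) : ℝ) : ℂ) := by
      rw [← ck_zero a L hL hL2]
      simp [Matrix.trace, TM, ck]
    rw [this] at htr
    exact_mod_cast htr.symm
  · have : (TM N ((arc a L).indicator (fun _ => (1:ℂ))) * TM N ((arc a L).indicator (fun _ => (1:ℂ)))).trace
        = ((∑ r : Fin N, ∑ j : Fin N, ‖ck a L ((r:ℕ) - (j:ℕ) : ℤ)‖ ^ 2 : ℝ) : ℂ) := by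
      simp only [Matrix.trace, Matrix.diag, Matrix.mul_apply]
      push_cast
      refine Finset.sum_congr rfl fun r _ => Finset.sum_congr rfl fun j _ => ?_
      have e1 : TM N ((arc a L).indicator (fun _ => (1:ℂ))) r j = ck a L ((r:ℕ) - (j:ℕ) : ℤ) := rfl
      have e2 : TM N ((arc a L).indicator (fun _ => (1:ℂ))) j r =
          (starRingEnd ℂ) (ck a L ((r:ℕ) - (j:ℕ) : ℤ)) := by
        rw [← ck_conj, neg_sub]; rfl
      rw [e1, e2, Complex.mul_conj']
    rw [this] at htr2
    exact_mod_cast htr2.symm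

end HaarArc

namespace HaarArc

lemma toep_row_sum (e : ℤ → ℝ) (he : ∀ k, e (-k) = e k) (r m : ℕ) :
    ∑ j ∈ Finset.range (r + 1 + m), e ((r:ℤ) - j) =
      e 0 + ∑ k ∈ Finset.range r, e ((k:ℤ) + 1) + ∑ k ∈ Finset.range m, e ((k:ℤ) + 1) := by
  rw [Finset.sum_range_add, Finset.sum_range_succ]
  have h1 : ∑ j ∈ Finset.range r, e ((r:ℤ) - j) = ∑ k ∈ Finset.range r, e ((k:ℤ) + 1) := by
    rw [← Finset.sum_range_reflect]
    refine Finset.sum_congr rfl fun j hj => ?_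
    have := Finset.mem_range.mp hj
    congr 1; omega
  have h2 : ∑ k ∈ Finset.range m, e ((r:ℤ) - ((r + 1 + k : ℕ) : ℤ)) =
      ∑ k ∈ Finset.range m, e ((k:ℤ) + 1) := by
    refine Finset.sum_congr rfl fun j _ => ?_
    rw [← he]
    congr 1; push_cast; ring
  rw [h1, h2, sub_self]; ring

lemma var_form (e : ℤ → ℝ) (he : ∀ k, e (-k) = e k) {x : ℝ} (hx : HasSum e x) (N : ℕ) :
    ∃ F : ℝ, HasSum (fun k : ℕ => e ((k:ℤ) + 1)) F ∧ x = e 0 + 2 * F ∧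
      N * x - ∑ r : Fin N, ∑ j : Fin N, e ((r:ℕ) - (j:ℕ) : ℤ) =
        2 * ∑ r ∈ Finset.range N, (F - ∑ k ∈ Finset.range r, e ((k:ℤ) + 1)) := by
  have hs1 : Summable (fun n : ℕ => e n) := hx.summable.comp_injective Nat.cast_injective
  have hs2 : Summable (fun n : ℕ => e ((n:ℤ) + 1)) := hx.summable.comp_injective
    (i := fun n : ℕ => (n:ℤ) + 1) (fun a b h => by simpa using h)
  have hs3 : Summable (fun n : ℕ => e (-((n:ℤ) + 1))) := by simpa only [he] using hs2
  refine ⟨_, hs2.hasSum, ?_, ?_⟩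
  · have h1 := HasSum.of_nat_of_neg_add_one hs1.hasSum hs3.hasSum
    rw [hx.unique h1, hs1.tsum_eq_zero_add]
    simp only [he]
    push_cast
    ring
  · set F := ∑' n : ℕ, e ((n:ℤ) + 1) with hF
    have hxF : x = e 0 + 2 * F := by
      have h1 := HasSum.of_nat_of_neg_add_one hs1.hasSum hs3.hasSum
      rw [hx.unique h1, hs1.tsum_eq_zero_add]
      simp only [he]
      push_cast
      ring
    have h2 : ∀ r ∈ Finset.range N, ∑ j : Fin N, e ((r:ℤ) - (j:ℕ)) =
        e 0 + ∑ k ∈ Finset.range r, e ((k:ℤ) + 1) + ∑ k ∈ Finset.range (N - 1 - r), e ((k:ℤ) + 1) := by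
      intro r hr
      have := Finset.mem_range.mp hr
      rw [Finset.sum_range (f := fun j => e ((r:ℤ) - j)) |>.symm, ← toep_row_sum e he]
      congr 2; omega
    rw [Finset.sum_range (f := fun r => ∑ j : Fin N, e ((r:ℤ) - (j:ℕ))) |>.symm,
      Finset.sum_congr rfl h2, Finset.sum_add_distrib,
      Finset.sum_range_reflect (fun r => ∑ k ∈ Finset.range r, e ((k:ℤ) + 1)) N,
      Finset.sum_add_distrib, Finset.sum_sub_distrib, hxF]
    simp only [Finset.sum_const, Finset.card_range, nsmul_eq_mul]
    ring

lemma tail_le (e : ℕ → ℝ) (C F : ℝ) (hF : HasSum e F) (hC : 0 ≤ C)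
    (hb : ∀ k, e k ≤ C / ((k:ℝ) + 1) ^ 2)
    (m : ℕ) (hm : 1 ≤ m) : F - ∑ k ∈ Finset.range m, e k ≤ C / m := by
  have key : ∀ n, ∑ k ∈ Finset.range (m + n), e k - ∑ k ∈ Finset.range m, e k ≤
      C / m - C / ((m:ℝ) + n) := by
    intro n
    have hm' : (0:ℝ) < m := by exact_mod_cast hm
    induction n with
    | zero => simp
    | succ n ih =>
      rw [← add_assoc, Finset.sum_range_succ]
      have h1 := hb (m + n)
      have h2 : C / (((m + n : ℕ) : ℝ) + 1) ^ 2 ≤ C / ((m:ℝ) + n) - C / ((m:ℝ) + ((n + 1 : ℕ) : ℝ)) := by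
        push_cast
        have hp : (0:ℝ) < m + n := by positivity
        have e1 : C / ((m:ℝ) + n) - C / ((m:ℝ) + (n + 1)) = C / (((m:ℝ) + n) * (m + n + 1)) := by
          field_simp; ring
        rw [e1]
        refine div_le_div_of_nonneg_left hC (by positivity) ?_
        nlinarith
      linarith
  have hl : Tendsto (fun n => ∑ k ∈ Finset.range (m + n), e k - ∑ k ∈ Finset.range m, e k) atTop
      (nhds (F - ∑ k ∈ Finset.range m, e k)) := by
    have h := hF.tendsto_sum_nat.comp (tendsto_add_atTop_nat m)
    refine (h.congr fun n => ?_).sub_const _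
    simp [add_comm]
  refine le_of_tendsto hl (Eventually.of_forall fun n => (key n).trans ?_)
  have : 0 ≤ C / ((m:ℝ) + n) := by positivity
  linarith

lemma harm_le (M n : ℕ) (hM : 1 ≤ M) :
    ∑ k ∈ Finset.range n, (1:ℝ) / ((M:ℝ) + k) ≤ 1 / M + Real.log ((M:ℝ) + n) - Real.log M := by
  have hM' : (0:ℝ) < M := by exact_mod_cast hM
  have key : ∀ n : ℕ, ∑ k ∈ Finset.range (n + 1), (1:ℝ) / ((M:ℝ) + k) ≤
      1 / M + Real.log ((M:ℝ) + n) - Real.log M := by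
    intro n
    induction n with
    | zero => simp
    | succ n ih =>
      rw [Finset.sum_range_succ]
      have h1 : (1:ℝ) / ((M:ℝ) + ((n + 1 : ℕ) : ℝ)) ≤
          Real.log ((M:ℝ) + ((n + 1 : ℕ) : ℝ)) - Real.log ((M:ℝ) + n) := by
        push_cast
        have hp : (0:ℝ) < M + n := by positivity
        have h2 := Real.one_sub_inv_le_log_of_pos (x := ((M:ℝ) + (n + 1)) / (M + n)) (by positivity)
        rw [Real.log_div (by positivity) (by positivity)] at h2
        refine le_trans (le_of_eq ?_) h2
        field_simp
        ring
      linarith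
  cases n with
  | zero =>
    simp
  | succ n =>
    refine (key n).trans ?_
    have : Real.log ((M:ℝ) + n) ≤ Real.log ((M:ℝ) + ((n + 1 : ℕ) : ℝ)) := by
      apply Real.log_le_log (by positivity)
      push_cast; linarith
    linarith

theorem var_bounds (N : ℕ) (hN : 100 ≤ N) (a : ℝ) :
    let L := (Real.sqrt N)⁻¹
    let v := N * (L / (2 * π)) - ∑ r : Fin N, ∑ j : Fin N, ‖ck a L ((r:ℕ) - (j:ℕ) : ℤ)‖ ^ 2
    1 / (32 * π ^ 2) ≤ v ∧ v ≤ 2 + Real.log N / π ^ 2 := by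
  intro L v
  have hN' : (100:ℝ) ≤ N := by exact_mod_cast hN
  have hs : (10:ℝ) ≤ Real.sqrt N := Real.le_sqrt_of_sq_le (by linarith)
  have hs0 : 0 < Real.sqrt N := by linarith
  have hss : Real.sqrt N * Real.sqrt N = N := Real.mul_self_sqrt (by linarith)
  have hL : 0 < L := by positivity
  have hLs : L * Real.sqrt N = 1 := inv_mul_cancel₀ hs0.ne'
  have hpi := Real.pi_gt_three
  have hL2 : L < 2 * π := by
    have : L ≤ 1 := inv_le_one_of_one_le₀ (by linarith)
    linarith
  have he : ∀ k : ℤ, ‖ck a L (-k)‖ ^ 2 = ‖ck a L k‖ ^ 2 := fun k => by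
    rw [ck_conj, RCLike.norm_conj]
  obtain ⟨F, hF, hxF, hv⟩ := var_form (fun k => ‖ck a L k‖ ^ 2) he (parseval a L hL hL2) N
  set e : ℕ → ℝ := fun k => ‖ck a L ((k:ℤ) + 1)‖ ^ 2 with hedef
  have hv' : v = 2 * ∑ r ∈ Finset.range N, (F - ∑ k ∈ Finset.range r, e k) := hv
  have hee : ∀ k : ℕ, e k = Real.sin (((k:ℝ) + 1) * L / 2) ^ 2 / (π ^ 2 * ((k:ℝ) + 1) ^ 2) := by
    intro k
    have := ck_norm a L hL hL2 ((k:ℤ) + 1) (by omega)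
    simp only [hedef]
    rw [this]; push_cast; rfl
  have he0 : ∀ k, 0 ≤ e k := fun k => by positivity
  have hGF : ∀ m, ∑ k ∈ Finset.range m, e k ≤ F := fun m =>
    sum_le_hasSum _ (fun k _ => he0 k) hF
  have heb : ∀ k, e k ≤ (1 / π ^ 2) / ((k:ℝ) + 1) ^ 2 := by
    intro k
    rw [hee, div_div]
    gcongr
    exact Real.sin_sq_le_one _
  have hFx : F ≤ L / (4 * π) := by
    have h1 : (0:ℝ) ≤ ‖ck a L 0‖ ^ 2 := by positivity
    have h2 : L / (4 * π) = L / (2 * π) / 2 := by field_simp; ring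
    rw [h2]; linarith
  constructor
  · -- lower bound
    set q := ⌊Real.sqrt N⌋₊ with hq
    have hq1 : (q:ℝ) ≤ Real.sqrt N := Nat.floor_le hs0.le
    have hq2 : Real.sqrt N / 2 ≤ q := by
      have := Nat.lt_floor_add_one (Real.sqrt N)
      rw [← hq] at this
      linarith
    have hqN : q ≤ N := by
      have : (q:ℝ) ≤ N := hq1.trans (by nlinarith)
      exact_mod_cast this
    have h1 : ∀ k ∈ Finset.range q, L ^ 2 / (16 * π ^ 2) ≤ e (q + k) := by
      intro k hk
      have hk' : (k:ℝ) + 1 ≤ q := by exact_mod_cast Finset.mem_range.mp hk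
      rw [hee]
      push_cast
      set y := ((q:ℝ) + k + 1) with hy
      have hy0 : 0 < y := by positivity
      have hyL : y * L / 2 ≤ 1 := by
        have : y ≤ 2 * Real.sqrt N := by rw [hy]; linarith
        nlinarith
      have hz0 : 0 < y * L / 2 := by positivity
      have hsin : y * L / 4 ≤ Real.sin (y * L / 2) := by
        have := Real.sin_gt_sub_cube hz0
        nlinarith [pow_le_one₀ (n := 2) hz0.le hyL]
      have hsq : (y * L / 4) ^ 2 ≤ Real.sin (y * L / 2) ^ 2 := by
        gcongr
      rw [le_div_iff₀ (by positivity)]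
      refine le_trans (le_of_eq ?_) hsq
      field_simp
      ring
    have h2 : q * (L ^ 2 / (16 * π ^ 2)) ≤
        ∑ k ∈ Finset.range (q + q), e k - ∑ k ∈ Finset.range q, e k := by
      rw [Finset.sum_range_add, add_sub_cancel_left]
      have := Finset.sum_le_sum h1
      simpa using this
    have h3 : ∑ r ∈ Finset.range q, (q * (L ^ 2 / (16 * π ^ 2))) ≤
        ∑ r ∈ Finset.range N, (F - ∑ k ∈ Finset.range r, e k) := by
      refine le_trans (Finset.sum_le_sum fun r hr => ?_) (Finset.sum_le_sum_of_subset_of_nonneg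
        (Finset.range_subset_range.mpr hqN) fun r _ _ => sub_nonneg.mpr (hGF r))
      have h4 : ∑ k ∈ Finset.range r, e k ≤ ∑ k ∈ Finset.range q, e k :=
        Finset.sum_le_sum_of_subset_of_nonneg
          (Finset.range_subset_range.mpr (Finset.mem_range.mp hr).le) fun r _ _ => he0 r
      linarith [hGF (q + q)]
    rw [hv']
    rw [Finset.sum_const, Finset.card_range, nsmul_eq_mul] at h3
    have h5 : (1:ℝ) / 4 ≤ (q:ℝ) ^ 2 * L ^ 2 := by
      have : 1 / 2 ≤ q * L := by nlinarith
      nlinarith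
    have h6 : 1 / (32 * π ^ 2) ≤ 2 * ((q:ℝ) * (q * (L ^ 2 / (16 * π ^ 2)))) := by
      have : 2 * ((q:ℝ) * (q * (L ^ 2 / (16 * π ^ 2)))) = (q ^ 2 * L ^ 2) * (1 / (8 * π ^ 2)) := by
        field_simp; ring
      rw [this]
      have h7 : 1 / (32 * π ^ 2) = (1 / 4) * (1 / (8 * π ^ 2)) := by field_simp; ring
      rw [h7]
      gcongr
    linarith
  · -- upper bound
    set M := ⌈Real.sqrt N⌉₊ with hM
    have hM1 : Real.sqrt N ≤ M := Nat.le_ceil _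
    have hM2 : (M:ℝ) ≤ Real.sqrt N + 1 := (Nat.ceil_lt_add_one hs0.le).le
    have hMpos : (0:ℝ) < M := by linarith
    have hM1' : 1 ≤ M := by exact_mod_cast hMpos
    have hMN : M ≤ N := by
      have : (M:ℝ) ≤ N := hM2.trans (by nlinarith)
      exact_mod_cast this
    obtain ⟨n, hn⟩ := Nat.exists_eq_add_of_le hMN
    have h1 : ∑ r ∈ Finset.range M, (F - ∑ k ∈ Finset.range r, e k) ≤ 1 / 5 := by
      have : ∀ r ∈ Finset.range M, (F - ∑ k ∈ Finset.range r, e k) ≤ L / (4 * π) := fun r _ => by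
        have := Finset.sum_nonneg (s := Finset.range r) (fun k _ => he0 k)
        linarith
      have h2 := Finset.sum_le_sum this
      rw [Finset.sum_const, Finset.card_range, nsmul_eq_mul] at h2
      refine h2.trans ?_
      rw [mul_div_assoc', div_le_iff₀ (by positivity)]
      have : (M:ℝ) * L ≤ 1 + L := by nlinarith
      have : L ≤ 1 / 10 := by
        rw [show L = (Real.sqrt N)⁻¹ from rfl, inv_eq_one_div]; gcongr
      linarith
    have h2 : ∑ r ∈ Finset.range n, (F - ∑ k ∈ Finset.range (M + r), e k) ≤
        (1 / π ^ 2) * (1 + Real.log N / 2) := by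
      have h3 : ∀ r ∈ Finset.range n, (F - ∑ k ∈ Finset.range (M + r), e k) ≤
          (1 / π ^ 2) * (1 / ((M:ℝ) + r)) := fun r _ => by
        have := tail_le e (1 / π ^ 2) F hF (by positivity) heb (M + r) (by omega)
        push_cast at this
        rw [div_eq_mul_one_div] at this
        exact this
      refine (Finset.sum_le_sum h3).trans ?_
      rw [← Finset.mul_sum]
      gcongr
      refine (harm_le M n hM1').trans ?_
      have h4 : ((M:ℝ) + n) = N := by exact_mod_cast hn.symm
      rw [h4]
      have h5 : Real.log N / 2 ≤ Real.log M := by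
        rw [← Real.log_sqrt (by linarith)]
        exact Real.log_le_log hs0 hM1
      have h6 : (1:ℝ) / M ≤ 1 := by
        rw [div_le_one hMpos]; exact_mod_cast hM1'
      linarith
    have hsplit : ∑ r ∈ Finset.range N, (F - ∑ k ∈ Finset.range r, e k) =
        ∑ r ∈ Finset.range M, (F - ∑ k ∈ Finset.range r, e k) +
        ∑ r ∈ Finset.range n, (F - ∑ k ∈ Finset.range (M + r), e k) := by
      rw [show Finset.range N = Finset.range (M + n) by rw [← hn], Finset.sum_range_add]
    rw [hv', hsplit]
    have h7 : (1:ℝ) / π ^ 2 ≤ 1 / 9 := by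
      apply one_div_le_one_div_of_le (by norm_num); nlinarith
    have h8 : (1 / π ^ 2) * (1 + Real.log N / 2) = 1 / π ^ 2 + Real.log N / π ^ 2 / 2 := by
      field_simp
    linarith

end HaarArc

namespace HaarArc
open Polynomial

lemma prod_coeffs {N : ℕ} (l : Fin N → ℝ) (s : Finset (Fin N)) :
    (∏ i ∈ s, (1 + C (l i) * X : ℝ[X])).coeff 0 = 1 ∧
    (∏ i ∈ s, (1 + C (l i) * X : ℝ[X])).coeff 1 = ∑ i ∈ s, l i ∧
    2 * (∏ i ∈ s, (1 + C (l i) * X : ℝ[X])).coeff 2 = (∑ i ∈ s, l i) ^ 2 - ∑ i ∈ s, l i ^ 2 := by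
  induction s using Finset.induction_on with
  | empty => simp [Polynomial.coeff_one]
  | insert a s ha ih =>
    obtain ⟨h0, h1, h2⟩ := ih
    rw [Finset.prod_insert ha, Finset.sum_insert ha, Finset.sum_insert ha]
    set Q := ∏ i ∈ s, (1 + C (l i) * X : ℝ[X])
    have e : (1 + C (l a) * X : ℝ[X]) * Q = Q + C (l a) * (X * Q) := by ring
    rw [e]
    simp only [coeff_add, coeff_C_mul]
    refine ⟨by simp [h0], ?_, ?_⟩
    · rw [show (1:ℕ) = 0 + 1 from rfl, coeff_X_mul, h0, h1]; ring
    · have hX : ((X : ℝ[X]) * Q).coeff 2 = Q.coeff 1 := coeff_X_mul Q 1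
      rw [hX, h1, mul_add, h2]; ring

/-- Mean and variance of the count from its generating function. -/
lemma moments {N : ℕ} {Ω : Type*} [MeasurableSpace Ω] (P : Measure Ω) [IsProbabilityMeasure P]
    (c : Ω → ℕ) (hc : Measurable c) (hcN : ∀ U, c U ≤ N) (l : Fin N → ℝ)
    (hgen : ∀ s : ℝ, ∫ U, (1 + s) ^ (c U) ∂P = ∏ i, (1 + s * l i)) :
    ∫ U, (c U : ℝ) ∂P = ∑ i, l i ∧
    ProbabilityTheory.variance (fun U => (c U : ℝ)) P = ∑ i, l i - ∑ i, l i ^ 2 := by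
  have hintg : ∀ f : ℕ → ℝ, Integrable (fun U => f (c U)) P := fun f => by
    refine Integrable.of_bound (C := ∑ k ∈ Finset.range (N + 1), |f k|)
      ((measurable_from_nat.comp hc).aestronglyMeasurable) (Eventually.of_forall fun U => ?_)
    rw [Real.norm_eq_abs]
    exact Finset.single_le_sum (f := fun k => |f k|) (fun _ _ => abs_nonneg _)
      (Finset.mem_range.2 (Nat.lt_succ_of_le (hcN U)))
  set b : ℕ → ℝ := fun k => ∫ U, ((c U).choose k : ℝ) ∂P with hb
  have hpoly : (∑ k ∈ Finset.range (N + 1), C (b k) * X ^ k : ℝ[X]) =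
      ∏ i, (1 + C (l i) * X : ℝ[X]) := by
    apply Polynomial.funext
    intro s
    rw [eval_finsetSum, eval_prod]
    have h1 : ∀ U, (1 + s) ^ (c U) = ∑ k ∈ Finset.range (N + 1), s ^ k * ((c U).choose k : ℝ) := by
      intro U
      rw [add_comm, add_pow]
      simp only [one_pow, mul_one]
      apply Finset.sum_subset
      · intro k hk
        have := hcN U
        simp only [Finset.mem_range] at hk ⊢; omega
      · intro k _ hk
        have : (c U) < k := by simp only [Finset.mem_range] at hk; omega
        simp [Nat.choose_eq_zero_of_lt this]
    have h2 := hgen s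
    simp_rw [h1] at h2
    rw [integral_finsetSum] at h2
    · simp only [integral_const_mul] at h2
      simp only [eval_mul, eval_C, eval_pow, eval_X, eval_add, eval_one]
      rw [show ∏ i, (1 + l i * s) = ∏ i, (1 + s * l i) from
        Finset.prod_congr rfl fun i _ => by ring, ← h2]
      exact Finset.sum_congr rfl fun k _ => by rw [mul_comm]
    · intro k _
      exact (hintg (fun n => (n.choose k : ℝ))).const_mul _
  have hcoef : ∀ k, (∏ i, (1 + C (l i) * X : ℝ[X])).coeff k = b k := by
    intro k
    rw [← hpoly, finsetSum_coeff]
    simp only [coeff_C_mul, coeff_X_pow, mul_ite, mul_one, mul_zero]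
    rw [Finset.sum_ite_eq]
    split_ifs with h
    · rfl
    · have : ∀ U, (c U).choose k = 0 := fun U => Nat.choose_eq_zero_of_lt (by
        have := hcN U
        simp only [Finset.mem_range] at h; omega)
      simp [hb, this]
  obtain ⟨-, h1, h2⟩ := prod_coeffs l Finset.univ
  rw [hcoef] at h1 h2
  have hm : ∫ U, (c U : ℝ) ∂P = ∑ i, l i := by
    rw [← h1]; simp [hb]
  refine ⟨hm, ?_⟩
  have hmem : MemLp (fun U => (c U : ℝ)) 2 P := by
    refine MemLp.of_bound ((measurable_from_nat.comp hc).aestronglyMeasurable) (N:ℝ)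
      (Eventually.of_forall fun U => ?_)
    simp only [Real.norm_eq_abs, Nat.abs_cast]
    exact_mod_cast hcN U
  rw [ProbabilityTheory.variance_eq_sub hmem]
  have hsq : ∫ U, ((c U : ℝ)) ^ 2 ∂P = 2 * b 2 + ∑ i, l i := by
    rw [← hm, hb, ← integral_const_mul, ← integral_add]
    · congr 1; funext U
      rw [Nat.cast_choose_two]; ring
    · exact (hintg (fun n => (n.choose 2 : ℝ))).const_mul _
    · exact hintg (fun n => (n : ℝ))
  have : ∫ U, ((fun U => (c U : ℝ)) ^ 2) U ∂P = ∫ U, ((c U : ℝ)) ^ 2 ∂P := rfl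
  rw [this, hsq, hm, h2]; ring

end HaarArc

namespace HaarArc

lemma den_pos {p u : ℝ} (hp : 0 ≤ p) (hp1 : p ≤ 1) : 0 < 1 + (Real.exp u - 1) * p := by
  have := Real.exp_pos u
  rcases hp1.lt_or_eq with h | h
  · nlinarith
  · subst h; linarith

lemma den_deriv {p : ℝ} (hp : 0 ≤ p) (hp1 : p ≤ 1) (u : ℝ) :
    HasDerivAt (fun u => Real.log (1 + (Real.exp u - 1) * p))
      (Real.exp u * p / (1 + (Real.exp u - 1) * p)) u := by
  have h : HasDerivAt (fun u => 1 + (Real.exp u - 1) * p) (Real.exp u * p) u :=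
    (((Real.hasDerivAt_exp u).sub_const 1).mul_const p).const_add 1
  exact h.log (den_pos hp hp1).ne'

lemma nonneg_of_deriv (h h' : ℝ → ℝ) (h0 : h 0 = 0) (hd : ∀ u, HasDerivAt h (h' u) u)
    (hn : ∀ u, 0 ≤ u → 0 ≤ h' u) (u : ℝ) (hu : 0 ≤ u) : 0 ≤ h u := by
  have : MonotoneOn h (Set.Ici 0) := by
    apply monotoneOn_of_deriv_nonneg (convex_Ici 0)
    · exact fun x _ => (hd x).continuousAt.continuousWithinAt
    · exact fun x _ => (hd x).differentiableAt.differentiableWithinAt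
    · intro x hx
      rw [interior_Ici] at hx
      rw [(hd x).deriv]; exact hn x (le_of_lt hx)
  rw [← h0]; exact this Set.self_mem_Ici hu hu

lemma factor_upper {p u : ℝ} (hp : 0 ≤ p) (hp1 : p ≤ 1) (hu : 0 ≤ u) :
    1 + (Real.exp u - 1) * p ≤ Real.exp (u * p + (Real.exp u - 1 - u) * (p - p ^ 2)) := by
  rw [← Real.log_le_iff_le_exp (den_pos hp hp1), ← sub_nonneg]
  refine nonneg_of_deriv
    (fun u => u * p + (Real.exp u - 1 - u) * (p - p ^ 2) - Real.log (1 + (Real.exp u - 1) * p))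
    (fun u => 1 * p + (Real.exp u - 1) * (p - p ^ 2) - Real.exp u * p / (1 + (Real.exp u - 1) * p))
    (by simp) ?_ ?_ u hu
  · intro x
    exact (((hasDerivAt_id x).mul_const p).add
      ((((Real.hasDerivAt_exp x).sub_const 1).sub (hasDerivAt_id x)).mul_const _)).sub
      (den_deriv hp hp1 x)
  · intro x hx
    have hd := den_pos (u := x) hp hp1
    have he : 0 ≤ Real.exp x - 1 := by linarith [Real.one_le_exp hx]
    rw [sub_nonneg, div_le_iff₀ hd]
    have : 0 ≤ (Real.exp x - 1) * (p * (1 - p)) * ((Real.exp x - 1) * p) :=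
      mul_nonneg (mul_nonneg he (mul_nonneg hp (by linarith))) (mul_nonneg he hp)
    nlinarith

lemma factor_lower {p u : ℝ} (hp : 0 ≤ p) (hp1 : p ≤ 1) (hu : 0 ≤ u) :
    Real.exp (u * p + (Real.exp (-u) - 1 + u) * (p - p ^ 2)) ≤ 1 + (Real.exp u - 1) * p := by
  rw [← Real.le_log_iff_exp_le (den_pos hp hp1), ← sub_nonneg]
  refine nonneg_of_deriv
    (fun u => Real.log (1 + (Real.exp u - 1) * p) -
      (u * p + (Real.exp (-u) - 1 + u) * (p - p ^ 2)))
    (fun u => Real.exp u * p / (1 + (Real.exp u - 1) * p) -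
      (1 * p + (Real.exp (-u) * (-1) + 1) * (p - p ^ 2)))
    (by simp) ?_ ?_ u hu
  · intro x
    exact (den_deriv hp hp1 x).sub (((hasDerivAt_id x).mul_const p).add
      ((((hasDerivAt_neg x).exp.sub_const 1).add (hasDerivAt_id x)).mul_const _))
  · intro x hx
    have hd := den_pos (u := x) hp hp1
    have he : 1 ≤ Real.exp x := Real.one_le_exp hx
    have hi : Real.exp (-x) * Real.exp x = 1 := by rw [← Real.exp_add]; simp
    have hi1 : Real.exp (-x) ≤ 1 := Real.exp_le_one_iff.2 (by linarith)
    rw [sub_nonneg, le_div_iff₀ hd]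
    set y := Real.exp x
    set z := Real.exp (-x)
    have h1 : 0 ≤ (1 - z) * (p * (1 - p)) * ((y - 1) * (1 - p)) :=
      mul_nonneg (mul_nonneg (by linarith) (mul_nonneg hp (by linarith)))
        (mul_nonneg (by linarith) (by linarith))
    have h2 : y * p - (1 * p + (z * (-1) + 1) * (p - p ^ 2)) * (1 + (y - 1) * p) =
        (1 - z) * (p * (1 - p)) * ((y - 1) * (1 - p)) := by
      linear_combination (p * (1 - p)) * hi
    linarith

/-- Paley-Zygmund type lower tail bound. -/
lemma tail_lower {N : ℕ} {Ω : Type*} [MeasurableSpace Ω] (P : Measure Ω) [IsProbabilityMeasure P]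
    (c : Ω → ℕ) (hc : Measurable c) (hcN : ∀ U, c U ≤ N) (l : Fin N → ℝ)
    (hl0 : ∀ i, 0 ≤ l i) (hl1 : ∀ i, l i ≤ 1)
    (hgen : ∀ s : ℝ, ∫ U, (1 + s) ^ (c U) ∂P = ∏ i, (1 + s * l i))
    (v t θ : ℝ) (ht : 0 ≤ t) (hv : v = ∑ i, l i - ∑ i, l i ^ 2)
    (hθ : t * θ ≤ (Real.exp (-t) - 1 + t) * v) :
    (Real.exp ((Real.exp (-t) - 1 + t) * v) - Real.exp (t * θ)) ^ 2 *
      Real.exp (-((Real.exp (2 * t) - 1 - 2 * t) * v)) ≤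
      (P {U | θ < (c U : ℝ) - ∑ i, l i}).toReal := by
  set m := ∑ i, l i with hm
  have hintg : ∀ f : ℕ → ℝ, Integrable (fun U => f (c U)) P := fun f => by
    refine Integrable.of_bound (C := ∑ k ∈ Finset.range (N + 1), |f k|)
      ((measurable_from_nat.comp hc).aestronglyMeasurable) (Eventually.of_forall fun U => ?_)
    rw [Real.norm_eq_abs]
    exact Finset.single_le_sum (f := fun k => |f k|) (fun _ _ => abs_nonneg _)
      (Finset.mem_range.2 (Nat.lt_succ_of_le (hcN U)))
  have hmgf : ∀ u : ℝ, ∫ U, Real.exp (u * ((c U : ℝ) - m)) ∂P =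
      Real.exp (-(u * m)) * ∏ i, (1 + (Real.exp u - 1) * l i) := fun u => by
    rw [← hgen, ← integral_const_mul]
    congr 1; funext U
    rw [show 1 + (Real.exp u - 1) = Real.exp u by ring, ← Real.exp_nat_mul, ← Real.exp_add]
    congr 1; ring
  have hsum : ∀ u k : ℝ, ∑ i, (u * l i + k * (l i - l i ^ 2)) = u * m + k * v := fun u k => by
    rw [Finset.sum_add_distrib, ← Finset.mul_sum, ← Finset.mul_sum, Finset.sum_sub_distrib, hv]
  have hA : Real.exp ((Real.exp (-t) - 1 + t) * v) ≤ ∫ U, Real.exp (t * ((c U : ℝ) - m)) ∂P := by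
    rw [hmgf]
    have : ∏ i, Real.exp (t * l i + (Real.exp (-t) - 1 + t) * (l i - l i ^ 2)) ≤
        ∏ i, (1 + (Real.exp t - 1) * l i) :=
      Finset.prod_le_prod (fun i _ => (Real.exp_pos _).le)
        (fun i _ => factor_lower (hl0 i) (hl1 i) ht)
    rw [← Real.exp_sum, hsum] at this
    calc _ = Real.exp (-(t * m)) * Real.exp (t * m + (Real.exp (-t) - 1 + t) * v) := by
          rw [← Real.exp_add]; congr 1; ring
      _ ≤ _ := by gcongr
  have hB : ∫ U, Real.exp ((2 * t) * ((c U : ℝ) - m)) ∂P ≤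
      Real.exp ((Real.exp (2 * t) - 1 - 2 * t) * v) := by
    rw [hmgf]
    have : ∏ i, (1 + (Real.exp (2 * t) - 1) * l i) ≤
        ∏ i, Real.exp ((2 * t) * l i + (Real.exp (2 * t) - 1 - 2 * t) * (l i - l i ^ 2)) :=
      Finset.prod_le_prod (fun i _ => (den_pos (hl0 i) (hl1 i)).le)
        (fun i _ => factor_upper (hl0 i) (hl1 i) (by linarith))
    rw [← Real.exp_sum, hsum] at this
    calc _ ≤ Real.exp (-((2 * t) * m)) *
          Real.exp ((2 * t) * m + (Real.exp (2 * t) - 1 - 2 * t) * v) := by gcongr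
      _ = _ := by rw [← Real.exp_add]; congr 1; ring
  set A := Real.exp ((Real.exp (-t) - 1 + t) * v) with hAdef
  set B := Real.exp ((Real.exp (2 * t) - 1 - 2 * t) * v) with hBdef
  set T := Real.exp (t * θ) with hTdef
  have hAT : T ≤ A := Real.exp_le_exp.2 hθ
  have hBpos : 0 < B := Real.exp_pos _
  rw [Real.exp_neg, ← hBdef]
  set lam := (A - T) * B⁻¹ with hlam
  have hlam0 : 0 ≤ lam := mul_nonneg (by linarith) (by positivity)
  have hEm : MeasurableSet {U | θ < (c U : ℝ) - m} := by
    have h1 : Measurable (fun U => (c U : ℝ) - m) := (measurable_from_nat.comp hc).sub_const m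
    exact measurableSet_lt measurable_const h1
  have hpt : ∀ U, 2 * lam * (Real.exp (t * ((c U : ℝ) - m)) - T) -
      lam ^ 2 * Real.exp ((2 * t) * ((c U : ℝ) - m)) ≤
      Set.indicator {U | θ < (c U : ℝ) - m} (fun _ => (1:ℝ)) U := by
    intro U
    have h2 : Real.exp ((2 * t) * ((c U : ℝ) - m)) = Real.exp (t * ((c U : ℝ) - m)) ^ 2 := by
      rw [← Real.exp_nat_mul]; congr 1; push_cast; ring
    rw [h2]
    have hT0 : 0 < T := Real.exp_pos _
    by_cases h : U ∈ {U | θ < (c U : ℝ) - m}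
    · rw [Set.indicator_of_mem h]
      nlinarith [sq_nonneg (lam * Real.exp (t * ((c U : ℝ) - m)) - 1), mul_nonneg hlam0 hT0.le]
    · rw [Set.indicator_of_notMem h]
      have h3 : (c U : ℝ) - m ≤ θ := not_lt.1 h
      have h4 : Real.exp (t * ((c U : ℝ) - m)) ≤ T :=
        Real.exp_le_exp.2 (mul_le_mul_of_nonneg_left h3 ht)
      nlinarith [sq_nonneg (lam * Real.exp (t * ((c U : ℝ) - m)))]
  have i1 : Integrable (fun U => Real.exp (t * ((c U : ℝ) - m))) P :=
    hintg (fun n => Real.exp (t * ((n : ℝ) - m)))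
  have i2 : Integrable (fun U => Real.exp ((2 * t) * ((c U : ℝ) - m))) P :=
    hintg (fun n => Real.exp ((2 * t) * ((n : ℝ) - m)))
  have i3 : Integrable (fun U => 2 * lam * (Real.exp (t * ((c U : ℝ) - m)) - T)) P :=
    (i1.sub (integrable_const T)).const_mul (2 * lam)
  have hI := integral_mono (i3.sub
    (i2.const_mul (lam ^ 2))) ((integrable_const (1:ℝ)).indicator hEm) hpt
  rw [integral_indicator_const _ hEm] at hI
  simp only [Pi.sub_apply] at hI
  rw [integral_sub i3 (i2.const_mul (lam ^ 2)),
    integral_const_mul, integral_const_mul] at hI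
  rw [integral_sub i1 (integrable_const T)] at hI
  simp only [integral_const, probReal_univ, smul_eq_mul, mul_one, one_mul] at hI
  change _ ≤ P.real _
  refine le_trans ?_ hI
  have e1 : (A - T) ^ 2 * B⁻¹ = 2 * lam * (A - T) - lam ^ 2 * B := by
    rw [hlam]; field_simp; ring
  rw [e1]
  have := mul_le_mul_of_nonneg_left hA (by linarith : 0 ≤ 2 * lam)
  have := mul_le_mul_of_nonneg_left hB (sq_nonneg lam)
  nlinarith

end HaarArc

namespace HaarArc

lemma num_alpha : 0.99 * (1 / 120) ^ 2 / 2 ≤ Real.exp (-(1 / 120 : ℝ)) - 1 + 1 / 120 := by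
  have h := Real.exp_bound (x := -(1 / 120 : ℝ)) (by norm_num [abs_of_nonneg]) (n := 3) (by norm_num)
  have h2 := (abs_le.1 h).1
  norm_num [Finset.sum_range_succ, Nat.factorial, abs_of_nonneg] at h2
  norm_num
  linarith

lemma num_beta : Real.exp (2 * (1 / 120 : ℝ)) - 1 - 2 * (1 / 120) ≤ 2.02 * (1 / 120) ^ 2 := by
  have h := Real.exp_bound (x := (2 * (1 / 120) : ℝ)) (by norm_num [abs_of_nonneg]) (n := 3) (by norm_num)
  have h2 := (abs_le.1 h).2
  norm_num [Finset.sum_range_succ, Nat.factorial, abs_of_nonneg] at h2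
  norm_num
  linarith

/-- The explicit numerical bound. -/
lemma num_final (v x α β : ℝ) (hα : 0.99 * (1 / 120) ^ 2 / 2 ≤ α) (hβ : β ≤ 2.02 * (1 / 120) ^ 2)
    (hv : 1 / (32 * π ^ 2) ≤ v) (hv2 : v ≤ 2 + x / π ^ 2) (hx0 : 0 ≤ x)
    (hx : -(5 / 2 ^ 19) * (3 + x) ≤
      2 * Real.log (1 - Real.exp (-(1 / 1000000 * (1 / (32 * π ^ 2))))) -
        1.03 * (1 / 120) ^ 2 * (2 + x / 9)) :
    Real.exp (-(5 / 2 ^ 19) * (3 + x)) ≤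
      (Real.exp (α * v) - Real.exp (1 / 120 * (v / 256))) ^ 2 * Real.exp (-(β * v)) := by
  have hpi := Real.pi_gt_three
  have hpos : 0 < 1 / (32 * π ^ 2) := by positivity
  set q := 1 / (32 * π ^ 2) with hq
  have hv0 : 0 < v := hpos.trans_le hv
  have hxx : x / π ^ 2 ≤ x / 9 := by
    apply div_le_div_of_nonneg_left hx0 (by norm_num); nlinarith
  set c := 1 - Real.exp (-(1 / 1000000 * q)) with hc
  have hc0 : 0 < c := by
    rw [hc, sub_pos, Real.exp_lt_one_iff]; nlinarith
  have h1 : Real.exp (α * v) * c ≤ Real.exp (α * v) - Real.exp (1 / 120 * (v / 256)) := by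
    rw [hc, mul_sub, mul_one, ← Real.exp_add]
    apply sub_le_sub_left
    apply Real.exp_le_exp.2
    have : (1 / 120 / 256 + 1 / 1000000) * v ≤ α * v := by
      apply mul_le_mul_of_nonneg_right _ hv0.le
      refine le_trans ?_ hα; norm_num
    linarith
  have h2 : (Real.exp (α * v) * c) ^ 2 * Real.exp (-(β * v)) ≤
      (Real.exp (α * v) - Real.exp (1 / 120 * (v / 256))) ^ 2 * Real.exp (-(β * v)) := by
    gcongr
  refine le_trans ?_ h2
  rw [← Real.exp_log hc0, ← Real.exp_add, ← Real.exp_nat_mul, ← Real.exp_add]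
  apply Real.exp_le_exp.2
  refine hx.trans ?_
  push_cast
  have h3 : (β - 2 * α) * v ≤ 1.03 * (1 / 120) ^ 2 * v := by
    apply mul_le_mul_of_nonneg_right _ hv0.le
    linarith
  have h4 : (1.03 * (1 / 120) ^ 2 : ℝ) * v ≤ 1.03 * (1 / 120) ^ 2 * (2 + x / 9) := by
    apply mul_le_mul_of_nonneg_left _ (by norm_num)
    linarith
  linarith

end HaarArc

/-- For all sufficiently large `N`: for a Haar-distributed `N × N` unitary matrix and any arc
`I ⊆ [0, 2π)` of length `N^{-1/2}`,
`P[μ_N(I) − ν(I) > Var(𝒩_I)/(256N)] ≥ exp(−(5/2¹⁹) log(e³N))`. -/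
theorem lower_tail_bound_for_arcs :
    ∃ N₀ : ℕ, ∀ N : ℕ, N₀ ≤ N →
      ∀ ℙ : Measure (Matrix.unitaryGroup (Fin N) ℂ),
        IsProbabilityMeasure ℙ → ℙ.IsHaarMeasure →
        ∀ a : ℝ, 0 ≤ a → a + (Real.sqrt N)⁻¹ ≤ 2 * π →
          Real.exp (-(5 / 2 ^ 19) * Real.log (Real.exp 1 ^ 3 * N)) ≤
            (ℙ {U | ProbabilityTheory.variance
                  (fun V => (countAngles N V (Set.Ico a (a + (Real.sqrt N)⁻¹)) : ℝ)) ℙ /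
                    (256 * N) <
                (countAngles N U (Set.Ico a (a + (Real.sqrt N)⁻¹)) : ℝ) / N -
                  (Real.sqrt N)⁻¹ / (2 * π)}).toReal := by
  set C := Real.log (1 - Real.exp (-(1 / 1000000 * (1 / (32 * π ^ 2))))) with hC
  obtain ⟨N₁, hN₁⟩ := (Filter.tendsto_atTop.1
    (Real.tendsto_log_atTop.comp tendsto_natCast_atTop_atTop)
      ((1.03 * (1 / 120) ^ 2 * 2 - 2 * C) / (5 / 2 ^ 19 - 1.03 * (1 / 120) ^ 2 / 9))).exists_forall_of_atTop
  refine ⟨max 100 N₁, fun N hN ℙ hP hH a ha haL => ?_⟩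
  have hN100 : 100 ≤ N := (le_max_left _ _).trans hN
  have hlog := hN₁ N ((le_max_right _ _).trans hN)
  simp only [Function.comp_apply] at hlog
  rw [div_le_iff₀ (by norm_num)] at hlog
  have hNpos : (0:ℝ) < N := by
    have : (0:ℕ) < N := by omega
    exact_mod_cast this
  have hN1 : (1:ℝ) ≤ N := by
    have : (1:ℕ) ≤ N := by omega
    exact_mod_cast this
  have hs1 : 1 ≤ Real.sqrt N := Real.one_le_sqrt.2 hN1
  set L := (Real.sqrt N)⁻¹ with hL
  have hL0 : 0 < L := by positivity
  have hL1 : L ≤ 1 := inv_le_one_of_one_le₀ hs1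
  have hL2 : L < 2 * π := by linarith [Real.pi_gt_three]
  obtain ⟨l, hl0, hl1, hgen, hsum, hsq⟩ :=
    HaarArc.eig_main (by omega : 1 ≤ N) ℙ a L ha haL hL0 hL2
  have hmeas := HaarArc.count_meas (by omega : 1 ≤ N) ℙ a L ha haL hL0 hL2
  have hle : ∀ U, countAngles N U (Set.Ico a (a + L)) ≤ N := fun U => HaarArc.count_le U _
  obtain ⟨-, hvar⟩ := HaarArc.moments ℙ _ hmeas hle l hgen
  obtain ⟨hv1, hv2⟩ := HaarArc.var_bounds N hN100 a
  rw [hvar]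
  rw [← hL, ← hsum, ← hsq] at hv1 hv2
  set v := ∑ i, l i - ∑ i, l i ^ 2 with hv
  have hv0 : 0 ≤ v := le_trans (by positivity) hv1
  have key := HaarArc.tail_lower ℙ _ hmeas hle l hl0 hl1 hgen v (1 / 120) (v / 256)
    (by norm_num) hv (by
      have : (1 / 120 / 256) * v ≤ (Real.exp (-(1 / 120)) - 1 + 1 / 120) * v := by
        apply mul_le_mul_of_nonneg_right _ hv0
        refine le_trans ?_ HaarArc.num_alpha
        norm_num
      linarith)
  have hlogN : Real.log (Real.exp 1 ^ 3 * N) = 3 + Real.log N := by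
    rw [Real.log_mul (by positivity) hNpos.ne', Real.log_pow, Real.log_exp]; norm_num
  rw [hlogN]
  have hset : {U | v / (256 * N) < (countAngles N U (Set.Ico a (a + L)) : ℝ) / N - L / (2 * π)} =
      {U | v / 256 < (countAngles N U (Set.Ico a (a + L)) : ℝ) - ∑ i, l i} := by
    ext U
    simp only [Set.mem_ofPred_eq]
    rw [hsum, ← div_div, div_lt_iff₀ hNpos]
    have : ((countAngles N U (Set.Ico a (a + L)) : ℝ) / N - L / (2 * π)) * N =
        (countAngles N U (Set.Ico a (a + L)) : ℝ) - N * (L / (2 * π)) := by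
      field_simp
    rw [this]
  rw [hset]
  refine le_trans ?_ key
  refine HaarArc.num_final v (Real.log N) _ _ HaarArc.num_alpha HaarArc.num_beta hv1 hv2
    (Real.log_nonneg hN1) ?_
  rw [← hC]
  linarith
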